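/- arXiv:1301.1113 — 3 statements merged into one kernel-verified Lean document; each statement's English description precedes it below -/
import Mathlib

section
/- Let R be a Noetherian local ring and let r_1, ..., r_n be elements of R with n ≥ 1. If r_1, ..., r_n generate a prime ideal of height n, then R is a domain, and for any 1 ≤ i ≤ n, the ideal generated by r_1, ..., r_i is prime of height i. -/
/-!
Take a chain of primes of length `n` ending at `Q = (r₁, …, rₙ)`. A chain whose top contains `x` can
be altered so that its second term contains `x`; dropping the bottom then costs one step. Doing
this for the `rⱼ` with `j ∈ t` leaves a chain of length `n - #t` whose bottom `p` contains
`I = (rⱼ : j ∈ t)` and has height at least `#t`.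

In fact `p = I`. Using up one more generator `x` in the same way gives a chain whose bottom is
`I + (x)`, by induction on the number of generators left. So `p < I + (x)` and `x ∉ p`, whence
`p = I + x p`, and Nakayama's lemma gives `p = I`. For `t = ∅` this says that `0` is prime.
-/

section

variable {R : Type*} [CommRing R]

theorem eq_of_le_sup_span_singleton {I p : Ideal R} {x : R} (hp : p.IsPrime) (hfg : p.FG)
    (hIp : I ≤ p) (hpx : p ≤ I ⊔ Ideal.span {x}) (hxp : x ∉ p) (hx : x ∈ Ring.jacobson R) :
    I = p := by
  have p_le : p ≤ I ⊔ Ideal.span {x} • p := by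
    intro y hy
    obtain ⟨a, ha, b, hb, rfl⟩ := Submodule.mem_sup.1 (hpx hy)
    obtain ⟨c, rfl⟩ := Ideal.mem_span_singleton.1 hb
    have hxc : x * c ∈ p := (Ideal.add_mem_iff_right p (hIp ha)).1 hy
    have hc : c ∈ p := (hp.mem_or_mem hxc).resolve_left hxp
    exact Submodule.add_mem_sup ha
      (Submodule.smul_mem_smul (Ideal.mem_span_singleton_self x) hc)
  refine hIp.antisymm (Submodule.le_of_le_smul_of_le_jacobson_bot hfg ?_ p_le)
  rwa [Ideal.jacobson_bot, Ideal.span_singleton_le_iff_mem]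

variable [IsNoetherianRing R]

theorem exists_ltSeries_mem_head_of_mem_last (s : LTSeries (PrimeSpectrum R)) {x : R}
    (hx : x ∈ s.last.asIdeal) (hs : s.length ≠ 0) :
    ∃ s' : LTSeries (PrimeSpectrum R), x ∈ s'.head.asIdeal ∧ s.head < s'.head ∧
      s'.last = s.last ∧ s'.length + 1 = s.length := by
  obtain ⟨q, hxq, hlen, hhead, hlast⟩ := PrimeSpectrum.exist_ltSeries_mem_one_of_mem_last s hx
  have hq : q.length ≠ 0 := hlen ▸ hs
  have : NeZero q.length := ⟨hq⟩
  refine ⟨q.tail hq, ?_, ?_, ?_, ?_⟩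
  · rwa [RelSeries.head_tail]
  · rw [RelSeries.head_tail, hhead]
    exact q.strictMono Fin.one_pos'
  · rw [RelSeries.last_tail, hlast]
  · rw [RelSeries.tail_length]
    lia

variable {ι : Type*} (r : ι → R)

theorem exists_ltSeries_span_image_le_head (s : LTSeries (PrimeSpectrum R)) (t : Finset ι)
    (hr : ∀ j ∈ t, r j ∈ s.last.asIdeal) (ht : t.card ≤ s.length) :
    ∃ s' : LTSeries (PrimeSpectrum R), Ideal.span (r '' t) ≤ s'.head.asIdeal ∧
      t.card ≤ s'.head.asIdeal.height ∧ s'.last = s.last ∧ s'.length + t.card = s.length := by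
  classical
  induction t using Finset.induction_on with
  | empty => exact ⟨s, by simp⟩
  | insert a t hat ih =>
    rw [Finset.card_insert_of_notMem hat] at ht ⊢
    obtain ⟨s₁, hspan, hheight, hlast, hlen⟩ :=
      ih (fun j hj ↦ hr j (Finset.mem_insert_of_mem hj)) (by lia)
    obtain ⟨s₂, hmem, hlt, hlast', hlen'⟩ := exists_ltSeries_mem_head_of_mem_last s₁
      (hlast ▸ hr a (Finset.mem_insert_self a t)) (by lia)
    refine ⟨s₂, ?_, ?_, hlast'.trans hlast, by lia⟩
    · rw [Finset.coe_insert, Set.image_insert_eq, Ideal.span_insert, sup_le_iff,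
        Ideal.span_singleton_le_iff_mem]
      exact ⟨hmem, hspan.trans hlt.le⟩
    · push_cast
      calc (t.card : ℕ∞) + 1 ≤ s₁.head.asIdeal.height + 1 := by gcongr
        _ ≤ s₂.head.asIdeal.height := Ideal.height_add_one_le_of_lt_of_isPrime hlt

theorem eq_asIdeal_head_of_card_le_length {I : Ideal R} (s : LTSeries (PrimeSpectrum R))
    (u : Finset ι) (hr : ∀ j ∈ u, r j ∈ Ring.jacobson R) (hI : I ≤ s.head.asIdeal)
    (hlast : s.last.asIdeal = I ⊔ Ideal.span (r '' u)) (hu : u.card ≤ s.length) :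
    I = s.head.asIdeal := by
  classical
  induction u using Finset.induction_on generalizing I s with
  | empty =>
    refine hI.antisymm ?_
    calc s.head.asIdeal ≤ s.last.asIdeal := s.head_le_last
      _ = I := by simpa using hlast
  | insert a u hau ih =>
    rw [Finset.card_insert_of_notMem hau] at hu
    rw [Finset.coe_insert, Set.image_insert_eq, Ideal.span_insert, ← sup_assoc] at hlast
    have ha : r a ∈ s.last.asIdeal :=
      hlast ▸ Ideal.mem_sup_left (Ideal.mem_sup_right (Ideal.mem_span_singleton_self _))
    obtain ⟨s', hmem, hlt, hlast', hlen⟩ :=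
      exists_ltSeries_mem_head_of_mem_last s ha (by lia)
    have hle : I ⊔ Ideal.span {r a} ≤ s'.head.asIdeal :=
      sup_le (hI.trans hlt.le) ((Ideal.span_singleton_le_iff_mem _).2 hmem)
    have heq : I ⊔ Ideal.span {r a} = s'.head.asIdeal :=
      ih s' (fun j hj ↦ hr j (Finset.mem_insert_of_mem hj)) hle (hlast' ▸ hlast) (by lia)
    have hlt' : s.head.asIdeal < I ⊔ Ideal.span {r a} := heq ▸ hlt
    have hra : r a ∉ s.head.asIdeal := fun h ↦
      hlt'.not_ge (sup_le hI ((Ideal.span_singleton_le_iff_mem _).2 h))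
    exact eq_of_le_sup_span_singleton s.head.isPrime (IsNoetherian.noetherian _) hI hlt'.le hra
      (hr a (Finset.mem_insert_self a u))

theorem height_span_image_le_card (t : Finset ι) (ht : Ideal.span (r '' t) ≠ ⊤) :
    (Ideal.span (r '' t)).height ≤ t.card := by
  calc (Ideal.span (r '' t)).height
    _ ≤ (Ideal.span (r '' t)).spanFinrank := Ideal.height_le_spanFinrank _ ht
    _ ≤ (r '' t).encard := Submodule.spanFinrank_span_le_encard _
    _ ≤ (t : Set ι).encard := Set.encard_image_le r t
    _ = t.card := Set.encard_coe_eq_coe_finsetCard t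

theorem isPrime_span_image_and_height_eq_card [Fintype ι] (hr : ∀ j, r j ∈ Ring.jacobson R)
    (hP : (Ideal.span (Set.range r)).IsPrime)
    (hht : (Ideal.span (Set.range r)).height = Fintype.card ι) (t : Finset ι) :
    (Ideal.span (r '' t)).IsPrime ∧ (Ideal.span (r '' t)).height = t.card := by
  classical
  obtain ⟨s, hlast, hlen⟩ := Order.exists_series_of_height_eq_coe
    (⟨Ideal.span (Set.range r), hP⟩ : PrimeSpectrum R)
    ((PrimeSpectrum.height_eq_orderHeight _).symm.trans hht)
  obtain ⟨s', hspan, hheight, hlast', hlen'⟩ := exists_ltSeries_span_image_le_head r s t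
    (fun j _ ↦ hlast ▸ Ideal.subset_span (Set.mem_range_self j)) (hlen ▸ t.card_le_univ)
  have last_eq : s'.last.asIdeal = Ideal.span (r '' t) ⊔ Ideal.span (r '' ↑tᶜ) := by
    rw [hlast', hlast, ← Ideal.span_union, ← Set.image_union, Finset.coe_compl,
      Set.union_compl_self, Set.image_univ]
  have head_eq : Ideal.span (r '' t) = s'.head.asIdeal :=
    eq_asIdeal_head_of_card_le_length r s' tᶜ (fun j _ ↦ hr j) hspan last_eq
      (by rw [Finset.card_compl]; lia)
  have hprime : (Ideal.span (r '' t)).IsPrime := head_eq ▸ s'.head.isPrime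
  exact ⟨hprime, (height_span_image_le_card r t hprime.ne_top).antisymm (head_eq ▸ hheight)⟩

theorem statement0_general [Fintype ι] (hr : ∀ j, r j ∈ Ring.jacobson R)
    (hP : (Ideal.span (Set.range r)).IsPrime)
    (hht : (Ideal.span (Set.range r)).height = Fintype.card ι) :
    IsDomain R ∧ ∀ t : Finset ι,
      (Ideal.span (r '' t)).IsPrime ∧ (Ideal.span (r '' t)).height = t.card := by
  have hspan := isPrime_span_image_and_height_eq_card r hr hP hht
  have hbot : (⊥ : Ideal R).IsPrime := by simpa using (hspan ∅).1
  exact ⟨IsDomain.of_bot_isPrime R, hspan⟩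

end

/-- Let `R` be a Noetherian local ring and `r_1, ..., r_n ∈ R` with `n ≥ 1`. If `r_1, ..., r_n`
generate a prime ideal of height `n`, then `R` is a domain, and for any `1 ≤ i ≤ n` the ideal
generated by `r_1, ..., r_i` is prime of height `i`. -/
theorem statement0 {R : Type*} [CommRing R] [IsNoetherianRing R] [IsLocalRing R]
    (n : ℕ) (hn : 1 ≤ n) (r : Fin n → R)
    (hP : (Ideal.span (Set.range r)).IsPrime)
    (hht : Order.height (⟨Ideal.span (Set.range r), hP⟩ : PrimeSpectrum R) = (n : ℕ∞)) :
    IsDomain R ∧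
      ∀ i : ℕ, 1 ≤ i → i ≤ n →
        ∃ hPi : (Ideal.span (r '' {j : Fin n | (j : ℕ) < i})).IsPrime,
          Order.height
              (⟨Ideal.span (r '' {j : Fin n | (j : ℕ) < i}), hPi⟩ : PrimeSpectrum R)
            = (i : ℕ∞) := by
  have hr (j : Fin n) : r j ∈ Ring.jacobson R := by
    rw [IsLocalRing.ringJacobson_eq_maximalIdeal]
    exact IsLocalRing.le_maximalIdeal hP.ne_top (Ideal.subset_span (Set.mem_range_self j))
  rw [← PrimeSpectrum.height_eq_orderHeight] at hht
  obtain ⟨hdomain, hspan⟩ := statement0_general r hr hP (by rwa [Fintype.card_fin])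
  refine ⟨hdomain, fun i _ hi ↦ ?_⟩
  obtain ⟨hprime, hheight⟩ := hspan {j | (j : ℕ) < i}
  rw [Fin.card_filter_val_lt, min_eq_right hi] at hheight
  rw [Finset.coe_filter_univ] at hprime hheight
  exact ⟨hprime, (PrimeSpectrum.height_eq_orderHeight _).symm.trans hheight⟩
end

section
/- Let A be a complete Noetherian local domain and let f_1, ..., f_r be elements of the maximal ideal of A. If r ≤ dim A − 1, then Spec(A/(f_1,...,f_r)) is (dim A − r − 1)-connected, i.e. every irreducible component has dimension > dim A − r − 1, and removing any closed subset of dimension < dim A − r − 1 leaves the space connected. -/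
/-!
The theorem is proved by induction on `r`, in an ideal-theoretic form of connectedness in
dimension `e`: if `V(F) ⊆ V(I) ∪ V(J)` and `dim (V(I) ∩ V(J)) < e`, then `V(I)` or `V(J)` contains
`V(F)`. The inductive step passes to the quotients `A/P` by the minimal primes `P` of `f_1` and
glues along the components `V(P)` of the connected set `V(f_1)`.

For a single equation `f ≠ 0` in a domain of dimension `d`, let `D = A_f/A`, so that
`H^{d-1}_𝔪(D) ≅ H^d_𝔪(A) ≠ 0`. If `V(f) = V(I) ∪ V(J)` with `dim (V(I) ∩ V(J)) < d - 2`, then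
`H^{d-1}_𝔪(D)` is the direct sum of `H^{d-1}_𝔪(Γ_I D)` and `H^{d-1}_𝔪(Γ_J D)`. Let `K` be a nonzero
summand, say the second one. A power of `J` kills the kernel of `f` on `K`. Every nonzero element
of `A` acts surjectively on top local cohomology, hence on `K`; so `K` is faithful, and a power of
`J` annihilates `End(K)/f End(K)`. Completeness makes `End(K)` a finite faithful `A`-module, hence
the support of `End(K)/f End(K)` is all of `V(f)` and `J ⊆ √(f)`.
-/

namespace GrothendieckConnectedness

open TensorProduct IsLocalRing Pointwise

/-! ### Power torsion -/

section PowerTorsion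

variable {A : Type*} [CommRing A] {I J : Ideal A}
variable {M : Type*} [AddCommGroup M] [Module A M] {N : Type*} [AddCommGroup N] [Module A N]

variable (I M) in
/-- The submodule `Γ_I(M)` of elements killed by some power of `I`. -/
def powerTorsion : Submodule A M where
  carrier := {m | ∃ n : ℕ, ∀ r ∈ I ^ n, r • m = 0}
  zero_mem' := ⟨0, fun r _ => smul_zero r⟩
  add_mem' := by
    rintro a b ⟨n, hn⟩ ⟨k, hk⟩
    refine ⟨n + k, fun r hr => ?_⟩
    rw [smul_add, hn r (Ideal.pow_le_pow_right (by lia) hr),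
      hk r (Ideal.pow_le_pow_right (by lia) hr), add_zero]
  smul_mem' := by
    rintro c m ⟨n, hn⟩
    exact ⟨n, fun r hr => by rw [smul_comm, hn r hr, smul_zero]⟩

variable (I M) in
/-- `M` is `I`-power torsion: every element of `M` is killed by some power of `I`. -/
def IsPowerTorsion : Prop := ∀ m : M, m ∈ powerTorsion I M

theorem map_mem_powerTorsion (f : M →ₗ[A] N) {m : M} (hm : m ∈ powerTorsion I M) :
    f m ∈ powerTorsion I N := by
  obtain ⟨n, hn⟩ := hm
  exact ⟨n, fun r hr => by rw [← map_smul, hn r hr, map_zero]⟩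

theorem mem_powerTorsion_of_map_mem {f : M →ₗ[A] N} (hf : Function.Injective f) {m : M}
    (hm : f m ∈ powerTorsion I N) : m ∈ powerTorsion I M := by
  obtain ⟨n, hn⟩ := hm
  exact ⟨n, fun r hr => hf (by rw [map_smul, hn r hr, map_zero])⟩

theorem IsPowerTorsion.of_injective {f : M →ₗ[A] N} (hf : Function.Injective f)
    (h : IsPowerTorsion I N) : IsPowerTorsion I M :=
  fun m => mem_powerTorsion_of_map_mem hf (h (f m))

theorem IsPowerTorsion.of_surjective {f : M →ₗ[A] N} (hf : Function.Surjective f)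
    (h : IsPowerTorsion I M) : IsPowerTorsion I N := fun n => by
  obtain ⟨m, rfl⟩ := hf n
  exact map_mem_powerTorsion f (h m)

variable (I M) in
theorem isPowerTorsion_powerTorsion : IsPowerTorsion I (powerTorsion I M) :=
  fun m => mem_powerTorsion_of_map_mem (Submodule.injective_subtype _) m.2

theorem IsPowerTorsion.exists_pow_smul_eq_zero (h : IsPowerTorsion I M) {x : A} (hx : x ∈ I)
    (m : M) : ∃ n : ℕ, x ^ n • m = 0 := by
  obtain ⟨n, hn⟩ := h m
  exact ⟨n, hn _ (Ideal.pow_mem_pow hx n)⟩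

theorem IsPowerTorsion.exists_pow_le_annihilator [Module.Finite A M] (h : IsPowerTorsion I M) :
    ∃ n : ℕ, I ^ n ≤ Module.annihilator A M := by
  obtain ⟨s, hs⟩ := Module.Finite.fg_top (R := A) (M := M)
  choose n hn using h
  refine ⟨s.sup n, ?_⟩
  rw [← Submodule.annihilator_top, ← hs]
  intro r hr
  rw [Submodule.mem_annihilator_span]
  exact fun x => hn x r (Ideal.pow_le_pow_right (Finset.le_sup x.2) hr)

theorem mem_powerTorsion_of_pow_smul_mem (hI : I.FG) {m : M} (k : ℕ)
    (h : ∀ r ∈ I ^ k, r • m ∈ powerTorsion I M) : m ∈ powerTorsion I M := by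
  let φ : (I ^ k : Ideal A) →ₗ[A] M := LinearMap.toSpanSingleton A M m ∘ₗ Submodule.subtype _
  have : Module.Finite A (LinearMap.range φ) :=
    have : Module.Finite A (I ^ k : Ideal A) := Module.Finite.iff_fg.2 (hI.pow)
    inferInstance
  have hφ : IsPowerTorsion I (LinearMap.range φ) := by
    rintro ⟨_, r, rfl⟩
    exact mem_powerTorsion_of_map_mem (f := Submodule.subtype _) (Submodule.injective_subtype _)
      (h r r.2)
  obtain ⟨n, hn⟩ := hφ.exists_pow_le_annihilator
  refine ⟨n + k, fun r hr => ?_⟩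
  rw [pow_add] at hr
  induction hr using Submodule.mul_induction_on' with
  | mem_mul_mem a ha b hb =>
    rw [mul_smul]
    exact congrArg Subtype.val (Module.mem_annihilator.1 (hn ha) ⟨b • m, ⟨b, hb⟩, rfl⟩)
  | add x _ y _ hx hy => rw [add_smul, hx, hy, add_zero]

variable (M) in
theorem powerTorsion_quotient_powerTorsion (hI : I.FG) :
    powerTorsion I (M ⧸ powerTorsion I M) = ⊥ := by
  rw [eq_bot_iff]
  intro z hz
  obtain ⟨m, rfl⟩ := Submodule.mkQ_surjective _ z
  obtain ⟨n, hn⟩ := hz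
  have hm : m ∈ powerTorsion I M := mem_powerTorsion_of_pow_smul_mem hI n fun r hr => by
    simpa [← Submodule.Quotient.mk_smul] using hn r hr
  simpa using hm

theorem IsPowerTorsion.sup (hI : IsPowerTorsion I M) (hJ : IsPowerTorsion J M) :
    IsPowerTorsion (I ⊔ J) M := fun m => by
  obtain ⟨n, hn⟩ := hI m
  obtain ⟨k, hk⟩ := hJ m
  refine ⟨n + k, fun r hr => ?_⟩
  obtain ⟨a, ha, b, hb, rfl⟩ := Submodule.mem_sup.1 (Ideal.sup_pow_add_le_pow_sup_pow hr)
  rw [add_smul, hn a ha, hk b hb, add_zero]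

theorem IsPowerTorsion.support_subset_zeroLocus (h : IsPowerTorsion I M) :
    Module.support A M ⊆ PrimeSpectrum.zeroLocus I := by
  intro p hp
  obtain ⟨m, hm⟩ := Module.mem_support_iff_exists_annihilator.1 hp
  obtain ⟨n, hn⟩ := h m
  have hp : I ^ n ≤ p.asIdeal := fun r hr =>
    hm ((Submodule.mem_annihilator_span_singleton _ _).2 (hn r hr))
  exact p.2.le_of_pow_le hp

theorem IsPowerTorsion.supportDim_le (h : IsPowerTorsion I M) :
    Module.supportDim A M ≤ ringKrullDim (A ⧸ I) := by
  rw [ringKrullDim_quotient]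
  exact Order.krullDim_le_of_strictMono (Set.inclusion h.support_subset_zeroLocus)
    fun {_ _} hlt => hlt

variable (I) in
/-- The functor `Γ_I` on morphisms. -/
def powerTorsionMap (f : M →ₗ[A] N) : powerTorsion I M →ₗ[A] powerTorsion I N :=
  f.restrict fun _ => map_mem_powerTorsion f

variable (I) in
/-- The functor `Γ_I` on isomorphisms. -/
def powerTorsionCongr (e : M ≃ₗ[A] N) : powerTorsion I M ≃ₗ[A] powerTorsion I N :=
  LinearEquiv.ofLinearMap (powerTorsionMap I e) (powerTorsionMap I e.symm)
    (LinearMap.ext fun z => Subtype.ext (e.apply_symm_apply z.1))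
    (LinearMap.ext fun z => Subtype.ext (e.symm_apply_apply z.1))

end PowerTorsion

/-! ### The cokernel of `A → ∏ A_x` -/

section Away

variable {A : Type*} [CommRing A] {I : Ideal A}
variable {M : Type*} [AddCommGroup M] [Module A M] {N : Type*} [AddCommGroup N] [Module A N]

theorem tmul_away_eq_zero {x : A} {n : ℕ} {m : M} (h : x ^ n • m = 0) (y : Localization.Away x) :
    m ⊗ₜ[A] y = 0 := by
  have hy : y = x ^ n • (IsLocalization.Away.invSelf x ^ n * y) := by
    rw [Algebra.smul_def, ← mul_assoc, map_pow, ← mul_pow, IsLocalization.Away.mul_invSelf,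
      one_pow, one_mul]
  rw [hy, tmul_smul, smul_tmul', h, zero_tmul]

theorem exists_pow_smul_eq_zero_of_tmul_one {x : A} {m : M}
    (h : m ⊗ₜ[A] (1 : Localization.Away x) = 0) : ∃ n : ℕ, x ^ n • m = 0 := by
  have h' : TensorProduct.mk A (Localization.Away x) M 1 m = 0 := by
    simpa using congrArg (TensorProduct.comm A _ _) h
  obtain ⟨⟨_, n, rfl⟩, hn⟩ := (IsLocalizedModule.eq_zero_iff (Submonoid.powers x) _).1 h'
  exact ⟨n, hn⟩

variable (I) in
/-- The product of the localizations `A_x`, for `x` in a finite set of generators of `I`: the first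
term of the augmented Čech complex of the open subset `Spec A \ V(I)`. -/
abbrev AwayPi : Type _ := (x : I.generators) → Localization.Away x.1

variable (I) in
/-- The cokernel of `A → ∏ A_x`. Tensoring with it shifts the degree of local cohomology by one. -/
abbrev AwayCokernel : Type _ := AwayPi I ⧸ LinearMap.range (Algebra.linearMap A (AwayPi I))

variable (I M) in
/-- The map `M → ∏ M_x`, with kernel `Γ_I(M)` and cokernel `M ⊗ AwayCokernel I`. -/
abbrev toTensorAwayPi : M →ₗ[A] M ⊗[A] AwayPi I := (TensorProduct.mk A M (AwayPi I)).flip 1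

variable (I M) in
/-- The projection of `∏ M_x` onto the cokernel of `M → ∏ M_x`. -/
abbrev toTensorAwayCokernel : M ⊗[A] AwayPi I →ₗ[A] M ⊗[A] AwayCokernel I :=
  (LinearMap.range (Algebra.linearMap A (AwayPi I))).mkQ.lTensor M

variable (I M) in
theorem toTensorAwayCokernel_surjective : Function.Surjective (toTensorAwayCokernel I M) :=
  LinearMap.lTensor_surjective _ (Submodule.mkQ_surjective _)

variable (I M) in
theorem exact_toTensorAwayPi_toTensorAwayCokernel :
    Function.Exact (toTensorAwayPi I M) (toTensorAwayCokernel I M) := by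
  have h : Function.Exact ((Algebra.linearMap A (AwayPi I)).lTensor M)
      (toTensorAwayCokernel I M) :=
    lTensor_exact M (LinearMap.exact_iff.2 (Submodule.ker_mkQ _)) (Submodule.mkQ_surjective _)
  have hcomp : toTensorAwayPi I M =
      (Algebra.linearMap A (AwayPi I)).lTensor M ∘ₗ (TensorProduct.rid A M).symm :=
    LinearMap.ext fun m => by simp
  rw [hcomp]
  exact (Function.Surjective.comp_exact_iff_exact (TensorProduct.rid A M).symm.surjective).2 h

theorem rTensor_comp_toTensorAwayPi (a : M →ₗ[A] N) :
    a.rTensor _ ∘ₗ toTensorAwayPi I M = toTensorAwayPi I N ∘ₗ a :=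
  LinearMap.ext fun m => by simp

theorem rTensor_comp_toTensorAwayCokernel (a : M →ₗ[A] N) :
    a.rTensor _ ∘ₗ toTensorAwayCokernel I M = toTensorAwayCokernel I N ∘ₗ a.rTensor _ := by
  rw [LinearMap.rTensor_comp_lTensor, LinearMap.lTensor_comp_rTensor]

variable [IsNoetherianRing A]

noncomputable instance : Fintype I.generators :=
  (Submodule.FG.finite_generators I.fg_of_isNoetherianRing).fintype

instance : Module.Flat A (AwayPi I) := by
  classical
  exact Module.Flat.of_linearEquiv (DFinsupp.linearEquivFunOnFintype (R := A)
    (M := fun x : I.generators => Localization.Away x.1)).symm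

theorem tmul_awayPi_eq_zero {m : M} (hm : m ∈ powerTorsion I M) (f : AwayPi I) :
    m ⊗ₜ[A] f = 0 := by
  classical
  obtain ⟨n, hn⟩ := hm
  rw [← Finset.univ_sum_single f, tmul_sum]
  refine Finset.sum_eq_zero fun x _ => ?_
  have hx : x.1 ^ n • m = 0 := hn _ (Ideal.pow_mem_pow (Submodule.FG.generators_mem I x.2) n)
  simpa using congrArg (LinearMap.lTensor M
    (LinearMap.single A (fun x : I.generators => Localization.Away x.1) x))
    (tmul_away_eq_zero hx (f x))

theorem tmul_one_awayPi_eq_zero_iff {m : M} :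
    m ⊗ₜ[A] (1 : AwayPi I) = 0 ↔ m ∈ powerTorsion I M := by
  refine ⟨fun h => ?_, fun h => tmul_awayPi_eq_zero h 1⟩
  have hx : ∀ x : I.generators, ∃ n : ℕ, x.1 ^ n • m = 0 := fun x =>
    exists_pow_smul_eq_zero_of_tmul_one <| by
      simpa using congrArg (LinearMap.lTensor M (LinearMap.proj (R := A)
        (φ := fun x : I.generators => Localization.Away x.1) x)) h
  have hI : I ≤ Ideal.radical (LinearMap.ker (LinearMap.toSpanSingleton A M m)) := by
    nth_rw 1 [← I.span_generators]
    refine Ideal.span_le.2 fun x hxI => ?_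
    obtain ⟨n, hn⟩ := hx ⟨x, hxI⟩
    exact ⟨n, by simpa using hn⟩
  obtain ⟨k, hk⟩ := Ideal.exists_pow_le_of_le_radical_of_fg hI I.fg_of_isNoetherianRing
  exact ⟨k, fun r hr => by simpa using hk hr⟩

theorem rTensor_awayPi_injective {a : M →ₗ[A] N} (ha : LinearMap.ker a ≤ powerTorsion I M) :
    Function.Injective (a.rTensor (AwayPi I)) := by
  have h := Module.Flat.rTensor_exact (AwayPi I) (LinearMap.exact_subtype_ker_map a)
  rw [← LinearMap.ker_eq_bot, LinearMap.exact_iff.1 h, eq_bot_iff]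
  rintro _ ⟨z, rfl⟩
  induction z using TensorProduct.induction_on with
  | zero => simp
  | tmul x y => simpa using tmul_awayPi_eq_zero (ha x.2) y
  | add x y hx hy => rw [map_add]; exact add_mem hx hy

variable (I M) in
theorem exact_subtype_toTensorAwayPi :
    Function.Exact (powerTorsion I M).subtype (toTensorAwayPi I M) := by
  rw [LinearMap.exact_iff, Submodule.range_subtype]
  exact Submodule.ext fun m => tmul_one_awayPi_eq_zero_iff

theorem IsPowerTorsion.subsingleton_tensor_awayCokernel (h : IsPowerTorsion I M) :
    Subsingleton (M ⊗[A] AwayCokernel I) := by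
  refine subsingleton_of_forall_eq 0 fun z => ?_
  obtain ⟨w, rfl⟩ := toTensorAwayCokernel_surjective I M z
  induction w using TensorProduct.induction_on with
  | zero => simp
  | tmul x y => rw [tmul_awayPi_eq_zero (h x), map_zero]
  | add x y hx hy => rw [map_add, hx, hy, add_zero]

end Away

section TorsionExact

variable {A : Type*} [CommRing A] {I : Ideal A}
variable {M' M M'' : Type*} [AddCommGroup M'] [Module A M'] [AddCommGroup M] [Module A M]
  [AddCommGroup M''] [Module A M''] {a : M' →ₗ[A] M} {b : M →ₗ[A] M''}

variable (I) in
/-- `M' → M → M'' → 0` is exact and the kernel of `M' → M` is `I`-power torsion. Unlike short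
exactness, this is preserved by tensoring with `AwayCokernel I`, and it still yields a long exact
sequence in local cohomology. -/
structure TorsionExact (a : M' →ₗ[A] M) (b : M →ₗ[A] M'') : Prop where
  ker_le : LinearMap.ker a ≤ powerTorsion I M'
  exact : Function.Exact a b
  surjective : Function.Surjective b

variable (I) in
theorem torsionExact_of_injective (ha : Function.Injective a) (hab : Function.Exact a b)
    (hb : Function.Surjective b) : TorsionExact I a b :=
  ⟨by rw [LinearMap.ker_eq_bot.2 ha]; exact bot_le, hab, hb⟩

variable (I) in
theorem torsionExact_subtype_mkQ (N : Submodule A M) : TorsionExact I N.subtype N.mkQ :=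
  torsionExact_of_injective I N.injective_subtype (LinearMap.exact_subtype_mkQ N)
    N.mkQ_surjective

variable (I) in
theorem torsionExact_subtype_ker_rangeRestrict (f : M →ₗ[A] M'') :
    TorsionExact I (LinearMap.ker f).subtype f.rangeRestrict :=
  torsionExact_of_injective I (Submodule.injective_subtype _)
    (by rw [LinearMap.exact_iff]; simp) f.surjective_rangeRestrict

variable (I) in
theorem torsionExact_lsmul_mkQ {x : A} (hx : IsSMulRegular M x) :
    TorsionExact I (LinearMap.lsmul A M x) (Submodule.mkQ (x • (⊤ : Submodule A M))) :=
  torsionExact_of_injective I hx (by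
    rw [LinearMap.exact_iff, Submodule.ker_mkQ]
    ext m
    simp [Submodule.mem_smul_pointwise_iff_exists]) (Submodule.mkQ_surjective _)

theorem TorsionExact.exact_powerTorsionMap (h : TorsionExact I a b) (hI : I.FG) :
    Function.Exact (powerTorsionMap I a) (powerTorsionMap I b) := by
  rintro ⟨m, n, hn⟩
  refine ⟨fun hb => ?_, ?_⟩
  · obtain ⟨m', rfl⟩ := (h.exact _).1 (congrArg Subtype.val hb : b m = 0)
    have hm' : m' ∈ powerTorsion I M' :=
      mem_powerTorsion_of_pow_smul_mem hI n fun r hr => h.ker_le (by simpa using hn r hr)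
    exact ⟨⟨m', hm'⟩, rfl⟩
  · rintro ⟨m', hm'⟩
    rw [← hm']
    exact Subtype.ext (h.exact.apply_apply_eq_zero m'.1)

variable [IsNoetherianRing A]

/-- The connecting map `Γ_I(M'') → M' ⊗ AwayCokernel I`, given by the snake lemma for the maps from
`M' → M → M'' → 0` to its tensor product with the flat module `AwayPi I`. -/
noncomputable def TorsionExact.connecting (h : TorsionExact I a b) :
    powerTorsion I M'' →ₗ[A] M' ⊗[A] AwayCokernel I :=
  SnakeLemma.δ' (toTensorAwayPi I M') (toTensorAwayPi I M) (toTensorAwayPi I M'') a b h.exact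
    (a.rTensor _) (b.rTensor _) (Module.Flat.rTensor_exact (AwayPi I) h.exact)
    (rTensor_comp_toTensorAwayPi a) (rTensor_comp_toTensorAwayPi b)
    (powerTorsion I M'').subtype (exact_subtype_toTensorAwayPi I M'')
    (toTensorAwayCokernel I M') (exact_toTensorAwayPi_toTensorAwayCokernel I M')
    h.surjective (rTensor_awayPi_injective h.ker_le)

theorem TorsionExact.exact_powerTorsionMap_connecting (h : TorsionExact I a b) :
    Function.Exact (powerTorsionMap I b) h.connecting :=
  SnakeLemma.exact_δ'_right _ _ _ _ _ _ _ _ _ _ _ (powerTorsion I M).subtype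
    (exact_subtype_toTensorAwayPi I M) _ _ _ _ _ _ _ rfl (Submodule.injective_subtype _)

theorem TorsionExact.exact_connecting_rTensor (h : TorsionExact I a b) :
    Function.Exact h.connecting (a.rTensor (AwayCokernel I)) :=
  SnakeLemma.exact_δ'_left _ _ _ _ _ _ _ _ _ _ _ _ _ _ _ (toTensorAwayCokernel I M)
    (exact_toTensorAwayPi_toTensorAwayCokernel I M) _ _ _ (rTensor_comp_toTensorAwayCokernel a)
    (toTensorAwayCokernel_surjective I M')

theorem TorsionExact.connecting_mem (h : TorsionExact I a b) (z : powerTorsion I M'') :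
    h.connecting z ∈ powerTorsion I (M' ⊗[A] AwayCokernel I) :=
  map_mem_powerTorsion _ (isPowerTorsion_powerTorsion I M'' z)

theorem TorsionExact.rTensor_awayCokernel (h : TorsionExact I a b) :
    TorsionExact I (a.rTensor (AwayCokernel I)) (b.rTensor (AwayCokernel I)) where
  exact := rTensor_exact _ h.exact h.surjective
  surjective := LinearMap.rTensor_surjective _ h.surjective
  ker_le := by
    rw [LinearMap.exact_iff.1 h.exact_connecting_rTensor]
    rintro _ ⟨z, rfl⟩
    exact h.connecting_mem z

end TorsionExact

/-! ### Local cohomology -/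

section LocalCohomology

variable {A : Type*} [CommRing A] {I : Ideal A}
variable {M' M M'' : Type*} [AddCommGroup M'] [Module A M'] [AddCommGroup M] [Module A M]
  [AddCommGroup M''] [Module A M'']

variable (I) in
/-- The `i`-th tensor power of `AwayCokernel I`. -/
def AwayCokernelPower (i : ℕ) : Type _ := ⨂[A]^i (AwayCokernel I)

noncomputable instance (i : ℕ) : AddCommGroup (AwayCokernelPower I i) :=
  inferInstanceAs (AddCommGroup (⨂[A]^i (AwayCokernel I)))

noncomputable instance (i : ℕ) : Module A (AwayCokernelPower I i) :=
  inferInstanceAs (Module A (⨂[A]^i (AwayCokernel I)))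

variable (I) in
/-- The isomorphism `G^{⊗0} ≃ A`, where `G = AwayCokernel I`. -/
noncomputable def awayCokernelPowerZeroEquiv : AwayCokernelPower I 0 ≃ₗ[A] A :=
  PiTensorProduct.isEmptyEquiv (Fin 0)

variable (I M) in
/-- The isomorphism `M ⊗ G^{⊗0} ≃ M`, where `G = AwayCokernel I`. -/
noncomputable def tensorPowerZeroEquiv : M ⊗[A] AwayCokernelPower I 0 ≃ₗ[A] M :=
  (awayCokernelPowerZeroEquiv I).lTensor M ≪≫ₗ TensorProduct.rid A M

variable (I) in
/-- The isomorphism `G^{⊗(i+1)} ≃ G^{⊗i} ⊗ G`, where `G = AwayCokernel I`. -/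
noncomputable def awayCokernelPowerSuccEquiv (i : ℕ) :
    AwayCokernelPower I (i + 1) ≃ₗ[A] AwayCokernelPower I i ⊗[A] AwayCokernel I :=
  TensorPower.mulEquiv.symm ≪≫ₗ LinearEquiv.lTensor (⨂[A]^i (AwayCokernel I))
    (PiTensorProduct.subsingletonEquiv (0 : Fin 1))

variable (I M) in
/-- The isomorphism `M ⊗ G^{⊗(i+1)} ≃ (M ⊗ G^{⊗i}) ⊗ G`, where `G = AwayCokernel I`. -/
noncomputable def tensorPowerSuccEquiv (i : ℕ) : M ⊗[A] AwayCokernelPower I (i + 1) ≃ₗ[A]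
    (M ⊗[A] AwayCokernelPower I i) ⊗[A] AwayCokernel I :=
  (awayCokernelPowerSuccEquiv I i).lTensor M ≪≫ₗ (TensorProduct.assoc A M _ _).symm

theorem tensorPowerZeroEquiv_rTensor (f : M →ₗ[A] M'') (z : M ⊗[A] AwayCokernelPower I 0) :
    tensorPowerZeroEquiv I M'' (f.rTensor _ z) = f (tensorPowerZeroEquiv I M z) := by
  induction z using TensorProduct.induction_on with
  | zero => simp only [map_zero]
  | tmul m t => simp [tensorPowerZeroEquiv]
  | add x y hx hy => simp only [map_add, hx, hy]

theorem tensorPowerSuccEquiv_rTensor (i : ℕ) (f : M →ₗ[A] M'')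
    (z : M ⊗[A] AwayCokernelPower I (i + 1)) :
    tensorPowerSuccEquiv I M'' i (f.rTensor _ z) =
      (f.rTensor _).rTensor _ (tensorPowerSuccEquiv I M i z) := by
  induction z using TensorProduct.induction_on with
  | zero => simp only [map_zero]
  | tmul m t =>
    simp only [tensorPowerSuccEquiv, LinearMap.rTensor_tmul, LinearEquiv.trans_apply,
      LinearEquiv.lTensor_tmul]
    induction awayCokernelPowerSuccEquiv I i t using TensorProduct.induction_on with
    | zero => simp only [tmul_zero, map_zero]
    | tmul x y => simp only [TensorProduct.assoc_symm_tmul, LinearMap.rTensor_tmul]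
    | add x y hx hy => simp only [tmul_add, map_add, hx, hy]
  | add x y hx hy => simp only [map_add, hx, hy]

variable (I) in
/-- The local cohomology module `H^i_I(M)`, encoded by dimension shifting: `H^0_I = Γ_I`, and
`H^{i+1}_I(M) = H^i_I(M ⊗ AwayCokernel I)` because `M ⊗ AwayCokernel I` is the cokernel of
`M → ∏ M_x`, whose kernel `Γ_I(M)` and whose target have no higher local cohomology. -/
abbrev LocalCohomology (i : ℕ) (M : Type*) [AddCommGroup M] [Module A M] : Type _ :=
  powerTorsion I (M ⊗[A] AwayCokernelPower I i)

variable (I) in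
theorem isPowerTorsion_localCohomology (i : ℕ) (M : Type*) [AddCommGroup M] [Module A M] :
    IsPowerTorsion I (LocalCohomology I i M) :=
  isPowerTorsion_powerTorsion I _

variable (I M) in
/-- The isomorphism `H^0_I(M) ≃ Γ_I(M)`. -/
noncomputable def localCohomologyZeroEquiv : LocalCohomology I 0 M ≃ₗ[A] powerTorsion I M :=
  powerTorsionCongr I (tensorPowerZeroEquiv I M)

variable (I M) in
/-- The dimension shift `H^{i+1}_I(M) ≃ Γ_I(M ⊗ G^{⊗i} ⊗ G)` with `G = AwayCokernel I`. -/
noncomputable def localCohomologySuccEquiv (i : ℕ) : LocalCohomology I (i + 1) M ≃ₗ[A]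
    powerTorsion I ((M ⊗[A] AwayCokernelPower I i) ⊗[A] AwayCokernel I) :=
  powerTorsionCongr I (tensorPowerSuccEquiv I M i)

variable (I) in
/-- The functor `H^i_I` on morphisms. -/
noncomputable def localCohomologyMap (i : ℕ) (f : M →ₗ[A] M'') :
    LocalCohomology I i M →ₗ[A] LocalCohomology I i M'' :=
  powerTorsionMap I (f.rTensor _)

variable (I) in
theorem localCohomologyMap_id (i : ℕ) :
    localCohomologyMap I i (LinearMap.id : M →ₗ[A] M) = LinearMap.id :=
  LinearMap.ext fun z => Subtype.ext (LinearMap.rTensor_id_apply _ _ z.1)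

variable (I) in
theorem localCohomologyMap_comp (i : ℕ) (g : M →ₗ[A] M'') (f : M' →ₗ[A] M) :
    localCohomologyMap I i (g ∘ₗ f) = localCohomologyMap I i g ∘ₗ localCohomologyMap I i f :=
  LinearMap.ext fun z => Subtype.ext (LinearMap.rTensor_comp_apply _ _ _ z.1)

variable (I) in
theorem localCohomologyMap_add (i : ℕ) (g f : M →ₗ[A] M'') :
    localCohomologyMap I i (g + f) = localCohomologyMap I i g + localCohomologyMap I i f :=
  LinearMap.ext fun z => Subtype.ext (LinearMap.congr_fun (LinearMap.rTensor_add _ g f) z.1)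

variable (I) in
theorem localCohomologyMap_smul (i : ℕ) (x : A) (f : M →ₗ[A] M'') :
    localCohomologyMap I i (x • f) = x • localCohomologyMap I i f :=
  LinearMap.ext fun z => Subtype.ext (LinearMap.congr_fun (LinearMap.rTensor_smul _ x f) z.1)

variable (I) in
theorem localCohomologyMap_lsmul (i : ℕ) (x : A) :
    localCohomologyMap I i (LinearMap.lsmul A M x) = LinearMap.lsmul A _ x := by
  have h : LinearMap.lsmul A M x = x • LinearMap.id := rfl
  rw [h, localCohomologyMap_smul, localCohomologyMap_id]
  rfl

theorem localCohomologySuccEquiv_map (i : ℕ) (f : M →ₗ[A] M'')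
    (z : LocalCohomology I (i + 1) M) :
    localCohomologySuccEquiv I M'' i (localCohomologyMap I (i + 1) f z) =
      powerTorsionMap I ((f.rTensor _).rTensor _) (localCohomologySuccEquiv I M i z) :=
  Subtype.ext (tensorPowerSuccEquiv_rTensor i f z.1)

variable [IsNoetherianRing A]

theorem IsPowerTorsion.subsingleton_localCohomology_succ (h : IsPowerTorsion I M) (i : ℕ) :
    Subsingleton (LocalCohomology I (i + 1) M) := by
  have h' : IsPowerTorsion I (M ⊗[A] AwayCokernelPower I i) := fun z => by
    induction z using TensorProduct.induction_on with
    | zero => exact zero_mem _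
    | tmul m t => exact map_mem_powerTorsion ((TensorProduct.mk A M _).flip t) (h m)
    | add x y hx hy => exact add_mem hx hy
  have := h'.subsingleton_tensor_awayCokernel
  exact (localCohomologySuccEquiv I M i).toEquiv.subsingleton

variable {a : M' →ₗ[A] M} {b : M →ₗ[A] M''}

theorem TorsionExact.rTensor_tensorPower (h : TorsionExact I a b) (i : ℕ) :
    TorsionExact I (a.rTensor (AwayCokernelPower I i)) (b.rTensor (AwayCokernelPower I i)) := by
  suffices hker : LinearMap.ker (a.rTensor (AwayCokernelPower I i)) ≤ powerTorsion I _ from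
    ⟨hker, rTensor_exact _ h.exact h.surjective, LinearMap.rTensor_surjective _ h.surjective⟩
  induction i with
  | zero =>
    refine fun z hz => mem_powerTorsion_of_map_mem (f := (tensorPowerZeroEquiv I M').toLinearMap)
      (tensorPowerZeroEquiv I M').injective (h.ker_le ?_)
    exact (tensorPowerZeroEquiv_rTensor a z).symm.trans (by rw [LinearMap.mem_ker.1 hz, map_zero])
  | succ i ih =>
    have hi : TorsionExact I (a.rTensor (AwayCokernelPower I i)) (b.rTensor _) :=
      ⟨ih, rTensor_exact _ h.exact h.surjective, LinearMap.rTensor_surjective _ h.surjective⟩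
    refine fun z hz => mem_powerTorsion_of_map_mem (f := (tensorPowerSuccEquiv I M' i).toLinearMap)
      (tensorPowerSuccEquiv I M' i).injective (hi.rTensor_awayCokernel.ker_le ?_)
    exact (tensorPowerSuccEquiv_rTensor i a z).symm.trans
      (by rw [LinearMap.mem_ker.1 hz, map_zero])

theorem TorsionExact.exact_localCohomologyMap (h : TorsionExact I a b) (i : ℕ) :
    Function.Exact (localCohomologyMap I i a) (localCohomologyMap I i b) :=
  (h.rTensor_tensorPower i).exact_powerTorsionMap I.fg_of_isNoetherianRing

/-- The connecting map `H^i_I(M'') → H^{i+1}_I(M')`. -/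
noncomputable def TorsionExact.δ (h : TorsionExact I a b) (i : ℕ) :
    LocalCohomology I i M'' →ₗ[A] LocalCohomology I (i + 1) M' :=
  (localCohomologySuccEquiv I M' i).symm ∘ₗ
    (h.rTensor_tensorPower i).connecting.codRestrict _ (h.rTensor_tensorPower i).connecting_mem

theorem TorsionExact.exact_localCohomologyMap_δ (h : TorsionExact I a b) (i : ℕ) :
    Function.Exact (localCohomologyMap I i b) (h.δ i) := fun z => by
  refine Iff.trans ?_ ((h.rTensor_tensorPower i).exact_powerTorsionMap_connecting z)
  simp [TorsionExact.δ, Subtype.ext_iff]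

theorem TorsionExact.exact_δ_localCohomologyMap (h : TorsionExact I a b) (i : ℕ) :
    Function.Exact (h.δ i) (localCohomologyMap I (i + 1) a) := fun z => by
  rw [← (localCohomologySuccEquiv I M i).map_eq_zero_iff, localCohomologySuccEquiv_map]
  refine Subtype.ext_iff.trans <|
    ((h.rTensor_tensorPower i).exact_connecting_rTensor _).trans <| exists_congr fun w => ?_
  rw [TorsionExact.δ, LinearMap.comp_apply, LinearEquiv.coe_coe, LinearEquiv.symm_apply_eq,
    Subtype.ext_iff]
  rfl

theorem TorsionExact.localCohomologyMap_right_injective (h : TorsionExact I a b) (i : ℕ)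
    [Subsingleton (LocalCohomology I i M')] : Function.Injective (localCohomologyMap I i b) := by
  rw [← LinearMap.ker_eq_bot, LinearMap.exact_iff.1 (h.exact_localCohomologyMap i),
    Subsingleton.elim (localCohomologyMap I i a) 0, LinearMap.range_zero]

theorem TorsionExact.localCohomologyMap_right_surjective (h : TorsionExact I a b) (i : ℕ)
    [Subsingleton (LocalCohomology I (i + 1) M')] :
    Function.Surjective (localCohomologyMap I i b) :=
  fun y => (h.exact_localCohomologyMap_δ i y).1 (Subsingleton.elim _ _)

theorem TorsionExact.localCohomologyMap_left_surjective (h : TorsionExact I a b) (i : ℕ)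
    [Subsingleton (LocalCohomology I i M'')] : Function.Surjective (localCohomologyMap I i a) :=
  fun y => (h.exact_localCohomologyMap i y).1 (Subsingleton.elim _ _)

theorem TorsionExact.localCohomologyMap_left_injective (h : TorsionExact I a b) (i : ℕ)
    [Subsingleton (LocalCohomology I i M'')] :
    Function.Injective (localCohomologyMap I (i + 1) a) := by
  rw [← LinearMap.ker_eq_bot, LinearMap.exact_iff.1 (h.exact_δ_localCohomologyMap i),
    Subsingleton.elim (h.δ i) 0, LinearMap.range_zero]

theorem TorsionExact.δ_injective (h : TorsionExact I a b) (i : ℕ)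
    [Subsingleton (LocalCohomology I i M)] : Function.Injective (h.δ i) := by
  rw [← LinearMap.ker_eq_bot, LinearMap.exact_iff.1 (h.exact_localCohomologyMap_δ i),
    Subsingleton.elim (localCohomologyMap I i b) 0, LinearMap.range_zero]

theorem TorsionExact.δ_surjective (h : TorsionExact I a b) (i : ℕ)
    [Subsingleton (LocalCohomology I (i + 1) M)] : Function.Surjective (h.δ i) :=
  fun y => (h.exact_δ_localCohomologyMap i y).1 (Subsingleton.elim _ _)

variable (I M) in
theorem localCohomologyMap_mkQ_powerTorsion_bijective (i : ℕ) :
    Function.Bijective (localCohomologyMap I (i + 1) (powerTorsion I M).mkQ) := by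
  have hsub := (isPowerTorsion_powerTorsion I M).subsingleton_localCohomology_succ
  have := hsub i
  have := hsub (i + 1)
  have h := torsionExact_subtype_mkQ I (powerTorsion I M)
  exact ⟨h.localCohomologyMap_right_injective _, h.localCohomologyMap_right_surjective _⟩

theorem exists_fg_rTensor_inclusion_mem_powerTorsion {T : Type*} [AddCommGroup T] [Module A T]
    {N : Submodule A M} (hN : N.FG) {w : N ⊗[A] T}
    (hw : N.subtype.rTensor T w ∈ powerTorsion I (M ⊗[A] T)) :
    ∃ (P : Submodule A M) (hNP : N ≤ P), P.FG ∧
      (Submodule.inclusion hNP).rTensor T w ∈ powerTorsion I (P ⊗[A] T) := by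
  obtain ⟨n, hn⟩ := hw
  obtain ⟨s, hs⟩ := (I ^ n).fg_of_isNoetherianRing
  have hann : ∀ r ∈ s, ∃ (Q : Submodule A M) (hQ : N ≤ Q), Q.FG ∧
      (Submodule.inclusion hQ).rTensor T (r • w) = 0 := fun r hr =>
    TensorProduct.eq_zero_of_fg_of_subtype_eq_zero hN
      (by rw [map_smul, hn r (hs ▸ Ideal.subset_span hr)])
  choose! Q hNQ hQfg hQ using hann
  refine ⟨N ⊔ s.sup Q, le_sup_left, hN.sup (Submodule.fg_finset_sup s Q hQfg), n, fun r hr => ?_⟩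
  have hNP : N ≤ N ⊔ s.sup Q := le_sup_left
  have hker : I ^ n ≤ LinearMap.ker (LinearMap.toSpanSingleton A _
      ((Submodule.inclusion hNP).rTensor T w)) := by
    rw [← hs]
    refine Ideal.span_le.2 fun r hr => ?_
    have hle : Q r ≤ N ⊔ s.sup Q := (Finset.le_sup hr).trans le_sup_right
    have h0 := congrArg ((Submodule.inclusion hle).rTensor T) (hQ r hr)
    rwa [← LinearMap.rTensor_comp_apply, map_zero, map_smul] at h0
  exact hker hr

theorem exists_fg_localCohomologyMap_subtype_eq (i : ℕ) (z : LocalCohomology I i M) :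
    ∃ N : Submodule A M, N.FG ∧ ∃ w, localCohomologyMap I i N.subtype w = z := by
  obtain ⟨z, hz⟩ := z
  obtain ⟨N, hN, w, rfl⟩ := TensorProduct.exists_of_fg z
  obtain ⟨P, hNP, hP, hw⟩ := exists_fg_rTensor_inclusion_mem_powerTorsion hN hz
  exact ⟨P, hP, ⟨_, hw⟩, Subtype.ext (LinearMap.rTensor_comp_apply _ _ _ _).symm⟩

end LocalCohomology

/-! ### Vanishing above the dimension of the support -/

section Vanishing

variable {A : Type*} [CommRing A]
variable {M : Type*} [AddCommGroup M] [Module A M]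

section Local

variable [IsLocalRing A]

theorem support_subset_support_quotient_powerTorsion
    [Nontrivial (M ⧸ powerTorsion (maximalIdeal A) M)] :
    Module.support A M ⊆ Module.support A (M ⧸ powerTorsion (maximalIdeal A) M) := by
  set Γ := powerTorsion (maximalIdeal A) M
  obtain ⟨p, hp⟩ := Module.nonempty_support_of_nontrivial (R := A) (M := M ⧸ Γ)
  rw [Module.support_of_exact (LinearMap.exact_subtype_mkQ Γ) Γ.injective_subtype Γ.mkQ_surjective]
  refine Set.union_subset (fun q hq => Module.mem_support_mono (p := p) ?_ hp) le_rfl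
  exact (le_maximalIdeal p.2.ne_top).trans
    ((isPowerTorsion_powerTorsion _ M).support_subset_zeroLocus hq)

theorem supportDim_quotient_powerTorsion (h : 0 < Module.supportDim A M) :
    Module.supportDim A (M ⧸ powerTorsion (maximalIdeal A) M) = Module.supportDim A M := by
  set Γ := powerTorsion (maximalIdeal A) M with hΓ
  have : Nontrivial (M ⧸ Γ) := by
    rw [Submodule.Quotient.nontrivial_iff]
    intro htop
    have htorsion : IsPowerTorsion (maximalIdeal A) M := fun m => by
      rw [← hΓ, htop]
      exact Submodule.mem_top
    refine h.not_ge (htorsion.supportDim_le.trans_eq ?_)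
    let _ := Ideal.Quotient.field (maximalIdeal A)
    exact ringKrullDim_eq_zero_of_field _
  refine (Module.supportDim_le_of_surjective Γ.mkQ Γ.mkQ_surjective).antisymm ?_
  exact Order.krullDim_le_of_strictMono
    (Set.inclusion support_subset_support_quotient_powerTorsion) fun {_ _} hlt => hlt

end Local

variable [IsNoetherianRing A]

theorem subsingleton_localCohomology_succ_of_isSMulRegular {I : Ideal A} {x : A} (hx : x ∈ I)
    (hreg : IsSMulRegular M x) (i : ℕ)
    [Subsingleton (LocalCohomology I i (QuotSMulTop x M))] :
    Subsingleton (LocalCohomology I (i + 1) M) := by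
  have hinj := (torsionExact_lsmul_mkQ I hreg).localCohomologyMap_left_injective i
  rw [localCohomologyMap_lsmul] at hinj
  have hreg' : IsSMulRegular (LocalCohomology I (i + 1) M) x := hinj
  refine subsingleton_of_forall_eq 0 fun z => ?_
  obtain ⟨n, hn⟩ := (isPowerTorsion_localCohomology I (i + 1) M).exists_pow_smul_eq_zero hx z
  exact (hreg'.pow n) (hn.trans (smul_zero _).symm)

variable [IsLocalRing A]

theorem maximalIdeal_notMem_associatedPrimes (hM : powerTorsion (maximalIdeal A) M = ⊥) :
    maximalIdeal A ∉ associatedPrimes A M := by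
  intro h
  obtain ⟨hprime, x, hx⟩ := Submodule.isAssociatedPrime_iff.1
    (show Submodule.IsAssociatedPrime (⊥ : Submodule A M) (maximalIdeal A) from h)
  have hx_mem : x ∈ powerTorsion (maximalIdeal A) M := ⟨1, fun r hr => by
    rw [pow_one, hx] at hr
    simpa [Submodule.mem_colon_singleton] using hr⟩
  have hx0 : x = 0 := by simpa [hM] using hx_mem
  refine hprime.ne_top ((Ideal.eq_top_iff_one _).2 ?_)
  rw [hx, hx0]
  simp [Submodule.mem_colon_singleton]

theorem exists_isSMulRegular_forall_notMem [Module.Finite A M]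
    (hM : powerTorsion (maximalIdeal A) M = ⊥) {S : Set (Ideal A)} (hS : S.Finite)
    (hprime : ∀ p ∈ S, p.IsPrime) (hne : ∀ p ∈ S, p ≠ maximalIdeal A) :
    ∃ u ∈ maximalIdeal A, IsSMulRegular M u ∧ ∀ p ∈ S, u ∉ p := by
  have hnotMem : maximalIdeal A ∉ associatedPrimes A M ∪ S := by
    rintro (h | h)
    exacts [maximalIdeal_notMem_associatedPrimes hM h, hne _ h rfl]
  have hne_top : maximalIdeal A ≠ ⊤ := Ideal.IsMaximal.ne_top inferInstance
  rw [← Ideal.subset_iUnion_iff_mem_of_isMaximal_of_finite ((associatedPrimes.finite A M).union hS)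
    (maximalIdeal A) (maximalIdeal A)
    (fun p hp _ _ => hp.elim (fun h => h.1) (hprime p)) hne_top hne_top] at hnotMem
  obtain ⟨u, hu, hu_notMem⟩ := Set.not_subset.1 hnotMem
  simp only [Set.mem_iUnion, not_exists] at hu_notMem
  refine ⟨u, hu, ?_, fun p hp => hu_notMem p (Or.inr hp)⟩
  by_contra hreg
  have hmem : u ∈ {r : A | IsSMulRegular M r}ᶜ := hreg
  rw [← biUnion_associatedPrimes_eq_compl_regular] at hmem
  simp only [Set.mem_iUnion] at hmem
  obtain ⟨p, hp, hup⟩ := hmem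
  exact hu_notMem p (Or.inl hp) hup

theorem exists_isSMulRegular_mem_maximalIdeal [Module.Finite A M]
    (hM : powerTorsion (maximalIdeal A) M = ⊥) : ∃ u ∈ maximalIdeal A, IsSMulRegular M u := by
  obtain ⟨u, hu, hreg, -⟩ := exists_isSMulRegular_forall_notMem hM Set.finite_empty
    (by simp) (by simp)
  exact ⟨u, hu, hreg⟩

variable (A M) in
theorem exists_isSMulRegular_quotient_powerTorsion [Module.Finite A M] :
    ∃ x ∈ maximalIdeal A, IsSMulRegular (M ⧸ powerTorsion (maximalIdeal A) M) x ∧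
      Module.supportDim A (QuotSMulTop x (M ⧸ powerTorsion (maximalIdeal A) M)) + 1 ≤
        Module.supportDim A M := by
  obtain ⟨x, hx, hreg⟩ := exists_isSMulRegular_mem_maximalIdeal
    (powerTorsion_quotient_powerTorsion M (maximalIdeal A).fg_of_isNoetherianRing)
  refine ⟨x, hx, hreg, ?_⟩
  rw [Module.supportDim_quotSMulTop_succ_eq_supportDim hreg hx]
  exact Module.supportDim_le_of_surjective (Submodule.mkQ _) (Submodule.mkQ_surjective _)

theorem subsingleton_localCohomology_of_supportDim_lt_of_finite {i : ℕ} {M : Type*}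
    [AddCommGroup M] [Module A M] [Module.Finite A M] (h : Module.supportDim A M < i) :
    Subsingleton (LocalCohomology (maximalIdeal A) i M) := by
  induction i generalizing M with
  | zero =>
    have hM : Subsingleton M := by
      by_contra hM
      rw [not_subsingleton_iff_nontrivial] at hM
      have : Nonempty (Module.support A M) := Module.nonempty_support_of_nontrivial.to_subtype
      exact (Order.krullDim_nonneg (α := Module.support A M)).not_gt h
    infer_instance
  | succ i ih =>
    obtain ⟨x, hx, hreg, hdim⟩ := exists_isSMulRegular_quotient_powerTorsion A M
    have := ih (lt_of_add_lt_add_right (by exact_mod_cast hdim.trans_lt h))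
    have := subsingleton_localCohomology_succ_of_isSMulRegular hx hreg i
    exact (localCohomologyMap_mkQ_powerTorsion_bijective _ M i).1.subsingleton

theorem subsingleton_localCohomology_of_supportDim_lt {i : ℕ} (h : Module.supportDim A M < i) :
    Subsingleton (LocalCohomology (maximalIdeal A) i M) := by
  refine subsingleton_of_forall_eq 0 fun z => ?_
  obtain ⟨N, hN, w, rfl⟩ := exists_fg_localCohomologyMap_subtype_eq i z
  have : Module.Finite A N := Module.Finite.iff_fg.2 hN
  have := subsingleton_localCohomology_of_supportDim_lt_of_finite
    ((Module.supportDim_le_of_injective N.subtype N.injective_subtype).trans_lt h)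
  rw [Subsingleton.elim w 0, map_zero]

end Vanishing

/-! ### Artinianness of local cohomology -/

section Artinian

theorem exists_forall_le_of_antitone_prod {α : Type*} [PartialOrder α] [WellFoundedLT α]
    {g : ℕ × ℕ → α} (hg : Antitone g) : ∃ n, ∀ k i, n ≤ i → g (k, n) ≤ g (k, i) := by
  obtain ⟨n₀, hn₀⟩ := WellFoundedLT.antitone_chain_condition
    (f := fun n => g (n, n)) fun i j h => hg ⟨h, h⟩
  choose c hc using fun k => WellFoundedLT.antitone_chain_condition
    (f := fun i => g (k, i)) fun i j h => hg ⟨le_rfl, h⟩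
  refine ⟨max n₀ ((Finset.range n₀).sup c), fun k i hi => ?_⟩
  set n := max n₀ ((Finset.range n₀).sup c)
  rcases lt_or_ge k n₀ with hk | hk
  · have hcn : c k ≤ n := (Finset.le_sup (f := c) (Finset.mem_range.2 hk)).trans (le_max_right _ _)
    exact ((hc k n hcn).symm.trans (hc k i (hcn.trans hi))).le
  · calc g (k, n) ≤ g (n₀, n₀) := hg ⟨hk, le_max_left _ _⟩
      _ = g (max k i, max k i) := hn₀ _ (hk.trans (le_max_left _ _))
      _ ≤ g (k, i) := hg ⟨le_max_left _ _, le_max_right _ _⟩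

variable {A : Type*} [CommRing A] {N : Type*} [AddCommGroup N] [Module A N]

/-- The elements of `x ^ k • P` killed by `x`, as a submodule of the kernel of `x`. As `k` varies
these are the graded pieces of an `x`-power torsion module `P` filtered by the kernels of the
powers of `x`. -/
def socleLayer (x : A) (k : ℕ) (P : Submodule A N) :
    Submodule A (LinearMap.ker (LinearMap.lsmul A N x)) :=
  (P.map (LinearMap.lsmul A N (x ^ k))).comap (Submodule.subtype _)

theorem mem_socleLayer {x : A} {k : ℕ} {P : Submodule A N}
    {y : LinearMap.ker (LinearMap.lsmul A N x)} :
    y ∈ socleLayer x k P ↔ ∃ z ∈ P, x ^ k • z = y := Iff.rfl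

theorem socleLayer_le_socleLayer {x : A} {k k' : ℕ} {P P' : Submodule A N} (hk : k ≤ k')
    (hP : P' ≤ P) : socleLayer x k' P' ≤ socleLayer x k P := by
  rintro y ⟨z, hz, hzy⟩
  refine ⟨x ^ (k' - k) • z, P.smul_mem _ (hP hz), hzy ▸ ?_⟩
  change x ^ k • x ^ (k' - k) • z = x ^ k' • z
  rw [← mul_smul, ← pow_add, Nat.add_sub_cancel' hk]

theorem le_of_forall_socleLayer_le {x : A} (hx : ∀ z : N, ∃ k : ℕ, x ^ k • z = 0)
    {P P' : Submodule A N} (hP : P' ≤ P) (h : ∀ k, socleLayer x k P ≤ socleLayer x k P') :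
    P ≤ P' := by
  have mem_of_pow_smul : ∀ (k : ℕ), ∀ z ∈ P, x ^ k • z = 0 → z ∈ P' := by
    intro k
    induction k with
    | zero =>
      intro z _ hz
      rw [pow_zero, one_smul] at hz
      exact hz ▸ P'.zero_mem
    | succ k ih =>
      intro z hz hxz
      have hker : x ^ k • z ∈ LinearMap.ker (LinearMap.lsmul A N x) := by
        rw [LinearMap.mem_ker, LinearMap.lsmul_apply, ← mul_smul, ← pow_succ', hxz]
      obtain ⟨z', hz', hzz'⟩ := mem_socleLayer.1
        (h k (mem_socleLayer.2 ⟨z, hz, rfl⟩ : (⟨_, hker⟩ : LinearMap.ker _) ∈ _))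
      have hsub : z - z' ∈ P' :=
        ih _ (P.sub_mem hz (hP hz')) (by rw [smul_sub, hzz', sub_self])
      simpa using P'.add_mem hsub hz'
  intro z hz
  obtain ⟨k, hk⟩ := hx z
  exact mem_of_pow_smul k z hz hk

theorem isArtinian_of_isArtinian_ker_lsmul {x : A} (hx : ∀ z : N, ∃ k : ℕ, x ^ k • z = 0)
    [IsArtinian A (LinearMap.ker (LinearMap.lsmul A N x))] : IsArtinian A N := by
  rw [← monotone_stabilizes_iff_artinian]
  intro f
  have hanti : Antitone fun q : ℕ × ℕ => socleLayer x q.1 (OrderDual.ofDual (f q.2)) :=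
    fun _ _ hq => socleLayer_le_socleLayer hq.1 (f.monotone hq.2)
  obtain ⟨n, hn⟩ := exists_forall_le_of_antitone_prod hanti
  exact ⟨n, fun i hi => le_antisymm (f.monotone hi)
    (le_of_forall_socleLayer_le hx (f.monotone hi) fun k => hn k i hi)⟩

variable [IsNoetherianRing A] [IsLocalRing A]

theorem isArtinianRing_quotient_maximalIdeal_pow_succ (n : ℕ) :
    IsArtinianRing (A ⧸ maximalIdeal A ^ (n + 1)) := by
  refine quotient_artinian_of_mem_minimalPrimes_of_isLocalRing _ ?_
  rw [← Ideal.radical_minimalPrimes, Ideal.radical_pow _ n.succ_ne_zero,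
    Ideal.radical_minimalPrimes, Ideal.minimalPrimes_eq_subsingleton_self]
  rfl

theorem isNoetherian_iff_isArtinian_of_pow_le_annihilator {n : ℕ}
    (h : maximalIdeal A ^ n ≤ Module.annihilator A N) : IsNoetherian A N ↔ IsArtinian A N := by
  have := isArtinianRing_quotient_maximalIdeal_pow_succ (A := A) n
  have htors : Module.IsTorsionBySet A N (maximalIdeal A ^ (n + 1) : Ideal A) := by
    rw [Module.isTorsionBySet_iff_subset_annihilator]
    exact (Ideal.pow_le_pow_right n.le_succ).trans h
  let _ := htors.module
  rw [htors.semilinearMap.isNoetherian_iff_of_bijective Function.bijective_id,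
    htors.semilinearMap.isArtinian_iff_of_bijective Function.bijective_id]
  exact IsSemiprimaryRing.isNoetherian_iff_isArtinian

theorem isArtinian_powerTorsion_maximalIdeal {M : Type*} [AddCommGroup M] [Module A M]
    [Module.Finite A M] : IsArtinian A (powerTorsion (maximalIdeal A) M) := by
  obtain ⟨n, hn⟩ := (isPowerTorsion_powerTorsion (maximalIdeal A) M).exists_pow_le_annihilator
  exact (isNoetherian_iff_isArtinian_of_pow_le_annihilator hn).1 inferInstance

theorem isArtinian_localCohomology (i : ℕ) (M : Type*) [AddCommGroup M] [Module A M]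
    [Module.Finite A M] : IsArtinian A (LocalCohomology (maximalIdeal A) i M) := by
  induction i generalizing M with
  | zero =>
    exact (localCohomologyZeroEquiv (maximalIdeal A) M).isArtinian_iff.2
      isArtinian_powerTorsion_maximalIdeal
  | succ i ih =>
    obtain ⟨x, hx, hreg, -⟩ := exists_isSMulRegular_quotient_powerTorsion A M
    set Γ := powerTorsion (maximalIdeal A) M
    have hexact := torsionExact_lsmul_mkQ (maximalIdeal A) hreg
    suffices IsArtinian A (LocalCohomology (maximalIdeal A) (i + 1) (M ⧸ Γ)) from
      isArtinian_of_injective _ (localCohomologyMap_mkQ_powerTorsion_bijective _ M i).1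
    have := ih (QuotSMulTop x (M ⧸ Γ))
    have hker := LinearMap.exact_iff.1 (hexact.exact_δ_localCohomologyMap i)
    rw [localCohomologyMap_lsmul] at hker
    have : IsArtinian A (LinearMap.ker (LinearMap.lsmul A
        (LocalCohomology (maximalIdeal A) (i + 1) (M ⧸ Γ)) x)) := by
      rw [hker]
      exact isArtinian_of_surjective _ _ (hexact.δ i).surjective_rangeRestrict
    exact isArtinian_of_isArtinian_ker_lsmul
      ((isPowerTorsion_localCohomology _ _ _).exists_pow_smul_eq_zero hx)

end Artinian

/-! ### Finiteness of homomorphisms out of top local cohomology -/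

section HomFinite

variable {A : Type*} [CommRing A] {I : Ideal A}
variable {K : Type*} [AddCommGroup K] [Module A K] {T : Type*} [AddCommGroup T] [Module A T]

theorem isPrecomplete_pi (ι : Type*) [Finite ι] [IsPrecomplete I A] : IsPrecomplete I (ι → A) := by
  classical
  have := Fintype.ofFinite ι
  refine ⟨fun f hf => ?_⟩
  have hlim : ∀ j, ∃ L : A, ∀ k, f k j ≡ L [SMOD (I ^ k • ⊤ : Submodule A A)] := fun j => by
    refine IsPrecomplete.prec (I := I) inferInstance fun {m k} hmk => ?_
    refine ((hf hmk).map (LinearMap.proj j)).mono ?_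
    rw [Submodule.map_smul'']
    exact Submodule.smul_mono le_rfl le_top
  choose L hL using hlim
  refine ⟨L, fun k => ?_⟩
  rw [SModEq.sub_mem, pi_eq_sum_univ (f k - L)]
  exact Submodule.sum_mem _ fun j _ => Submodule.smul_mem_smul
    (by simpa using SModEq.sub_mem.1 (hL j k)) trivial

theorem finite_of_finite_quotient_smul_top [IsPrecomplete I A] [IsHausdorff I K]
    [Module.Finite A (K ⧸ (I • ⊤ : Submodule A K))] : Module.Finite A K := by
  obtain ⟨n, g, hg⟩ := Module.Finite.exists_fin' A (K ⧸ (I • ⊤ : Submodule A K))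
  obtain ⟨g', rfl⟩ := Module.projective_lifting_property
    (Submodule.mkQ (I • ⊤ : Submodule A K)) g (Submodule.mkQ_surjective _)
  have := isPrecomplete_pi (I := I) (Fin n)
  exact Module.Finite.of_surjective g' (surjective_of_mkQ_comp_surjective hg)

theorem IsPowerTorsion.isHausdorff_linearMap (h : IsPowerTorsion I K) :
    IsHausdorff I (K →ₗ[A] T) := by
  refine ⟨fun φ hφ => LinearMap.ext fun z => ?_⟩
  obtain ⟨n, hn⟩ := h z
  have hmem : φ ∈ (I ^ n • ⊤ : Submodule A (K →ₗ[A] T)) := by simpa [SModEq.sub_mem] using hφ n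
  change φ z = 0
  refine Submodule.smul_induction_on hmem (fun a ha ψ _ => ?_) fun _ _ hφ hψ => ?_
  · rw [LinearMap.smul_apply, ← map_smul, hn a ha, map_zero]
  · rw [LinearMap.add_apply, hφ, hψ, add_zero]

theorem mem_smul_top_of_ker_lsmul_le {x : A} (hx : Function.Surjective (LinearMap.lsmul A K x))
    {φ : K →ₗ[A] T} (hφ : LinearMap.ker (LinearMap.lsmul A K x) ≤ LinearMap.ker φ) :
    φ ∈ (x • ⊤ : Submodule A (K →ₗ[A] T)) := by
  let ψ : K →ₗ[A] T := (LinearMap.ker (LinearMap.lsmul A K x)).liftQ φ hφ ∘ₗ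
    ((LinearMap.lsmul A K x).quotKerEquivOfSurjective hx).symm
  have hψ : ∀ z, ψ (x • z) = φ z := fun z => by
    have : ((LinearMap.lsmul A K x).quotKerEquivOfSurjective hx).symm (x • z) =
        Submodule.Quotient.mk z := by
      rw [LinearEquiv.symm_apply_eq]
      rfl
    rw [LinearMap.comp_apply, LinearEquiv.coe_coe, this, Submodule.liftQ_apply]
  exact (Submodule.mem_smul_pointwise_iff_exists _ _ _).2
    ⟨ψ, trivial, LinearMap.ext fun z => by rw [LinearMap.smul_apply, ← map_smul, hψ]⟩

theorem IsPowerTorsion.finite_linearMap_of_exact {Q : Type*} [AddCommGroup Q] [Module A Q]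
    [IsPrecomplete I A] [IsNoetherianRing A] (hK : IsPowerTorsion I K) {x : A} (hx : x ∈ I)
    (hsurj : Function.Surjective (LinearMap.lsmul A K x)) {δ : Q →ₗ[A] K}
    (hδ : Function.Exact δ (LinearMap.lsmul A K x)) [Module.Finite A (Q →ₗ[A] T)] :
    Module.Finite A (K →ₗ[A] T) := by
  have := hK.isHausdorff_linearMap (T := T)
  have hker : LinearMap.ker (LinearMap.lcomp A T δ) ≤ (I • ⊤ : Submodule A (K →ₗ[A] T)) := by
    intro φ hφ
    have hφδ : LinearMap.ker (LinearMap.lsmul A K x) ≤ LinearMap.ker φ := by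
      rw [LinearMap.exact_iff.1 hδ]
      exact LinearMap.range_le_ker_iff.2 hφ
    obtain ⟨ψ, -, rfl⟩ := (Submodule.mem_smul_pointwise_iff_exists _ _ _).1
      (mem_smul_top_of_ker_lsmul_le hsurj hφδ)
    exact Submodule.smul_mem_smul hx trivial
  have : Module.Finite A ((K →ₗ[A] T) ⧸ LinearMap.ker (LinearMap.lcomp A T δ)) :=
    Module.Finite.equiv (LinearMap.quotKerEquivRange _).symm
  have : Module.Finite A ((K →ₗ[A] T) ⧸ (I • ⊤ : Submodule A (K →ₗ[A] T))) :=
    Module.Finite.of_surjective (Submodule.factor hker) (Submodule.factor_surjective hker)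
  exact finite_of_finite_quotient_smul_top (I := I)

variable [IsNoetherianRing A] [IsLocalRing A] [IsArtinian A T]

variable (T) in
theorem IsPowerTorsion.finite_linearMap_of_finite [Module.Finite A K]
    (hK : IsPowerTorsion (maximalIdeal A) K) : Module.Finite A (K →ₗ[A] T) := by
  obtain ⟨n, g, hg⟩ := Module.Finite.exists_fin' A K
  have : IsArtinian A ((Fin n → A) →ₗ[A] T) :=
    (LinearEquiv.piRing A T (Fin n) A).isArtinian_iff.2 inferInstance
  have : IsArtinian A (K →ₗ[A] T) := isArtinian_of_injective (LinearMap.lcomp A T g)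
    fun φ ψ h => (LinearMap.cancel_right hg).1 h
  obtain ⟨k, hk⟩ := hK.exists_pow_le_annihilator
  have hann : maximalIdeal A ^ k ≤ Module.annihilator A (K →ₗ[A] T) := fun r hr =>
    Module.mem_annihilator.2 fun φ => LinearMap.ext fun z => by
      rw [LinearMap.smul_apply, ← map_smul, Module.mem_annihilator.1 (hk hr), map_zero,
        LinearMap.zero_apply]
  have := (isNoetherian_iff_isArtinian_of_pow_le_annihilator hann).2 inferInstance
  infer_instance

variable (T) in
theorem finite_localCohomology_linearMap [IsPrecomplete (maximalIdeal A) A] (i : ℕ) (M : Type*)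
    [AddCommGroup M] [Module A M] [Module.Finite A M] (hM : Module.supportDim A M ≤ i) :
    Module.Finite A (LocalCohomology (maximalIdeal A) i M →ₗ[A] T) := by
  induction i generalizing M with
  | zero =>
    have := (isPowerTorsion_powerTorsion (maximalIdeal A) M).finite_linearMap_of_finite T
    exact Module.Finite.equiv
      (LinearEquiv.congrLeft T A (localCohomologyZeroEquiv (maximalIdeal A) M)).symm
  | succ i ih =>
    obtain ⟨x, hx, hreg, hdim⟩ := exists_isSMulRegular_quotient_powerTorsion A M
    set Γ := powerTorsion (maximalIdeal A) M
    set Q := QuotSMulTop x (M ⧸ Γ)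
    have hQ : Module.supportDim A Q ≤ i :=
      ENat.WithBot.add_le_add_one_right_iff.1 (by exact_mod_cast hdim.trans hM)
    suffices Module.Finite A (LocalCohomology (maximalIdeal A) (i + 1) (M ⧸ Γ) →ₗ[A] T) from
      Module.Finite.equiv (LinearEquiv.congrLeft T A
        (.ofBijective _ (localCohomologyMap_mkQ_powerTorsion_bijective _ M i))).symm
    have hexact := torsionExact_lsmul_mkQ (maximalIdeal A) hreg
    have := ih Q hQ
    have : Subsingleton (LocalCohomology (maximalIdeal A) (i + 1) Q) :=
      subsingleton_localCohomology_of_supportDim_lt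
        (hQ.trans_lt (by exact_mod_cast i.lt_succ_self))
    have hδ := hexact.exact_δ_localCohomologyMap i
    have hsurj := hexact.localCohomologyMap_left_surjective (i + 1)
    rw [localCohomologyMap_lsmul] at hδ hsurj
    exact (isPowerTorsion_localCohomology _ _ _).finite_linearMap_of_exact
      (Q := LocalCohomology (maximalIdeal A) i Q) hx hsurj hδ

end HomFinite

/-! ### Nonvanishing in the dimension of the support -/

section Nonvanishing

theorem exists_forall_mul_smul_top_eq {A : Type*} [CommRing A] (H : Type*) [AddCommGroup H]
    [Module A H] [IsArtinian A H] {S : Set A} (hS : S.Nonempty)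
    (hmul : ∀ u ∈ S, ∀ v ∈ S, u * v ∈ S) :
    ∃ v ∈ S, ∀ u ∈ S, ((u * v) • ⊤ : Submodule A H) = v • ⊤ := by
  obtain ⟨_, ⟨v, hv, rfl⟩, hmin⟩ := IsArtinian.set_has_minimal
    ((fun v : A => (v • ⊤ : Submodule A H)) '' S) (hS.image _)
  refine ⟨v, hv, fun u hu => ?_⟩
  have hle : ((u * v) • ⊤ : Submodule A H) ≤ v • ⊤ := by
    rw [mul_comm, mul_smul]
    exact Submodule.map_mono le_top
  exact hle.eq_of_not_lt (hmin _ ⟨u * v, hmul u hu v hv, rfl⟩)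

variable {A : Type*} [CommRing A] [IsLocalRing A] {M : Type*} [AddCommGroup M] [Module A M]

theorem maximalIdeal_notMem_minimalPrimes_annihilator [Module.Finite A M]
    (h : 0 < Module.supportDim A M) :
    maximalIdeal A ∉ (Module.annihilator A M).minimalPrimes := by
  intro hmem
  have heq : ∀ p : Module.support A M, p.1.asIdeal = maximalIdeal A := by
    rintro ⟨p, hp⟩
    rw [Module.support_eq_zeroLocus] at hp
    exact (le_maximalIdeal p.2.ne_top).antisymm (hmem.2 ⟨p.2, hp⟩ (le_maximalIdeal p.2.ne_top))
  have : Subsingleton (Module.support A M) :=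
    ⟨fun p q => Subtype.ext (PrimeSpectrum.ext ((heq p).trans (heq q).symm))⟩
  exact h.not_ge Order.krullDim_nonpos_of_subsingleton

variable [IsNoetherianRing A]

theorem surjective_lsmul_localCohomology {v : A} {i : ℕ} (hM : Module.supportDim A M ≤ i)
    (hv : Module.supportDim A (QuotSMulTop v M) < i) :
    Function.Surjective (LinearMap.lsmul A (LocalCohomology (maximalIdeal A) i M) v) := by
  set g := LinearMap.lsmul A M v
  have : Subsingleton (LocalCohomology (maximalIdeal A) (i + 1) (LinearMap.ker g)) :=
    subsingleton_localCohomology_of_supportDim_lt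
      (((Module.supportDim_le_of_injective _ (LinearMap.ker g).injective_subtype).trans
        hM).trans_lt (by exact_mod_cast i.lt_succ_self))
  have : Subsingleton (LocalCohomology (maximalIdeal A) i (M ⧸ LinearMap.range g)) := by
    refine subsingleton_localCohomology_of_supportDim_lt ?_
    rwa [LinearMap.range_eq_map]
  rw [← localCohomologyMap_lsmul,
    show LinearMap.lsmul A M v = (LinearMap.range g).subtype ∘ₗ g.rangeRestrict from rfl,
    localCohomologyMap_comp]
  exact ((torsionExact_subtype_mkQ _ _).localCohomologyMap_left_surjective i).comp
    ((torsionExact_subtype_ker_rangeRestrict _ g).localCohomologyMap_right_surjective i)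

theorem exists_isSMulRegular_supportDim_quotSMulTop_lt [Module.Finite A M]
    (hM : powerTorsion (maximalIdeal A) M = ⊥) {v : A} {i : ℕ}
    (hv : Module.supportDim A (QuotSMulTop v M) = (i + 1 : ℕ)) :
    ∃ u ∈ maximalIdeal A, IsSMulRegular M u ∧
      Module.supportDim A (QuotSMulTop v (QuotSMulTop u M)) < (i + 1 : ℕ) := by
  have hpos : 0 < Module.supportDim A (QuotSMulTop v M) := by
    rw [hv]
    exact_mod_cast i.succ_pos
  obtain ⟨u, hu, hreg, hnotMem⟩ := exists_isSMulRegular_forall_notMem hM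
    (Ideal.finite_minimalPrimes_of_isNoetherianRing A (Module.annihilator A (QuotSMulTop v M)))
    (fun p hp => hp.1.1)
    (fun p hp h => maximalIdeal_notMem_minimalPrimes_annihilator hpos (h ▸ hp))
  refine ⟨u, hu, hreg, ?_⟩
  have hswap : Module.supportDim A (QuotSMulTop v (QuotSMulTop u M)) =
      Module.supportDim A (QuotSMulTop u (QuotSMulTop v M)) := by
    unfold Module.supportDim
    rw [Module.support_quotSMulTop, Module.support_quotSMulTop, Module.support_quotSMulTop,
      Module.support_quotSMulTop, Set.inter_right_comm]
  have hlt := Module.supportDim_quotSMulTop_succ_le_of_notMem_minimalPrimes hnotMem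
  rw [hv, Nat.cast_succ, ENat.WithBot.add_le_add_one_right_iff] at hlt
  rw [hswap]
  exact hlt.trans_lt (by exact_mod_cast i.lt_succ_self)

theorem nontrivial_localCohomology_zero [Module.Finite A M] (h : Module.supportDim A M = 0) :
    Nontrivial (LocalCohomology (maximalIdeal A) 0 M) := by
  have : Nontrivial M := by
    rw [← Module.supportDim_ne_bot_iff_nontrivial A, h]
    simp
  have hsupp := support_of_supportDim_eq_zero A M h
  rw [Module.support_eq_zeroLocus, PrimeSpectrum.zeroLocus_eq_iff] at hsupp
  obtain ⟨n, hn⟩ := (Module.annihilator A M).exists_pow_le_of_le_radical_of_fg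
    (I := maximalIdeal A) (hsupp ▸ Ideal.le_radical) (Ideal.fg_of_isNoetherianRing _)
  obtain ⟨m, hm⟩ := exists_ne (0 : M)
  have : Nontrivial (powerTorsion (maximalIdeal A) M) :=
    ⟨⟨⟨m, n, fun r hr => Module.mem_annihilator.1 (hn hr) m⟩, 0, fun h => hm congr($h)⟩⟩
  exact (localCohomologyZeroEquiv (maximalIdeal A) M).toEquiv.nontrivial

/-- If `H^{i+1}(M) = 0`, then `H^i(M) → H^i(M/uM)` is onto with kernel `u H^i(M)`. Take `v` with
`v H^i(M)` minimal, and then `u` for which `v` acts surjectively on `H^i(M/uM)`: this forces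
`H^i(M/uM) = v H^i(M/uM)` to be the image of `v H^i(M) = u v H^i(M)`, which is zero. -/
theorem exists_subsingleton_localCohomology_quotSMulTop [Module.Finite A M] {i : ℕ}
    (hM : powerTorsion (maximalIdeal A) M = ⊥) (hdim : Module.supportDim A M = (i + 1 : ℕ))
    [Subsingleton (LocalCohomology (maximalIdeal A) (i + 1) M)] :
    ∃ u ∈ maximalIdeal A, IsSMulRegular M u ∧
      Subsingleton (LocalCohomology (maximalIdeal A) i (QuotSMulTop u M)) := by
  have hdim_quot : ∀ u ∈ maximalIdeal A, IsSMulRegular M u →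
      Module.supportDim A (QuotSMulTop u M) = i := fun u hu hreg =>
    ENat.WithBot.add_one_cancel.1 <| by
      rw [Module.supportDim_quotSMulTop_succ_eq_supportDim hreg hu, hdim, Nat.cast_succ]
  obtain ⟨u₀, hu₀, hreg₀⟩ := exists_isSMulRegular_mem_maximalIdeal hM
  cases i with
  | zero =>
    have : Subsingleton (LocalCohomology (maximalIdeal A) 0 M) := by
      have : Subsingleton (powerTorsion (maximalIdeal A) M) := by rw [hM]; infer_instance
      exact (localCohomologyZeroEquiv (maximalIdeal A) M).toEquiv.subsingleton
    exact ⟨u₀, hu₀, hreg₀, ((torsionExact_lsmul_mkQ (maximalIdeal A)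
      hreg₀).localCohomologyMap_right_surjective 0).subsingleton⟩
  | succ i =>
    have := isArtinian_localCohomology (A := A) (i + 1) M
    obtain ⟨v, ⟨hv, hvreg⟩, hmin⟩ := exists_forall_mul_smul_top_eq
      (LocalCohomology (maximalIdeal A) (i + 1) M)
      (S := {u | u ∈ maximalIdeal A ∧ IsSMulRegular M u}) ⟨u₀, hu₀, hreg₀⟩
      fun u hu w hw => ⟨Ideal.mul_mem_left _ u hw.1, hu.2.mul hw.2⟩
    obtain ⟨u, hu, hureg, hlt⟩ :=
      exists_isSMulRegular_supportDim_quotSMulTop_lt hM (hdim_quot v hv hvreg)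
    have hexact := torsionExact_lsmul_mkQ (maximalIdeal A) hureg
    refine ⟨u, hu, hureg, subsingleton_of_forall_eq 0 fun y => ?_⟩
    obtain ⟨y, rfl⟩ := surjective_lsmul_localCohomology (hdim_quot u hu hureg).le hlt y
    obtain ⟨w, rfl⟩ := hexact.localCohomologyMap_right_surjective (i + 1) y
    obtain ⟨b, -, hb⟩ := (Submodule.mem_smul_pointwise_iff_exists _ _ _).1 <|
      (hmin u ⟨hu, hureg⟩).ge (Submodule.smul_mem_pointwise_smul w v ⊤ trivial)
    rw [LinearMap.lsmul_apply, ← map_smul, ← hb, mul_smul]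
    have hzero := (hexact.exact_localCohomologyMap (i + 1)).apply_apply_eq_zero (v • b)
    rwa [localCohomologyMap_lsmul] at hzero

theorem nontrivial_localCohomology_of_supportDim_eq {d : ℕ} (M : Type*) [AddCommGroup M]
    [Module A M] [Module.Finite A M] (h : Module.supportDim A M = d) :
    Nontrivial (LocalCohomology (maximalIdeal A) d M) := by
  induction d generalizing M with
  | zero => exact nontrivial_localCohomology_zero (by exact_mod_cast h)
  | succ d ih =>
    set Γ := powerTorsion (maximalIdeal A) M
    have hdim : Module.supportDim A (M ⧸ Γ) = (d + 1 : ℕ) := by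
      rw [supportDim_quotient_powerTorsion (h ▸ by exact_mod_cast d.succ_pos), h]
    suffices Nontrivial (LocalCohomology (maximalIdeal A) (d + 1) (M ⧸ Γ)) from
      (Equiv.ofBijective _ (localCohomologyMap_mkQ_powerTorsion_bijective _ M d)).nontrivial
    by_contra hs
    rw [not_nontrivial_iff_subsingleton] at hs
    obtain ⟨u, hu, hreg, hsub⟩ := exists_subsingleton_localCohomology_quotSMulTop
      (powerTorsion_quotient_powerTorsion M (maximalIdeal A).fg_of_isNoetherianRing) hdim
    have hdim_quot : Module.supportDim A (QuotSMulTop u (M ⧸ Γ)) = d :=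
      ENat.WithBot.add_one_cancel.1 <| by
        rw [Module.supportDim_quotSMulTop_succ_eq_supportDim hreg hu, hdim, Nat.cast_succ]
    have := ih _ hdim_quot
    exact not_subsingleton _ hsub

end Nonvanishing

/-! ### Splitting local cohomology along a decomposition of the support -/

section Splitting

variable {A : Type*} [CommRing A] {I J F : Ideal A} {D : Type*} [AddCommGroup D] [Module A D]

theorem IsPowerTorsion.of_le_radical (h : IsPowerTorsion F D) (hIF : I ≤ F.radical)
    (hI : I.FG) : IsPowerTorsion I D := fun x => by
  obtain ⟨k, hk⟩ := h x
  obtain ⟨n, hn⟩ := Ideal.exists_pow_le_of_le_radical_of_fg hIF hI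
  exact ⟨n * k, fun r hr => hk r (Ideal.pow_right_mono hn k (by rwa [← pow_mul]))⟩

theorem IsPowerTorsion.exists_pow_smul_mem_powerTorsion (h : IsPowerTorsion (I * J) D) (x : D) :
    ∃ n : ℕ, ∀ r ∈ I ^ n, r • x ∈ powerTorsion J D := by
  obtain ⟨n, hn⟩ := h x
  refine ⟨n, fun r hr => ⟨n, fun s hs => ?_⟩⟩
  rw [← mul_smul]
  exact hn _ (by rw [mul_pow, mul_comm s]; exact Ideal.mul_mem_mul hr hs)

variable (I J D) in
/-- The sum map `Γ_I(D) × Γ_J(D) → D`. -/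
def powerTorsionCoprod : powerTorsion I D × powerTorsion J D →ₗ[A] D :=
  (powerTorsion I D).subtype.coprod (powerTorsion J D).subtype

variable (I J D) in
theorem isPowerTorsion_ker_powerTorsionCoprod :
    IsPowerTorsion (I ⊔ J) (LinearMap.ker (powerTorsionCoprod I J D)) := by
  have hadd : ∀ z : LinearMap.ker (powerTorsionCoprod I J D), (z.1.1 : D) + z.1.2 = 0 :=
    fun z => z.2
  refine IsPowerTorsion.sup
    ((isPowerTorsion_powerTorsion I D).of_injective
      (f := LinearMap.fst A _ _ ∘ₗ Submodule.subtype _) ?_)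
    ((isPowerTorsion_powerTorsion J D).of_injective
      (f := LinearMap.snd A _ _ ∘ₗ Submodule.subtype _) ?_)
  · refine (injective_iff_map_eq_zero _).2 fun z hz => ?_
    have h1 : z.1.1 = 0 := hz
    have h2 : z.1.2 = 0 := Subtype.ext (by simpa [h1] using hadd z)
    exact Subtype.ext (Prod.ext h1 h2)
  · refine (injective_iff_map_eq_zero _).2 fun z hz => ?_
    have h2 : z.1.2 = 0 := hz
    have h1 : z.1.1 = 0 := Subtype.ext (by simpa [h2] using hadd z)
    exact Subtype.ext (Prod.ext h1 h2)

theorem IsPowerTorsion.quotient_of_powerTorsion_le (h : IsPowerTorsion (I * J) D)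
    {N : Submodule A D} (hN : powerTorsion J D ≤ N) : IsPowerTorsion I (D ⧸ N) := by
  intro q
  obtain ⟨x, rfl⟩ := N.mkQ_surjective q
  obtain ⟨n, hn⟩ := h.exists_pow_smul_mem_powerTorsion x
  refine ⟨n, fun r hr => ?_⟩
  rw [← map_smul]
  exact (Submodule.Quotient.mk_eq_zero N).2 (hN (hn r hr))

theorem IsPowerTorsion.quotient_range_powerTorsionCoprod (h : IsPowerTorsion (I * J) D) :
    IsPowerTorsion (I ⊔ J) (D ⧸ LinearMap.range (powerTorsionCoprod I J D)) :=
  IsPowerTorsion.sup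
    (h.quotient_of_powerTorsion_le fun x hx => ⟨(0, ⟨x, hx⟩), by simp [powerTorsionCoprod]⟩)
    ((mul_comm I J ▸ h).quotient_of_powerTorsion_le
      fun x hx => ⟨(⟨x, hx⟩, 0), by simp [powerTorsionCoprod]⟩)

theorem IsPowerTorsion.quotient_range_lsmul_powerTorsion (h : IsPowerTorsion (I * J) D) {f : A}
    (hf : Function.Surjective (LinearMap.lsmul A D f)) :
    IsPowerTorsion (I ⊔ J)
      (powerTorsion J D ⧸ LinearMap.range (LinearMap.lsmul A (powerTorsion J D) f)) := by
  refine IsPowerTorsion.sup (fun q => ?_)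
    ((isPowerTorsion_powerTorsion J D).of_surjective (Submodule.mkQ_surjective _))
  obtain ⟨y, rfl⟩ := Submodule.mkQ_surjective _ q
  obtain ⟨z, hz⟩ := hf y
  obtain ⟨n, hn⟩ := h.exists_pow_smul_mem_powerTorsion z
  refine ⟨n, fun r hr => ?_⟩
  rw [← map_smul]
  refine (Submodule.Quotient.mk_eq_zero _).2 ⟨⟨_, hn r hr⟩, Subtype.ext ?_⟩
  exact (smul_comm f r z).trans (congrArg (r • ·) hz)

variable (I) in
theorem annihilator_le_annihilator_localCohomology (i : ℕ) :
    Module.annihilator A D ≤ Module.annihilator A (LocalCohomology I i D) := by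
  intro r hr
  have hzero : LinearMap.lsmul A D r = (0 : A) • 0 := by
    rw [zero_smul]
    exact LinearMap.ext (Module.mem_annihilator.1 hr)
  refine Module.mem_annihilator.2 fun z => ?_
  rw [← LinearMap.lsmul_apply, ← localCohomologyMap_lsmul, hzero, localCohomologyMap_smul,
    zero_smul, LinearMap.zero_apply]

variable [IsNoetherianRing A]

theorem exists_pow_le_annihilator_ker_lsmul_powerTorsion {f : A}
    [Module.Finite A (LinearMap.ker (LinearMap.lsmul A D f))] :
    ∃ n : ℕ, J ^ n ≤
      Module.annihilator A (LinearMap.ker (LinearMap.lsmul A (powerTorsion J D) f)) := by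
  set g := LinearMap.lsmul A (powerTorsion J D) f
  let ι : LinearMap.ker g →ₗ[A] LinearMap.ker (LinearMap.lsmul A D f) :=
    (powerTorsion J D).subtype.restrict fun _ hx => congrArg Subtype.val (LinearMap.mem_ker.1 hx)
  have hι : Function.Injective ι := fun x y hxy =>
    Subtype.ext (Subtype.ext (congrArg (fun t => t.1) hxy))
  have := Module.Finite.of_injective ι hι
  exact ((isPowerTorsion_powerTorsion J D).of_injective
    (LinearMap.ker g).injective_subtype).exists_pow_le_annihilator

variable [IsLocalRing A] {M N : Type*} [AddCommGroup M] [Module A M] [AddCommGroup N] [Module A N]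

theorem localCohomologyMap_bijective_of_supportDim_lt {a : M →ₗ[A] N} {e : ℕ}
    (hker : Module.supportDim A (LinearMap.ker a) < e)
    (hcoker : Module.supportDim A (N ⧸ LinearMap.range a) < e) :
    Function.Bijective (localCohomologyMap (maximalIdeal A) (e + 1) a) := by
  have hlt {x : WithBot ℕ∞} (k : ℕ) (hx : x < e) : x < (e + k : ℕ) :=
    hx.trans_le (by exact_mod_cast e.le_add_right k)
  have := subsingleton_localCohomology_of_supportDim_lt (hlt 1 hker)
  have := subsingleton_localCohomology_of_supportDim_lt (hlt 2 hker)
  have := subsingleton_localCohomology_of_supportDim_lt hcoker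
  have := subsingleton_localCohomology_of_supportDim_lt (hlt 1 hcoker)
  have hleft := torsionExact_subtype_mkQ (maximalIdeal A) (LinearMap.range a)
  have hright := torsionExact_subtype_ker_rangeRestrict (maximalIdeal A) a
  rw [show a = (LinearMap.range a).subtype ∘ₗ a.rangeRestrict from rfl, localCohomologyMap_comp,
    LinearMap.coe_comp]
  exact Function.Bijective.comp
    ⟨hleft.localCohomologyMap_left_injective e, hleft.localCohomologyMap_left_surjective (e + 1)⟩
    ⟨hright.localCohomologyMap_right_injective (e + 1),
      hright.localCohomologyMap_right_surjective (e + 1)⟩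

variable {e : ℕ}

theorem IsPowerTorsion.localCohomologyMap_powerTorsionCoprod_bijective
    (h : IsPowerTorsion (I * J) D) (hIJ : ringKrullDim (A ⧸ (I ⊔ J)) < e) :
    Function.Bijective
      (localCohomologyMap (maximalIdeal A) (e + 1) (powerTorsionCoprod I J D)) :=
  localCohomologyMap_bijective_of_supportDim_lt
    ((isPowerTorsion_ker_powerTorsionCoprod I J D).supportDim_le.trans_lt hIJ)
    (h.quotient_range_powerTorsionCoprod.supportDim_le.trans_lt hIJ)

theorem IsPowerTorsion.exists_leftInverse_localCohomologyMap_subtype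
    (h : IsPowerTorsion (I * J) D) (hIJ : ringKrullDim (A ⧸ (I ⊔ J)) < e) :
    ∃ p, p ∘ₗ localCohomologyMap (maximalIdeal A) (e + 1) (powerTorsion J D).subtype =
      LinearMap.id := by
  let E := LinearEquiv.ofBijective _ (h.localCohomologyMap_powerTorsionCoprod_bijective hIJ)
  refine ⟨localCohomologyMap _ (e + 1) (LinearMap.snd A (powerTorsion I D) (powerTorsion J D)) ∘ₗ
    E.symm.toLinearMap, LinearMap.ext fun z => ?_⟩
  have hz : localCohomologyMap (maximalIdeal A) (e + 1) (powerTorsion J D).subtype z =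
      E (localCohomologyMap _ (e + 1) (LinearMap.inr A (powerTorsion I D) _) z) := by
    rw [LinearEquiv.ofBijective_apply, ← LinearMap.comp_apply, ← localCohomologyMap_comp,
      powerTorsionCoprod, LinearMap.coprod_inr]
  rw [LinearMap.comp_apply, hz, LinearMap.comp_apply, LinearEquiv.coe_coe,
    LinearEquiv.symm_apply_apply, ← LinearMap.comp_apply, ← localCohomologyMap_comp,
    LinearMap.snd_comp_inr, localCohomologyMap_id]

theorem IsPowerTorsion.nontrivial_localCohomology_powerTorsion_or
    (h : IsPowerTorsion (I * J) D) (hIJ : ringKrullDim (A ⧸ (I ⊔ J)) < e)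
    [Nontrivial (LocalCohomology (maximalIdeal A) (e + 1) D)] :
    Nontrivial (LocalCohomology (maximalIdeal A) (e + 1) (powerTorsion I D)) ∨
      Nontrivial (LocalCohomology (maximalIdeal A) (e + 1) (powerTorsion J D)) := by
  by_contra! hsub
  obtain ⟨_, _⟩ := hsub
  obtain ⟨z, hz⟩ := exists_ne (0 : LocalCohomology (maximalIdeal A) (e + 1) D)
  obtain ⟨y, rfl⟩ := (h.localCohomologyMap_powerTorsionCoprod_bijective hIJ).2 z
  refine hz ?_
  rw [powerTorsionCoprod, LinearMap.coprod, localCohomologyMap_add, localCohomologyMap_comp,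
    localCohomologyMap_comp, LinearMap.add_apply, LinearMap.comp_apply, LinearMap.comp_apply,
    Subsingleton.elim (localCohomologyMap _ (e + 1) (LinearMap.fst A _ _) y) 0,
    Subsingleton.elim (localCohomologyMap _ (e + 1) (LinearMap.snd A _ _) y) 0,
    map_zero, map_zero, add_zero]

theorem IsPowerTorsion.exists_pow_le_annihilator_ker_lsmul_localCohomology
    (h : IsPowerTorsion (I * J) D) (hIJ : ringKrullDim (A ⧸ (I ⊔ J)) < e) {f : A}
    (hf : Function.Surjective (LinearMap.lsmul A D f))
    [Module.Finite A (LinearMap.ker (LinearMap.lsmul A D f))] :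
    ∃ n : ℕ, J ^ n ≤ Module.annihilator A (LinearMap.ker (LinearMap.lsmul A
      (LocalCohomology (maximalIdeal A) (e + 1) (powerTorsion J D)) f)) := by
  obtain ⟨n, hn⟩ := exists_pow_le_annihilator_ker_lsmul_powerTorsion (J := J) (D := D) (f := f)
  set g := LinearMap.lsmul A (powerTorsion J D) f with hg
  have := subsingleton_localCohomology_of_supportDim_lt
    ((h.quotient_range_lsmul_powerTorsion hf).supportDim_le.trans_lt hIJ)
  have hinj := (torsionExact_subtype_mkQ (maximalIdeal A)
    (LinearMap.range g)).localCohomologyMap_left_injective e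
  refine ⟨n, fun r hr => Module.mem_annihilator.2 fun z => Subtype.ext ?_⟩
  have hz : localCohomologyMap (maximalIdeal A) (e + 1) g.rangeRestrict z.1 = 0 := by
    refine hinj ?_
    rw [map_zero, ← LinearMap.comp_apply, ← localCohomologyMap_comp]
    change localCohomologyMap (maximalIdeal A) (e + 1) g z.1 = 0
    rw [hg, localCohomologyMap_lsmul]
    exact z.2
  obtain ⟨w, hw⟩ := ((torsionExact_subtype_ker_rangeRestrict (maximalIdeal A)
    g).exact_localCohomologyMap (e + 1) z.1).1 hz
  rw [Submodule.coe_smul, ← hw, ← map_smul, Module.mem_annihilator.1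
    (annihilator_le_annihilator_localCohomology _ (e + 1) (hn hr)), map_zero, Submodule.coe_zero]

end Splitting

/-! ### Faithful modules with finite endomorphism ring -/

section Endomorphisms

variable {A : Type*} [CommRing A] {K H : Type*} [AddCommGroup K] [Module A K]
  [AddCommGroup H] [Module A H]

theorem annihilator_eq_bot_of_surjective_lsmul [Nontrivial K]
    (h : ∀ a : A, a ≠ 0 → Function.Surjective (LinearMap.lsmul A K a)) :
    Module.annihilator A K = ⊥ := by
  refine (Submodule.eq_bot_iff _).2 fun a ha => by_contra fun hne => ?_
  obtain ⟨z, hz⟩ := exists_ne (0 : K)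
  obtain ⟨w, rfl⟩ := h a hne z
  exact hz (Module.mem_annihilator.1 ha w)

theorem surjective_lsmul_of_surjective {p : H →ₗ[A] K} (hp : Function.Surjective p) {a : A}
    (ha : Function.Surjective (LinearMap.lsmul A H a)) :
    Function.Surjective (LinearMap.lsmul A K a) := fun z => by
  obtain ⟨y, rfl⟩ := hp z
  obtain ⟨w, rfl⟩ := ha y
  exact ⟨p w, (map_smul p a w).symm⟩

theorem finite_end_of_leftInverse [IsNoetherianRing A] [Module.Finite A (H →ₗ[A] H)]
    {s : K →ₗ[A] H} {p : H →ₗ[A] K} (hps : p ∘ₗ s = LinearMap.id) :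
    Module.Finite A (K →ₗ[A] K) := by
  have hps' : ∀ z, p (s z) = z := LinearMap.congr_fun hps
  refine Module.Finite.of_injective (LinearMap.lcomp A H p ∘ₗ LinearMap.compRight A s)
    fun φ ψ h => LinearMap.ext fun z => ?_
  have hz : s (φ (p (s z))) = s (ψ (p (s z))) := LinearMap.congr_fun h (s z)
  rw [hps'] at hz
  rw [← hps' (φ z), hz, hps']

theorem le_radical_span_singleton_of_pow_le_annihilator_ker [Module.Finite A (K →ₗ[A] K)]
    (hK : Module.annihilator A K = ⊥) {f : A}
    (hf : Function.Surjective (LinearMap.lsmul A K f)) {J : Ideal A} {n : ℕ}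
    (hJ : J ^ n ≤ Module.annihilator A (LinearMap.ker (LinearMap.lsmul A K f))) :
    J ≤ (Ideal.span {f}).radical := by
  have hEnd : Module.annihilator A (K →ₗ[A] K) = ⊥ := by
    rw [eq_bot_iff, ← hK]
    exact fun a ha => Module.mem_annihilator.2
      (LinearMap.congr_fun (Module.mem_annihilator.1 ha LinearMap.id))
  have hquot : J ^ n ≤ Module.annihilator A (QuotSMulTop f (K →ₗ[A] K)) := by
    refine fun a ha => Module.mem_annihilator.2 fun q => ?_
    obtain ⟨φ, rfl⟩ := Submodule.mkQ_surjective _ q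
    rw [← map_smul]
    refine (Submodule.Quotient.mk_eq_zero _).2 (mem_smul_top_of_ker_lsmul_le hf fun z hz => ?_)
    have haz : a • z = 0 := congrArg Subtype.val (Module.mem_annihilator.1 (hJ ha) ⟨z, hz⟩)
    rw [LinearMap.mem_ker, LinearMap.smul_apply, ← map_smul, haz, map_zero]
  rw [Ideal.radical_eq_sInf]
  refine le_sInf fun p hp => ?_
  have hmem : (⟨p, hp.2⟩ : PrimeSpectrum A) ∈ Module.support A (QuotSMulTop f (K →ₗ[A] K)) := by
    rw [Module.support_quotSMulTop, Module.support_eq_zeroLocus, hEnd]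
    exact ⟨SetLike.coe_subset_coe.2 bot_le,
      Set.singleton_subset_iff.2 (hp.1 (Ideal.mem_span_singleton_self f))⟩
  exact hp.2.le_of_pow_le (hquot.trans (Module.annihilator_le_of_mem_support hmem))

variable [IsNoetherianRing A] [IsLocalRing A] {D : Type*} [AddCommGroup D] [Module A D]

theorem IsPowerTorsion.le_radical_of_nontrivial_localCohomology_powerTorsion {I J : Ideal A}
    {e : ℕ} (h : IsPowerTorsion (I * J) D) (hIJ : ringKrullDim (A ⧸ (I ⊔ J)) < e) {f : A}
    (hf : f ≠ 0) (hfD : Function.Surjective (LinearMap.lsmul A D f))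
    [Module.Finite A (LinearMap.ker (LinearMap.lsmul A D f))]
    (hdiv : ∀ a : A, a ≠ 0 →
      Function.Surjective (LinearMap.lsmul A (LocalCohomology (maximalIdeal A) (e + 1) D) a))
    [Module.Finite A (LocalCohomology (maximalIdeal A) (e + 1) D →ₗ[A]
      LocalCohomology (maximalIdeal A) (e + 1) D)]
    [Nontrivial (LocalCohomology (maximalIdeal A) (e + 1) (powerTorsion J D))] :
    J ≤ (Ideal.span {f}).radical := by
  obtain ⟨n, hn⟩ := h.exists_pow_le_annihilator_ker_lsmul_localCohomology hIJ hfD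
  obtain ⟨p, hp⟩ := h.exists_leftInverse_localCohomologyMap_subtype hIJ
  have hp_surj : Function.Surjective p := fun z => ⟨_, LinearMap.congr_fun hp z⟩
  have hdivJ a (ha : a ≠ 0) := surjective_lsmul_of_surjective hp_surj (hdiv a ha)
  have := finite_end_of_leftInverse
    (K := LocalCohomology (maximalIdeal A) (e + 1) (powerTorsion J D))
    (H := LocalCohomology (maximalIdeal A) (e + 1) D) hp
  exact le_radical_span_singleton_of_pow_le_annihilator_ker
    (annihilator_eq_bot_of_surjective_lsmul hdivJ) (hdivJ f hf) hn

end Endomorphisms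

/-! ### The module `A_f / A` -/

section AwayQuotient

variable {A : Type*} [CommRing A] {I : Ideal A}

theorem bijective_lsmul_away (f : A) :
    Function.Bijective (LinearMap.lsmul A (Localization.Away f) f) := by
  have hunit : IsUnit (algebraMap A (Localization.Away f) f) :=
    IsLocalization.Away.algebraMap_isUnit f
  have heq : ⇑(LinearMap.lsmul A (Localization.Away f) f) = (algebraMap A _ f * ·) :=
    funext (Algebra.smul_def f)
  rw [heq]
  exact IsUnit.isUnit_iff_mulLeft_bijective.1 hunit

/-- The module `A_f / A`; its local cohomology is that of `A` shifted by one degree. -/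
abbrev AwayQuotient (f : A) : Type _ :=
  Localization.Away f ⧸ LinearMap.range (Algebra.linearMap A (Localization.Away f))

theorem isPowerTorsion_awayQuotient (f : A) : IsPowerTorsion (Ideal.span {f}) (AwayQuotient f) := by
  intro q
  obtain ⟨x, rfl⟩ := Submodule.mkQ_surjective _ q
  obtain ⟨n, a, ha⟩ := IsLocalization.Away.surj f x
  refine ⟨n, fun r hr => ?_⟩
  rw [Ideal.span_singleton_pow, Ideal.mem_span_singleton'] at hr
  obtain ⟨c, rfl⟩ := hr
  rw [← map_smul]
  refine (Submodule.Quotient.mk_eq_zero _).2 ⟨c * a, ?_⟩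
  rw [Algebra.linearMap_apply, map_mul, ← ha, Algebra.smul_def, map_mul, map_pow]
  ring

theorem surjective_lsmul_awayQuotient (f : A) :
    Function.Surjective (LinearMap.lsmul A (AwayQuotient f) f) :=
  surjective_lsmul_of_surjective (Submodule.mkQ_surjective _) (bijective_lsmul_away f).2

theorem finite_ker_lsmul_awayQuotient (f : A) :
    Module.Finite A (LinearMap.ker (LinearMap.lsmul A (AwayQuotient f) f)) := by
  obtain ⟨b, hb⟩ := (bijective_lsmul_away f).2 1
  refine Module.Finite.iff_fg.2 ⟨{Submodule.mkQ _ b}, ?_⟩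
  rw [Finset.coe_singleton]
  refine le_antisymm ?_ fun q hq => ?_
  · rw [Submodule.span_singleton_le_iff_mem, LinearMap.mem_ker, LinearMap.lsmul_apply, ← map_smul]
    exact (Submodule.Quotient.mk_eq_zero _).2 ⟨1, by simpa using hb.symm⟩
  · obtain ⟨x, rfl⟩ := Submodule.mkQ_surjective _ q
    rw [LinearMap.mem_ker, LinearMap.lsmul_apply, ← map_smul] at hq
    obtain ⟨a, ha⟩ := (Submodule.Quotient.mk_eq_zero _).1 hq
    refine Submodule.mem_span_singleton.2 ⟨a, ?_⟩
    rw [← map_smul]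
    congr 1
    refine (bijective_lsmul_away f).1 ?_
    rw [map_smul, hb, LinearMap.lsmul_apply, ← ha, Algebra.linearMap_apply,
      Algebra.algebraMap_eq_smul_one]

theorem subsingleton_localCohomology_of_bijective_lsmul {M : Type*} [AddCommGroup M] [Module A M]
    {f : A} (hf : f ∈ I) (hb : Function.Bijective (LinearMap.lsmul A M f)) (i : ℕ) :
    Subsingleton (LocalCohomology I i M) := by
  let E := LinearEquiv.ofBijective _ hb
  have hinj : Function.Injective (LinearMap.lsmul A (LocalCohomology I i M) f) := by
    refine Function.LeftInverse.injective (g := localCohomologyMap I i E.symm.toLinearMap)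
      fun z => ?_
    rw [← localCohomologyMap_lsmul, ← LinearMap.comp_apply, ← localCohomologyMap_comp,
      show LinearMap.lsmul A M f = E.toLinearMap from rfl, LinearEquiv.symm_comp,
      localCohomologyMap_id, LinearMap.id_apply]
  have hinj_pow (n : ℕ) : IsSMulRegular (LocalCohomology I i M) (f ^ n) :=
    IsSMulRegular.pow n hinj
  refine subsingleton_of_forall_eq 0 fun z => ?_
  obtain ⟨n, hn⟩ := (isPowerTorsion_localCohomology I i M).exists_pow_smul_eq_zero hf z
  exact hinj_pow n (hn.trans (smul_zero _).symm)

variable [IsNoetherianRing A]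

/-- The connecting isomorphism `H^i_I(A_f / A) ≃ H^{i+1}_I(A)`. -/
noncomputable def localCohomologyAwayQuotientEquiv {f : A} (hfI : f ∈ I)
    (hf : f ∈ nonZeroDivisors A) (i : ℕ) :
    LocalCohomology I i (AwayQuotient f) ≃ₗ[A] LocalCohomology I (i + 1) A := by
  have hexact : TorsionExact I (Algebra.linearMap A (Localization.Away f))
      (LinearMap.range (Algebra.linearMap A (Localization.Away f))).mkQ :=
    torsionExact_of_injective I
      (IsLocalization.injective _ (Submonoid.powers_le.2 hf))
      (LinearMap.exact_map_mkQ_range _) (Submodule.mkQ_surjective _)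
  have hsub := subsingleton_localCohomology_of_bijective_lsmul hfI (bijective_lsmul_away f)
  have := hsub i
  have := hsub (i + 1)
  exact LinearEquiv.ofBijective (hexact.δ i) ⟨hexact.δ_injective i, hexact.δ_surjective i⟩

end AwayQuotient

/-! ### Dimension of quotient rings -/

section Dimension

variable {A : Type*} [CommRing A]

theorem ringKrullDim_quotient_le_of_le_radical {I J : Ideal A} (h : I ≤ J.radical) :
    ringKrullDim (A ⧸ J) ≤ ringKrullDim (A ⧸ I) := by
  rw [ringKrullDim_quotient, ringKrullDim_quotient]
  exact Order.krullDim_le_of_strictMono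
    (fun p => ⟨p.1, h.trans (p.1.2.radical_le_iff.2 p.2)⟩) fun {_ _} hlt => hlt

theorem ringKrullDim_quotient_sup_add_one_le {P J : Ideal A} (hP : P.IsPrime) (hJ : ¬ J ≤ P) :
    ringKrullDim (A ⧸ (P ⊔ J)) + 1 ≤ ringKrullDim (A ⧸ P) := by
  obtain ⟨x, hxJ, hxP⟩ := SetLike.not_le_iff_exists.1 hJ
  have hx : Ideal.Quotient.mk P x ∈ nonZeroDivisors (A ⧸ P) :=
    mem_nonZeroDivisors_of_ne_zero (mt Ideal.Quotient.eq_zero_iff_mem.1 hxP)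
  have hle : Ideal.span {Ideal.Quotient.mk P x} ≤ J.map (Ideal.Quotient.mk P) :=
    (Ideal.span_singleton_le_iff_mem _).2 (Ideal.mem_map_of_mem _ hxJ)
  rw [← RingEquiv.ringKrullDim (DoubleQuot.quotQuotEquivQuotSup P J)]
  calc ringKrullDim ((A ⧸ P) ⧸ J.map (Ideal.Quotient.mk P)) + 1
      ≤ ringKrullDim ((A ⧸ P) ⧸ Ideal.span {Ideal.Quotient.mk P x}) + 1 := by
        gcongr
        exact ringKrullDim_quotient_le_of_le_radical (hle.trans Ideal.le_radical)
    _ ≤ ringKrullDim (A ⧸ P) := ringKrullDim_quotient_succ_le_of_nonZeroDivisor hx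

theorem ringKrullDim_le_ringKrullDim_quotient_span_range_add [IsNoetherianRing A] {n : ℕ}
    {f : Fin n → A} (hf : ∀ i, f i ∈ Ring.jacobson A) :
    ringKrullDim A ≤ ringKrullDim (A ⧸ Ideal.span (Set.range f)) + n := by
  refine (ringKrullDim_le_ringKrullDim_quotient_add_encard _ (Set.range_subset_iff.2 hf)).trans ?_
  gcongr
  rw [← Set.image_univ]
  exact_mod_cast (Set.encard_image_le f _).trans (by simp)

theorem ringKrullDim_quotient_le_ringKrullDim_quotient_sup_span_range_add [IsNoetherianRing A]
    (K : Ideal A) {n : ℕ} {f : Fin n → A} (hf : ∀ i, f i ∈ Ring.jacobson A) :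
    ringKrullDim (A ⧸ K) ≤ ringKrullDim (A ⧸ (K ⊔ Ideal.span (Set.range f))) + n := by
  have hjac (i : Fin n) : (Ideal.Quotient.mk K ∘ f) i ∈ Ring.jacobson (A ⧸ K) :=
    Ring.map_jacobson_le (Ideal.Quotient.mk K) (Submodule.mem_map_of_mem (hf i))
  rw [← RingEquiv.ringKrullDim (DoubleQuot.quotQuotEquivQuotSup K _), Ideal.map_span,
    ← Set.range_comp]
  exact ringKrullDim_le_ringKrullDim_quotient_span_range_add hjac

theorem natCast_lt_ringKrullDim_quotient_span_range [IsNoetherianRing A] {e n : ℕ}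
    {f : Fin n → A} (hf : ∀ i, f i ∈ Ring.jacobson A) (h : (e + n + 1 : ℕ) ≤ ringKrullDim A) :
    e < ringKrullDim (A ⧸ Ideal.span (Set.range f)) := by
  rw [← ENat.WithBot.add_one_le_iff, ← ENat.WithBot.add_le_add_natCast_right_iff (c := n)]
  refine le_trans (le_of_eq ?_) (h.trans (ringKrullDim_le_ringKrullDim_quotient_span_range_add hf))
  rw [add_right_comm, Nat.cast_add, Nat.cast_add, Nat.cast_one]

end Dimension

/-! ### Radicals and minimal primes -/

section MinimalPrimes

variable {A : Type*} [CommRing A] {F : Ideal A} {S : Set (Ideal A)}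

theorem radical_sup_le_radical_sup {K E : Ideal A} (h : K ≤ F.radical) :
    (K ⊔ E).radical ≤ (F ⊔ E).radical :=
  Ideal.radical_le_radical_iff.2
    (sup_le (h.trans (Ideal.radical_mono le_sup_left)) (le_sup_right.trans Ideal.le_radical))

theorem exists_le_of_sInf_le {P : Ideal A} (hS : S.Finite) (hP : P.IsPrime) (h : sInf S ≤ P) :
    ∃ Q ∈ S, Q ≤ P := by
  rw [← hS.coe_toFinset, ← Finset.inf_id_eq_sInf, hP.inf_le'] at h
  simpa using h

theorem mem_of_sInf_le_of_mem_minimalPrimes {P : Ideal A} (hS : S.Finite)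
    (hSF : S ⊆ F.minimalPrimes) (hP : P ∈ F.minimalPrimes) (h : sInf S ≤ P) : P ∈ S := by
  obtain ⟨Q, hQ, hQP⟩ := exists_le_of_sInf_le hS hP.1.1 h
  rwa [← le_antisymm hQP (hP.2 (hSF hQ).1 hQP)]

theorem le_radical_sInf_sup {I E : Ideal A} (hS : S.Finite)
    (h : ∀ P ∈ S, I ≤ (P ⊔ E).radical) : I ≤ (sInf S ⊔ E).radical := by
  rw [Ideal.radical_eq_sInf]
  rintro x hx
  refine Submodule.mem_sInf.2 fun p hp => ?_
  obtain ⟨P, hP, hPp⟩ := exists_le_of_sInf_le hS hp.2 (le_sup_left.trans hp.1)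
  exact hp.2.radical_le_iff.2 (sup_le hPp (le_sup_right.trans hp.1)) (h P hP hx)

variable (F S) in
theorem sInf_mul_sInf_minimalPrimes_diff_le_radical :
    sInf S * sInf (F.minimalPrimes \ S) ≤ F.radical := by
  rw [← Ideal.sInf_minimalPrimes]
  refine le_sInf fun P hP => ?_
  by_cases hPS : P ∈ S
  · exact Ideal.mul_le_left.trans (sInf_le hPS)
  · exact Ideal.mul_le_right.trans (sInf_le ⟨hP, hPS⟩)

end MinimalPrimes

/-! ### Connectedness in dimension `e` -/

section IsConnectedInDim

variable {A : Type*} [CommRing A] {F G : Ideal A} {e : ℕ}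

/-- The closed subset `V(F)` of `Spec A` is not disconnected by removing a closed subset of
dimension less than `e`: whenever `V(F) ⊆ V(I) ∪ V(J)` with `dim (V(I) ∩ V(J)) < e`, already
one of `V(I)`, `V(J)` contains `V(F)`. -/
def IsConnectedInDim (F : Ideal A) (e : ℕ) : Prop :=
  ∀ I J : Ideal A, I * J ≤ F.radical → ringKrullDim (A ⧸ (I ⊔ J)) < e →
    I ≤ F.radical ∨ J ≤ F.radical

theorem isConnectedInDim_of_isPrime (hF : F.IsPrime) (e : ℕ) : IsConnectedInDim F e :=
  fun I J hIJ _ => by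
    rw [hF.radical] at hIJ ⊢
    exact hF.mul_le.1 hIJ

theorem IsConnectedInDim.mono {e' : ℕ} (h : IsConnectedInDim F e') (he : e ≤ e') :
    IsConnectedInDim F e :=
  fun I J hIJ hdim => h I J hIJ (hdim.trans_le (by exact_mod_cast he))

theorem IsConnectedInDim.of_map_quotientMk {P : Ideal A}
    (h : IsConnectedInDim (F.map (Ideal.Quotient.mk P)) e) : IsConnectedInDim (P ⊔ F) e := by
  set π := Ideal.Quotient.mk P
  have hπ : Function.Surjective π := Ideal.Quotient.mk_surjective
  have hrad : (P ⊔ F).radical = (F.map π).radical.comap π := by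
    rw [Ideal.comap_radical, Ideal.comap_map_of_surjective' π hπ, Ideal.mk_ker, sup_comm]
  intro I J hIJ hdim
  rw [hrad] at hIJ ⊢
  rw [← Ideal.map_le_iff_le_comap, Ideal.map_mul] at hIJ
  rw [← Ideal.map_le_iff_le_comap, ← Ideal.map_le_iff_le_comap]
  refine h _ _ hIJ (lt_of_le_of_lt ?_ hdim)
  rw [← Ideal.map_sup]
  exact ringKrullDim_le_of_surjective (Ideal.quotientMap _ π Ideal.le_comap_map)
    (Ideal.quotientMap_surjective hπ)

theorem IsConnectedInDim.bot_quotient (h : IsConnectedInDim F e) :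
    IsConnectedInDim (⊥ : Ideal (A ⧸ F)) e := by
  set π := Ideal.Quotient.mk F
  have hπ : Function.Surjective π := Ideal.Quotient.mk_surjective
  have hrad : F.radical = (⊥ : Ideal (A ⧸ F)).radical.comap π := by
    rw [Ideal.comap_radical, ← RingHom.ker_eq_comap_bot, Ideal.mk_ker]
  have hle (K : Ideal (A ⧸ F)) : K ≤ (⊥ : Ideal (A ⧸ F)).radical ↔ K.comap π ≤ F.radical := by
    rw [hrad, Ideal.comap_le_comap_iff_of_surjective π hπ]
  intro I J hIJ hdim
  rw [hle, hle]
  refine h _ _ ?_ (lt_of_le_of_lt ?_ hdim)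
  · rw [hrad, ← Ideal.map_le_iff_le_comap, Ideal.map_mul, Ideal.map_comap_of_surjective π hπ,
      Ideal.map_comap_of_surjective π hπ]
    exact hIJ
  · have hF : F ≤ I.comap π ⊔ J.comap π :=
      F.mk_ker.ge.trans ((Ideal.comap_mono bot_le).trans le_sup_left)
    rw [← RingEquiv.ringKrullDim (DoubleQuot.quotQuotEquivQuotOfLE hF),
      Ideal.map_sup_comap_of_surjective π hπ]

variable [IsNoetherianRing A]

theorem IsConnectedInDim.lt_ringKrullDim_quotient (h : IsConnectedInDim F e)
    (he : e < ringKrullDim (A ⧸ F)) {P : Ideal A} (hP : P ∈ F.minimalPrimes) :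
    e < ringKrullDim (A ⧸ P) := by
  have hJ : ¬ sInf (F.minimalPrimes \ {P}) ≤ P := fun hle =>
    (mem_of_sInf_le_of_mem_minimalPrimes
      (Ideal.finite_minimalPrimes_of_isNoetherianRing A F).sdiff Set.sdiff_subset hP hle).2 rfl
  have hmul := sInf_mul_sInf_minimalPrimes_diff_le_radical F {P}
  rw [sInf_singleton] at hmul
  by_contra! hdim
  have hlt : ringKrullDim (A ⧸ (P ⊔ sInf (F.minimalPrimes \ {P}))) < e := by
    have hle := (ringKrullDim_quotient_sup_add_one_le hP.1.1 hJ).trans hdim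
    exact ENat.WithBot.add_one_le_natCast_iff.1 hle
  rcases h _ _ hmul hlt with hPF | hJF
  · exact (he.trans_le (ringKrullDim_quotient_le_of_le_radical hPF)).not_ge hdim
  · exact hJ (hJF.trans (hP.1.1.radical_le_iff.2 hP.1.2))

/-- If `I` and `J` decompose each `V(P) ∩ V(f)`, sort the components `V(P)` of `V(G)` by which of
the two contains `V(P) ∩ V(f)`; the two unions of components meet in a set whose dimension exceeds
that of `V(I) ∩ V(J)` by at most `n`. -/
theorem IsConnectedInDim.sup_span_range {n : ℕ} (hG : IsConnectedInDim G (e + n))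
    {f : Fin n → A} (hf : ∀ i, f i ∈ Ring.jacobson A)
    (hmin : ∀ P ∈ G.minimalPrimes, IsConnectedInDim (P ⊔ Ideal.span (Set.range f)) e) :
    IsConnectedInDim (G ⊔ Ideal.span (Set.range f)) e := by
  intro I J hIJ hdim
  set E := Ideal.span (Set.range f)
  have hfin := Ideal.finite_minimalPrimes_of_isNoetherianRing A G
  let S : Set (Ideal A) := {P ∈ G.minimalPrimes | I ≤ (P ⊔ E).radical}
  have hJ (P) (hP : P ∈ G.minimalPrimes \ S) : J ≤ (P ⊔ E).radical := by
    have hIJP := hIJ.trans (Ideal.radical_mono (sup_le_sup_right hP.1.1.2 E))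
    exact (hmin P hP.1 I J hIJP hdim).resolve_left fun hI => hP.2 ⟨hP.1, hI⟩
  have hIS : I ≤ (sInf S ⊔ E).radical :=
    le_radical_sInf_sup (hfin.subset fun P hP => hP.1) fun P hP => hP.2
  have hJS : J ≤ (sInf (G.minimalPrimes \ S) ⊔ E).radical := le_radical_sInf_sup hfin.sdiff hJ
  have hdimS : ringKrullDim (A ⧸ (sInf S ⊔ sInf (G.minimalPrimes \ S))) < (e + n : ℕ) := by
    calc ringKrullDim (A ⧸ (sInf S ⊔ sInf (G.minimalPrimes \ S)))
        ≤ ringKrullDim (A ⧸ (sInf S ⊔ sInf (G.minimalPrimes \ S) ⊔ E)) + n :=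
          ringKrullDim_quotient_le_ringKrullDim_quotient_sup_span_range_add _ hf
      _ ≤ ringKrullDim (A ⧸ (I ⊔ J)) + n := by
          gcongr
          refine ringKrullDim_quotient_le_of_le_radical (sup_le ?_ ?_)
          · exact hIS.trans (Ideal.radical_mono (sup_le_sup_right le_sup_left E))
          · exact hJS.trans (Ideal.radical_mono (sup_le_sup_right le_sup_right E))
      _ < (e + n : ℕ) := by
          rw [Nat.cast_add]
          exact lt_iff_lt_of_le_iff_le ENat.WithBot.add_le_add_natCast_right_iff |>.2 hdim
  rcases hG _ _ (sInf_mul_sInf_minimalPrimes_diff_le_radical G S) hdimS with hSG | hSG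
  · exact Or.inl (hIS.trans (radical_sup_le_radical_sup hSG))
  · exact Or.inr (hJS.trans (radical_sup_le_radical_sup hSG))

end IsConnectedInDim

/-! ### The principal case -/

section Principal

variable {A : Type*} [CommRing A] [IsDomain A] [IsNoetherianRing A] [IsLocalRing A]

theorem surjective_lsmul_localCohomology_of_ne_zero {d : ℕ} (hd : ringKrullDim A = d) {a : A}
    (ha : a ≠ 0) :
    Function.Surjective (LinearMap.lsmul A (LocalCohomology (maximalIdeal A) d A) a) := by
  rw [← Module.supportDim_self_eq_ringKrullDim] at hd
  refine surjective_lsmul_localCohomology hd.le ?_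
  have hreg : IsSMulRegular A a := IsSMulRegular.of_ne_zero ha
  rw [← ENat.WithBot.add_one_le_natCast_iff, ← hd]
  exact Module.supportDim_quotSMulTop_succ_le_of_notMem_minimalPrimes
    fun _ => hreg.notMem_of_mem_minimalPrimes

variable [IsPrecomplete (maximalIdeal A) A] {f : A} {e : ℕ}

theorem isConnectedInDim_span_singleton_of_ringKrullDim_eq (hf : f ≠ 0)
    (hfm : f ∈ maximalIdeal A) (hd : ringKrullDim A = (e + 2 : ℕ)) :
    IsConnectedInDim (Ideal.span {f}) e := by
  intro I J hIJ hdim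
  let E := localCohomologyAwayQuotientEquiv hfm (mem_nonZeroDivisors_of_ne_zero hf) (e + 1)
  have hdA : Module.supportDim A A = (e + 2 : ℕ) := by
    rw [Module.supportDim_self_eq_ringKrullDim, hd]
  have htors : IsPowerTorsion (I * J) (AwayQuotient f) :=
    (isPowerTorsion_awayQuotient f).of_le_radical hIJ (Ideal.fg_of_isNoetherianRing _)
  have hdiv a (ha : a ≠ 0) := surjective_lsmul_of_surjective E.symm.surjective
    (surjective_lsmul_localCohomology_of_ne_zero hd ha)
  have := finite_ker_lsmul_awayQuotient f
  have := isArtinian_localCohomology (A := A) (e + 2) A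
  have := finite_localCohomology_linearMap
    (LocalCohomology (maximalIdeal A) (e + 2) A) (e + 2) A hdA.le
  have : Module.Finite A (LocalCohomology (maximalIdeal A) (e + 1) (AwayQuotient f) →ₗ[A]
      LocalCohomology (maximalIdeal A) (e + 1) (AwayQuotient f)) :=
    Module.Finite.equiv (LinearEquiv.arrowCongr E E).symm
  have := nontrivial_localCohomology_of_supportDim_eq A hdA
  have : Nontrivial (LocalCohomology (maximalIdeal A) (e + 1) (AwayQuotient f)) :=
    E.toEquiv.nontrivial
  have hf_surj := surjective_lsmul_awayQuotient f
  rcases htors.nontrivial_localCohomology_powerTorsion_or hdim with hI | hJ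
  · rw [sup_comm] at hdim
    exact Or.inl ((mul_comm I J ▸ htors).le_radical_of_nontrivial_localCohomology_powerTorsion
      hdim hf hf_surj hdiv)
  · exact Or.inr (htors.le_radical_of_nontrivial_localCohomology_powerTorsion
      hdim hf hf_surj hdiv)

theorem isConnectedInDim_span_singleton (hf : f ≠ 0) (hfm : f ∈ maximalIdeal A)
    (hd : (e + 2 : ℕ) ≤ ringKrullDim A) : IsConnectedInDim (Ideal.span {f}) e := by
  obtain ⟨d, hd'⟩ : ∃ d : ℕ, ringKrullDim A = d :=
    ⟨_, Order.krullDim_eq_length_of_finiteDimensionalOrder⟩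
  rw [hd', Nat.cast_le] at hd
  obtain ⟨k, rfl⟩ := Nat.exists_eq_add_of_le' hd
  exact (isConnectedInDim_span_singleton_of_ringKrullDim_eq hf hfm (e := k + e) hd').mono
    (e.le_add_left k)

end Principal


/-! ### Several equations -/

section SeveralEquations

theorem isPrecomplete_quotient {A : Type*} [CommRing A] [IsLocalRing A]
    [IsPrecomplete (maximalIdeal A) A] (P : Ideal A) [IsLocalRing (A ⧸ P)] :
    IsPrecomplete (maximalIdeal (A ⧸ P)) (A ⧸ P) := by
  rw [← map_maximalIdeal_of_surjective (Ideal.Quotient.mk P) Ideal.Quotient.mk_surjective]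
  refine (IsPrecomplete.map_algebraMap_iff (R := A) (S := A ⧸ P)).2
    (AdicCompletion.of_surjective_iff.1 fun y => ?_)
  obtain ⟨z, rfl⟩ := AdicCompletion.map_surjective (maximalIdeal A) P.mkQ_surjective y
  obtain ⟨x, rfl⟩ := AdicCompletion.of_surjective (maximalIdeal A) A z
  exact ⟨P.mkQ x, rfl⟩

theorem isConnectedInDim_span_range {A : Type*} [CommRing A] [IsDomain A] [IsNoetherianRing A]
    [IsLocalRing A] [IsPrecomplete (maximalIdeal A) A] {r e : ℕ} {f : Fin r → A}
    (hf : ∀ i, f i ∈ maximalIdeal A) (hd : (e + r + 1 : ℕ) ≤ ringKrullDim A) :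
    IsConnectedInDim (Ideal.span (Set.range f)) e := by
  induction r generalizing A with
  | zero =>
    rw [Set.range_eq_empty, Ideal.span_empty]
    exact isConnectedInDim_of_isPrime Ideal.isPrime_bot e
  | succ r ih =>
    obtain ⟨f₀, g, rfl⟩ : ∃ f₀ g, f = Fin.cons f₀ g :=
      ⟨f 0, Fin.tail f, (Fin.cons_self_tail f).symm⟩
    have hf₀ : f₀ ∈ maximalIdeal A := hf 0
    have hg (i : Fin r) : g i ∈ maximalIdeal A := hf i.succ
    rw [Fin.range_cons, Ideal.span_insert]
    rcases eq_or_ne f₀ 0 with rfl | hne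
    · rw [Ideal.span_singleton_zero, bot_sup_eq]
      exact ih hg (le_trans (by norm_cast; lia) hd)
    have hprincipal : IsConnectedInDim (Ideal.span {f₀}) (e + r) :=
      isConnectedInDim_span_singleton hne hf₀ hd
    have hdim : (e + r : ℕ) < ringKrullDim (A ⧸ Ideal.span {f₀}) := by
      rw [← Set.range_const (ι := Fin 1) (c := f₀)]
      exact natCast_lt_ringKrullDim_quotient_span_range
        (fun _ => (ringJacobson_eq_maximalIdeal A).ge hf₀) hd
    refine hprincipal.sup_span_range (fun i => (ringJacobson_eq_maximalIdeal A).ge (hg i))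
      fun P hP => IsConnectedInDim.of_map_quotientMk ?_
    have := hP.1.1
    have : IsLocalRing (A ⧸ P) :=
      .of_surjective' (Ideal.Quotient.mk P) Ideal.Quotient.mk_surjective
    have := isPrecomplete_quotient P
    rw [Ideal.map_span, ← Set.range_comp]
    refine ih (fun i => ?_) ?_
    · rw [← map_maximalIdeal_of_surjective (Ideal.Quotient.mk P) Ideal.Quotient.mk_surjective]
      exact Ideal.mem_map_of_mem _ (hg i)
    · rw [Nat.cast_add_one, ENat.WithBot.add_one_le_iff]
      exact hprincipal.lt_ringKrullDim_quotient hdim hP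

end SeveralEquations

/-! ### Connectedness of the prime spectrum -/

section PrimeSpectrum

variable {R : Type*} [CommRing R]

open PrimeSpectrum in
theorem topologicalKrullDim_zeroLocus (I : Ideal R) :
    topologicalKrullDim (zeroLocus (I : Set R)) = ringKrullDim (R ⧸ I) := by
  have hemb := isClosedEmbedding_comap_of_surjective _ (Ideal.Quotient.mk I)
    Ideal.Quotient.mk_surjective
  have hrange : Set.range (comap (Ideal.Quotient.mk I)) = zeroLocus (I : Set R) := by
    rw [range_comap_of_surjective _ _ Ideal.Quotient.mk_surjective, Ideal.mk_ker]
  rw [← hrange, ← hemb.isEmbedding.toHomeomorph.isHomeomorph.topologicalKrullDim_eq,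
    topologicalKrullDim_eq_ringKrullDim]

variable {e : ℕ}

theorem IsConnectedInDim.lt_topologicalKrullDim_of_mem_irreducibleComponents [IsNoetherianRing R]
    (h : IsConnectedInDim (⊥ : Ideal R) e) (he : e < ringKrullDim R)
    {C : Set (PrimeSpectrum R)} (hC : C ∈ irreducibleComponents (PrimeSpectrum R)) :
    e < topologicalKrullDim C := by
  rw [← PrimeSpectrum.zeroLocus_minimalPrimes] at hC
  obtain ⟨P, hP, rfl⟩ := hC
  rw [Function.comp_apply, topologicalKrullDim_zeroLocus]
  rw [← RingEquiv.ringKrullDim (RingEquiv.quotientBot R)] at he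
  exact h.lt_ringKrullDim_quotient he hP

theorem IsConnectedInDim.eq_univ_or_eq_univ (h : IsConnectedInDim (⊥ : Ideal R) e)
    {Y Y' : Set (PrimeSpectrum R)} (hY : IsClosed Y) (hY' : IsClosed Y')
    (hunion : Y ∪ Y' = Set.univ) (hinter : topologicalKrullDim ↥(Y ∩ Y') < e) :
    Y = Set.univ ∨ Y' = Set.univ := by
  obtain ⟨I, rfl⟩ := (PrimeSpectrum.isClosed_iff_zeroLocus_ideal Y).1 hY
  obtain ⟨J, rfl⟩ := (PrimeSpectrum.isClosed_iff_zeroLocus_ideal Y').1 hY'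
  rw [← PrimeSpectrum.zeroLocus_mul, PrimeSpectrum.zeroLocus_eq_univ_iff] at hunion
  rw [← PrimeSpectrum.zeroLocus_sup, topologicalKrullDim_zeroLocus] at hinter
  rw [PrimeSpectrum.zeroLocus_eq_univ_iff, PrimeSpectrum.zeroLocus_eq_univ_iff]
  exact h I J hunion hinter

theorem IsConnectedInDim.isConnected_compl (h : IsConnectedInDim (⊥ : Ideal R) e)
    (he : e ≤ ringKrullDim R) {Z : Set (PrimeSpectrum R)} (hZ : IsClosed Z)
    (hdim : topologicalKrullDim Z < e) : IsConnected Zᶜ := by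
  refine ⟨Set.nonempty_compl.2 ?_, isPreconnected_closed_iff.2 ?_⟩
  · rintro rfl
    rw [← PrimeSpectrum.zeroLocus_bot, topologicalKrullDim_zeroLocus,
      RingEquiv.ringKrullDim (RingEquiv.quotientBot R)] at hdim
    exact hdim.not_ge he
  · rintro t t' ht ht' hcover ⟨p, hpZ, hpt⟩ ⟨p', hp'Z, hp't'⟩
    by_contra hempty
    have hsubset : t ∩ t' ⊆ Z := fun q hq => by_contra fun hqZ => hempty ⟨q, hqZ, hq⟩
    have hunion : (t ∪ Z) ∪ (t' ∪ Z) = Set.univ := by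
      rw [← Set.union_union_distrib_right]
      exact Set.eq_univ_of_forall fun q => or_iff_not_imp_right.2 (hcover ·)
    have hinter : topologicalKrullDim ↥((t ∪ Z) ∩ (t' ∪ Z)) < e := by
      rwa [← Set.inter_union_distrib_right, Set.union_eq_right.2 hsubset]
    rcases h.eq_univ_or_eq_univ (ht.union hZ) (ht'.union hZ) hunion hinter with ht | ht'
    · exact hp'Z (hsubset ⟨(Set.eq_univ_iff_forall.1 ht p').resolve_right hp'Z, hp't'⟩)
    · exact hpZ (hsubset ⟨hpt, (Set.eq_univ_iff_forall.1 ht' p).resolve_right hpZ⟩)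

end PrimeSpectrum

end GrothendieckConnectedness

/-- Grothendieck's connectedness theorem for complete Noetherian local domains:
if `A` is a complete Noetherian local domain of Krull dimension `d` and
`f_1, ..., f_r` lie in the maximal ideal with `r ≤ d - 1`, then `Spec (A/(f_1,...,f_r))` is
`(d - r - 1)`-connected: every irreducible component has dimension `> d - r - 1`, and removing
any closed subset of dimension `< d - r - 1` leaves a connected space. -/
theorem statement1 {A : Type*} [CommRing A] [IsDomain A] [IsNoetherianRing A] [IsLocalRing A]
    [IsAdicComplete (IsLocalRing.maximalIdeal A) A]
    (d : ℕ) (hd : ringKrullDim A = ((d : ℕ∞) : WithBot ℕ∞))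
    (r : ℕ) (f : Fin r → A) (hf : ∀ i, f i ∈ IsLocalRing.maximalIdeal A)
    (hr : r + 1 ≤ d) :
    (∀ C ∈ irreducibleComponents (PrimeSpectrum (A ⧸ Ideal.span (Set.range f))),
        (((d - r - 1 : ℕ) : ℕ∞) : WithBot ℕ∞) < topologicalKrullDim C) ∧
    (∀ Z : Set (PrimeSpectrum (A ⧸ Ideal.span (Set.range f))), IsClosed Z →
        topologicalKrullDim Z < (((d - r - 1 : ℕ) : ℕ∞) : WithBot ℕ∞) →
        IsConnected Zᶜ) := by
  have hdim : (d - r - 1 + r + 1 : ℕ) ≤ ringKrullDim A :=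
    (Nat.cast_le.2 (by lia)).trans_eq hd.symm
  have hlt := GrothendieckConnectedness.natCast_lt_ringKrullDim_quotient_span_range
    (fun i => (IsLocalRing.ringJacobson_eq_maximalIdeal A).ge (hf i)) hdim
  have hconn := (GrothendieckConnectedness.isConnectedInDim_span_range hf hdim).bot_quotient
  exact ⟨fun C hC => hconn.lt_topologicalKrullDim_of_mem_irreducibleComponents hlt hC,
    fun Z hZ hZdim => hconn.isConnected_compl hlt.le hZ hZdim⟩
end

section
/- Let A be a complete Noetherian local domain of characteristic 2 with fraction field K and finite residue field 𝔽. Let Γ ⊆ GL_2(A) be a subgroup with finite-order determinants. Assume the 𝔽-representation obtained from Γ by reduction is absolutely irreducible, the reduction map Γ → GL_2(𝔽) has nontrivial kernel, and Γ is not contained (over K̄) in the normalizer of a torus. Then Γ ∩ SL_2(K) is Zariski dense in SL_2 over K. -/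
set_option synthInstance.maxHeartbeats 1000000

/-- A subset `S` of `M₂(K)` (consisting of determinant-1 matrices) is Zariski dense in the
`K`-variety `SL₂`: every polynomial in the matrix entries vanishing on `S` vanishes on all of
`SL₂(K̄)`. -/
def statement15ZariskiDenseInSL2 (K : Type*) [Field K]
    (S : Set (Matrix (Fin 2) (Fin 2) K)) : Prop :=
  ∀ f : MvPolynomial (Fin 2 × Fin 2) K,
    (∀ g ∈ S, MvPolynomial.eval (fun q => g q.1 q.2) f = 0) →
    ∀ h : Matrix (Fin 2) (Fin 2) (AlgebraicClosure K), h.det = 1 →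
      MvPolynomial.aeval (fun q => h q.1 q.2) f = 0

/-!
Let `L` be algebraically closed and let `G ≤ GL₂(L)` contain an element of determinant one whose
eigenvalues are not roots of unity. In an eigenbasis, the Zariski closure of `G ∩ SL₂` contains the
diagonal torus `T`. If `G` neither stabilizes a line nor normalizes `T`, then this closure contains
a matrix `x` without zero entries. The product of the off-diagonal entries, which parametrizes the
double cosets of `T`, is `x₀₁ x₁₀ (x₀₀ t + x₁₁ t⁻¹)²` on `x diag(t, t⁻¹) x` and takes every value as
`t` varies; hence `T x T x T` contains every matrix of `SL₂(L)` without zero entries, and these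
generate `SL₂(L)`.

Absolute irreducibility of the reduction means, by Burnside's theorem, that the reduction of `Γ`
spans the matrix algebra, so `Γ` spans `M₂(A)` and is irreducible over the algebraic closure of the
fraction field. As `A` contains a field, an element of the maximal ideal integral over that field
vanishes; in particular the kernel `N` of the reduction consists of matrices of determinant one.
If all traces in `N` were 2, then for `n ∈ N` the matrix `x = n - 1` would have trace and
determinant zero, and expanding `tr (n · g n g⁻¹) = 2` would give `tr (x g)² = 0` for all `g ∈ Γ`,
whence `x = 0`. So some `n ∈ N` has trace different from 2 but congruent to 2 modulo the maximal
ideal, and its eigenvalues are not roots of unity because `tr n - 2` would then be integral.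
-/

open Matrix

section ZariskiClosure

variable {m n R : Type*} [CommRing R]

/-- The Zariski closure of a set of matrices, viewed as a set of points of affine space whose
coordinates are the matrix entries. -/
def zariskiClosure (S : Set (Matrix m n R)) : Set (Matrix m n R) :=
  {x | ∀ f : MvPolynomial (m × n) R,
    (∀ g ∈ S, MvPolynomial.eval (fun q ↦ g q.1 q.2) f = 0) →
      MvPolynomial.eval (fun q ↦ x q.1 q.2) f = 0}

theorem subset_zariskiClosure (S : Set (Matrix m n R)) : S ⊆ zariskiClosure S :=
  fun x hx _ hf ↦ hf x hx

theorem mul_mul_mem_zariskiClosure [Fintype m] [Fintype n] {S S' : Set (Matrix m n R)}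
    (B : Matrix m m R) (C : Matrix n n R) (hS : ∀ g ∈ S, B * g * C ∈ zariskiClosure S')
    {x : Matrix m n R} (hx : x ∈ zariskiClosure S) : B * x * C ∈ zariskiClosure S' := by
  intro f hf
  let entry (q : m × n) : MvPolynomial (m × n) R :=
    ∑ j, (∑ i, .C (B q.1 i) * .X (i, j)) * .C (C j q.2)
  have eval_entry (y : Matrix m n R) (q : m × n) :
      MvPolynomial.eval (fun q ↦ y q.1 q.2) (entry q) = (B * y * C) q.1 q.2 := by
    simp [entry, Matrix.mul_apply]
  have eval_pullback (y : Matrix m n R) :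
      MvPolynomial.eval (fun q ↦ y q.1 q.2) (MvPolynomial.bind₁ entry f) =
        MvPolynomial.eval (fun q ↦ (B * y * C) q.1 q.2) f := by
    simp only [← eval_entry]
    exact MvPolynomial.eval₂Hom_bind₁ _ _ _ _
  rw [← eval_pullback]
  refine hx _ fun g hg ↦ ?_
  rw [eval_pullback]
  exact hS g hg f hf

/-- The Zariski closure of a monoid of matrices is again a monoid. -/
def zariskiClosureSubmonoid [Fintype n] [DecidableEq n] (M : Submonoid (Matrix n n R)) :
    Submonoid (Matrix n n R) where
  carrier := zariskiClosure (M : Set (Matrix n n R))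
  one_mem' := subset_zariskiClosure _ M.one_mem
  mul_mem' {x y} hx hy := by
    have left_mul (g) (hg : g ∈ M) : g * y ∈ zariskiClosure (M : Set (Matrix n n R)) := by
      have := mul_mul_mem_zariskiClosure (S' := (M : Set (Matrix n n R))) g 1
        (fun h hh ↦ subset_zariskiClosure _ (by simpa using M.mul_mem hg hh)) hy
      rwa [mul_one] at this
    have := mul_mul_mem_zariskiClosure (S' := (M : Set (Matrix n n R))) 1 y
      (fun g hg ↦ by rw [one_mul]; exact left_mul g hg) hx
    rwa [one_mul] at this

open LaurentPolynomial in
theorem eval_eq_zero_of_infinite_eval_eq_zero {L : Type*} [Field L] {F : L[T;T⁻¹]}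
    (hF : {t : Lˣ | eval₂ (RingHom.id L) t F = 0}.Infinite) (t : Lˣ) :
    eval₂ (RingHom.id L) t F = 0 := by
  obtain ⟨N, q, hq⟩ := F.exists_T_pow
  have eval_q (s : Lˣ) : q.eval (s : L) = eval₂ (RingHom.id L) s F * (s : L) ^ N := by
    rw [Polynomial.eval, ← eval₂_toLaurent, hq, map_mul, eval₂_T_n]
  have q_eq_zero : q = 0 := by
    refine q.eq_zero_of_infinite_isRoot ((hF.image Units.val_injective.injOn).mono ?_)
    rintro _ ⟨s, hs, rfl⟩
    exact (eval_q s).trans (by rw [hs, zero_mul])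
  have := eval_q t
  rw [q_eq_zero, Polynomial.eval_zero] at this
  exact (mul_eq_zero.mp this.symm).resolve_right (pow_ne_zero _ t.ne_zero)

open LaurentPolynomial in
theorem map_eval_mem_zariskiClosure_of_infinite {L : Type*} [Field L] {S : Set (Matrix m n L)}
    (M : Matrix m n L[T;T⁻¹])
    (hM : {t : Lˣ | M.map (eval₂ (RingHom.id L) t) ∈ S}.Infinite) (t : Lˣ) :
    M.map (eval₂ (RingHom.id L) t) ∈ zariskiClosure S := by
  intro f hf
  have eval_eq (s : Lˣ) :
      eval₂ (RingHom.id L) s (MvPolynomial.eval₂ C (fun q ↦ M q.1 q.2) f) =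
        MvPolynomial.eval (fun q ↦ M.map (eval₂ (RingHom.id L) s) q.1 q.2) f := by
    rw [MvPolynomial.hom_eval₂, MvPolynomial.eval, MvPolynomial.coe_eval₂Hom]
    congr 1
    ext
    simp
  rw [← eval_eq]
  refine eval_eq_zero_of_infinite_eval_eq_zero (hM.mono fun s hs ↦ ?_) t
  exact (eval_eq s).trans (hf _ hs)

end ZariskiClosure

section SplitTorus

/-- The cocharacter `t ↦ diag(t, t⁻¹)` whose image is the diagonal torus of `SL₂`. -/
def splitTorus {R : Type*} [CommRing R] : Rˣ →* Matrix (Fin 2) (Fin 2) R where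
  toFun t := !![(t : R), 0; 0, ((t⁻¹ : Rˣ) : R)]
  map_one' := by simp [Matrix.one_fin_two]
  map_mul' s t := by simp [mul_comm]

theorem splitTorus_apply {R : Type*} [CommRing R] (t : Rˣ) :
    splitTorus t = !![(t : R), 0; 0, ((t⁻¹ : Rˣ) : R)] :=
  rfl

theorem det_splitTorus {R : Type*} [CommRing R] (t : Rˣ) : (splitTorus t).det = 1 := by
  simp [splitTorus_apply]

variable {L : Type*} [Field L]

theorem splitTorus_mem_zariskiClosure {S : Set (Matrix (Fin 2) (Fin 2) L)} {l : Lˣ}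
    (hl : ¬ IsOfFinOrder l) (hS : ∀ k : ℕ, splitTorus l ^ k ∈ S) (t : Lˣ) :
    splitTorus t ∈ zariskiClosure S := by
  have eval_curve (s : Lˣ) :
      (!![.T 1, 0; 0, .T (-1)] : Matrix (Fin 2) (Fin 2) (LaurentPolynomial L)).map
        (LaurentPolynomial.eval₂ (RingHom.id L) s) = splitTorus s := by
    ext i j
    fin_cases i <;> fin_cases j <;> simp [splitTorus_apply]
  rw [← eval_curve]
  refine map_eval_mem_zariskiClosure_of_infinite _ ?_ t
  refine (Set.infinite_range_of_injective (injective_pow_iff_not_isOfFinOrder.mpr hl)).mono ?_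
  rintro _ ⟨k, rfl⟩
  rw [Set.mem_ofPred_eq, eval_curve, map_pow]
  exact hS k

theorem splitTorus_mul_mul_splitTorus (s t : Lˣ) (x : Matrix (Fin 2) (Fin 2) L) :
    splitTorus s * x * splitTorus t =
      !![s * t * x 0 0, s * (t : L)⁻¹ * x 0 1;
        (s : L)⁻¹ * t * x 1 0, (s : L)⁻¹ * (t : L)⁻¹ * x 1 1] := by
  rw [eta_fin_two (_ * _ * _)]
  simp only [splitTorus_apply, Matrix.mul_apply, Fin.sum_univ_two, of_apply, cons_val_zero,
    cons_val_one, cons_val', cons_val_fin_one]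
  simp [mul_right_comm]

theorem mul_splitTorus_mul_apply (x y : Matrix (Fin 2) (Fin 2) L) (t : Lˣ) (i j : Fin 2) :
    (x * splitTorus t * y) i j = x i 0 * y 0 j * t + x i 1 * y 1 j * (t : L)⁻¹ := by
  have splitTorus_eq_diagonal : splitTorus t = diagonal ![(t : L), (t : L)⁻¹] := by
    ext i j
    fin_cases i <;> fin_cases j <;> simp [splitTorus_apply]
  rw [splitTorus_eq_diagonal, Matrix.mul_apply, Fin.sum_univ_two, mul_diagonal, mul_diagonal]
  simp only [cons_val_zero, cons_val_one]
  ring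

theorem exists_unit_forall_mul_add_mul_inv_ne_zero [Infinite L] {ι : Type*} [Finite ι]
    (a b : ι → L) : ∃ t : Lˣ, ∀ i, (a i ≠ 0 ∨ b i ≠ 0) → a i * t + b i * (t : L)⁻¹ ≠ 0 := by
  classical
  have := Fintype.ofFinite ι
  let p (i : ι) : Polynomial L :=
    if a i ≠ 0 ∨ b i ≠ 0 then .C (a i) * .X ^ 2 + .C (b i) else 1
  have p_ne_zero (i : ι) : p i ≠ 0 := by
    by_cases hi : a i ≠ 0 ∨ b i ≠ 0
    · intro h
      rcases hi with ha | hb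
      · exact ha (by simpa [p, ha] using congrArg (Polynomial.coeff · 2) h)
      · exact hb (by simpa [p, hb] using congrArg (Polynomial.coeff · 0) h)
    · simp [p, hi]
  obtain ⟨t, ht⟩ : ∃ t, (.X * ∏ i, p i : Polynomial L).eval t ≠ 0 := by
    by_contra! h
    exact mul_ne_zero Polynomial.X_ne_zero (Finset.prod_ne_zero_iff.mpr fun i _ ↦ p_ne_zero i)
      (Polynomial.funext (by simpa using h))
  simp only [Polynomial.eval_mul, Polynomial.eval_X, Polynomial.eval_prod, ne_eq, mul_eq_zero,
    Finset.prod_eq_zero_iff, Finset.mem_univ, true_and, not_or, not_exists] at ht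
  obtain ⟨t_ne_zero, eval_ne_zero⟩ := ht
  refine ⟨Units.mk0 t t_ne_zero, fun i hi h ↦ eval_ne_zero i ?_⟩
  simp only [p, if_pos hi, Units.val_mk0, Polynomial.eval_add, Polynomial.eval_mul,
    Polynomial.eval_C, Polynomial.eval_pow, Polynomial.eval_X] at h ⊢
  field_simp at h
  linear_combination h

theorem exists_mul_splitTorus_mul_apply_ne_zero [Infinite L] (x y : Matrix (Fin 2) (Fin 2) L) :
    ∃ t : Lˣ, ∀ i j, (x i 0 * y 0 j ≠ 0 ∨ x i 1 * y 1 j ≠ 0) →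
      (x * splitTorus t * y) i j ≠ 0 := by
  obtain ⟨t, ht⟩ := exists_unit_forall_mul_add_mul_inv_ne_zero
    (fun q : Fin 2 × Fin 2 ↦ x q.1 0 * y 0 q.2) (fun q ↦ x q.1 1 * y 1 q.2)
  refine ⟨t, fun i j hij ↦ ?_⟩
  rw [mul_splitTorus_mul_apply]
  exact ht (i, j) hij

theorem exists_unit_mul_add_mul_inv_eq [IsAlgClosed L] {a d : L} (ha : a ≠ 0) (hd : d ≠ 0)
    (k : L) : ∃ t : Lˣ, a * t + d * (t : L)⁻¹ = k := by
  obtain ⟨t, ht⟩ := IsAlgClosed.exists_root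
    (.C a * .X ^ 2 + .C (-k) * .X + .C d : Polynomial L)
    (by rw [Polynomial.degree_quadratic ha]; norm_num)
  simp only [Polynomial.IsRoot, Polynomial.eval_add, Polynomial.eval_mul, Polynomial.eval_C,
    Polynomial.eval_pow, Polynomial.eval_X] at ht
  have t_ne_zero : t ≠ 0 := by
    rintro rfl
    exact hd (by simpa using ht)
  refine ⟨Units.mk0 t t_ne_zero, ?_⟩
  rw [Units.val_mk0]
  field_simp
  linear_combination ht

end SplitTorus

section TorusSubmonoid

variable {L : Type*} [Field L] [IsAlgClosed L] {V : Submonoid (Matrix (Fin 2) (Fin 2) L)}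
  {x y : Matrix (Fin 2) (Fin 2) L}

-- The two matrices lie in the same double coset of the diagonal torus.
theorem mem_of_offDiag_prod_eq (hV : ∀ t, splitTorus t ∈ V) (hx : x ∈ V) (hxdet : x.det = 1)
    (hydet : y.det = 1) (hy0 : ∀ i j, y i j ≠ 0) (hxy : x 0 1 * x 1 0 = y 0 1 * y 1 0) :
    y ∈ V := by
  rw [det_fin_two] at hxdet hydet
  have diag_eq : x 0 0 * x 1 1 = y 0 0 * y 1 1 := by linear_combination hxdet - hydet + hxy
  have x00 : x 0 0 ≠ 0 := left_ne_zero_of_mul (diag_eq ▸ mul_ne_zero (hy0 0 0) (hy0 1 1))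
  have x01 : x 0 1 ≠ 0 := left_ne_zero_of_mul (hxy ▸ mul_ne_zero (hy0 0 1) (hy0 1 0))
  have y00 := hy0 0 0
  obtain ⟨u, hu⟩ : ∃ u : Lˣ, (u : L) ^ 2 * x 0 0 * x 0 1 = y 0 0 * y 0 1 := by
    obtain ⟨u, hu⟩ := IsAlgClosed.exists_pow_nat_eq (y 0 0 * y 0 1 / (x 0 0 * x 0 1)) two_pos
    field_simp at hu
    have u_ne_zero : u ≠ 0 := by
      rintro rfl
      exact mul_ne_zero y00 (hy0 0 1) (by rw [← hu]; ring)
    exact ⟨Units.mk0 u u_ne_zero, hu⟩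
  obtain ⟨v, hv⟩ : ∃ v : Lˣ, u * v * x 0 0 = y 0 0 :=
    ⟨Units.mk0 (y 0 0 / (u * x 0 0)) (div_ne_zero y00 (mul_ne_zero u.ne_zero x00)),
      by rw [Units.val_mk0]; field_simp⟩
  have y_eq : splitTorus u * x * splitTorus v = y := by
    rw [splitTorus_mul_mul_splitTorus, eta_fin_two y]
    congr! 5
    · field_simp
      exact mul_left_cancel₀ (mul_ne_zero u.ne_zero x00)
        (by linear_combination hu - y 0 1 * hv)
    · field_simp
      exact mul_left_cancel₀ (mul_ne_zero (mul_ne_zero u.ne_zero x00) x01)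
        (by linear_combination x 0 1 * x 1 0 * hv - y 1 0 * hu + y 0 0 * hxy)
    · field_simp
      exact mul_left_cancel₀ x00 (by linear_combination diag_eq - y 1 1 * hv)
  rw [← y_eq]
  exact V.mul_mem (V.mul_mem (hV _) hx) (hV _)

theorem mem_of_forall_apply_ne_zero (hV : ∀ t, splitTorus t ∈ V) (hx : x ∈ V) (hxdet : x.det = 1)
    (hx0 : ∀ i j, x i j ≠ 0) (hydet : y.det = 1) (hy0 : ∀ i j, y i j ≠ 0) : y ∈ V := by
  have x01 := hx0 0 1
  have x10 := hx0 1 0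
  obtain ⟨k, hk⟩ := IsAlgClosed.exists_pow_nat_eq (y 0 1 * y 1 0 / (x 0 1 * x 1 0)) two_pos
  obtain ⟨t, ht⟩ := exists_unit_mul_add_mul_inv_eq (hx0 0 0) (hx0 1 1) k
  refine mem_of_offDiag_prod_eq hV (V.mul_mem (V.mul_mem hx (hV t)) hx) ?_ hydet hy0 ?_
  · simp [hxdet, det_splitTorus]
  calc (x * splitTorus t * x) 0 1 * (x * splitTorus t * x) 1 0
      = x 0 1 * x 1 0 * (x 0 0 * t + x 1 1 * (t : L)⁻¹) ^ 2 := by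
        rw [mul_splitTorus_mul_apply, mul_splitTorus_mul_apply]
        ring
    _ = y 0 1 * y 1 0 := by
        rw [ht, hk]
        field_simp

theorem mem_of_det_eq_one (hV : ∀ t, splitTorus t ∈ V) (hx : x ∈ V) (hxdet : x.det = 1)
    (hx0 : ∀ i j, x i j ≠ 0) (hydet : y.det = 1) : y ∈ V := by
  obtain ⟨t, ht⟩ := exists_mul_splitTorus_mul_apply_ne_zero y x
  have y_row_ne_zero (i : Fin 2) : y i 0 ≠ 0 ∨ y i 1 ≠ 0 := by
    by_contra! h
    rw [det_fin_two] at hydet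
    fin_cases i <;> simp_all
  have hyx : y * splitTorus t * x ∈ V := by
    refine mem_of_forall_apply_ne_zero hV hx hxdet hx0 ?_ fun i j ↦ ht i j ?_
    · simp [hydet, hxdet, det_splitTorus]
    · simpa [hx0] using y_row_ne_zero i
  have hadj : x.adjugate ∈ V := by
    refine mem_of_forall_apply_ne_zero hV hx hxdet hx0 ?_ fun i j ↦ ?_
    · simp [det_adjugate, hxdet]
    · rw [adjugate_fin_two]
      fin_cases i <;> fin_cases j <;> simp [hx0]
  have y_eq : y * splitTorus t * x * x.adjugate * splitTorus t⁻¹ = y := by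
    rw [mul_assoc (y * _), mul_adjugate, hxdet, one_smul, mul_one, mul_assoc, ← map_mul,
      mul_inv_cancel, map_one, mul_one]
  rw [← y_eq]
  exact V.mul_mem (V.mul_mem hyx hadj) (hV _)

end TorusSubmonoid

section DetOneSubmonoid

variable {n R : Type*} [Fintype n] [DecidableEq n] [CommRing R]

/-- The monoid of matrices underlying the elements of determinant one of a subgroup of `GLₙ`. -/
def detOneSubmonoid (G : Subgroup (GL n R)) : Submonoid (Matrix n n R) :=
  (G ⊓ GeneralLinearGroup.det.ker).toSubmonoid.map (Units.coeHom _)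

theorem mem_detOneSubmonoid {G : Subgroup (GL n R)} {x : Matrix n n R} :
    x ∈ detOneSubmonoid G ↔ ∃ g ∈ G, (g : Matrix n n R) = x ∧ x.det = 1 := by
  simp only [detOneSubmonoid, Submonoid.mem_map, Subgroup.mem_toSubmonoid, Subgroup.mem_inf,
    MonoidHom.mem_ker, Units.coeHom_apply, Units.ext_iff, GeneralLinearGroup.val_det_apply,
    Units.val_one]
  constructor
  · rintro ⟨g, ⟨hg, hdet⟩, rfl⟩
    exact ⟨g, hg, rfl, hdet⟩
  · rintro ⟨g, hg, rfl, hdet⟩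
    exact ⟨g, ⟨hg, hdet⟩, rfl⟩

theorem conj_mem_zariskiClosure_detOneSubmonoid {G G' : Subgroup (GL n R)} (P : GL n R)
    (hP : ∀ g ∈ G, P * g * P⁻¹ ∈ G') {x : Matrix n n R}
    (hx : x ∈ zariskiClosure (detOneSubmonoid G : Set (Matrix n n R))) :
    P.val * x * P⁻¹.val ∈
      zariskiClosure (detOneSubmonoid G' : Set (Matrix n n R)) := by
  refine mul_mul_mem_zariskiClosure _ _ (fun y hy ↦ subset_zariskiClosure _ ?_) hx
  obtain ⟨g, hg, rfl, hdet⟩ := mem_detOneSubmonoid.mp hy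
  refine mem_detOneSubmonoid.mpr ⟨_, hP g hg, rfl, ?_⟩
  rw [det_units_conj, hdet]

end DetOneSubmonoid

section FullMatrix

variable {L : Type*} [Field L]

theorem exists_conj_splitTorus_apply_ne_zero [Infinite L] (γ : GL (Fin 2) L) :
    ∃ t : Lˣ, (∀ k, (γ.val * splitTorus t * γ⁻¹.val) k k ≠ 0) ∧
      ∀ i, (∀ j, γ i j ≠ 0) →
        ∀ j, (γ.val * splitTorus t * γ⁻¹.val) i j ≠ 0 := by
  obtain ⟨t, ht⟩ := exists_mul_splitTorus_mul_apply_ne_zero γ.val γ⁻¹.val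
  have diag_ne_zero (k : Fin 2) :
      γ.val k 0 * γ⁻¹.val 0 k ≠ 0 ∨ γ.val k 1 * γ⁻¹.val 1 k ≠ 0 := by
    by_contra! h
    have := congrFun₂ γ.mul_inv k k
    rw [Matrix.mul_apply, Fin.sum_univ_two, h.1, h.2, one_apply_eq, add_zero] at this
    exact zero_ne_one this
  refine ⟨t, fun k ↦ ht k k (diag_ne_zero k), fun i hi j ↦ ht i j ?_⟩
  exact (diag_ne_zero j).imp (fun h ↦ mul_ne_zero (hi 0) (right_ne_zero_of_mul h))
    (fun h ↦ mul_ne_zero (hi 1) (right_ne_zero_of_mul h))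

variable {G : Subgroup (GL (Fin 2) L)}

theorem exists_mem_row_ne_zero (hoff : ∀ i k, i ≠ k → ∃ γ ∈ G, γ i k ≠ 0)
    (hrow : ∃ γ ∈ G, ∃ i, ∀ j, γ i j ≠ 0) (i : Fin 2) : ∃ γ ∈ G, ∀ j, γ i j ≠ 0 := by
  obtain ⟨δ, hδ, k, hδk⟩ := hrow
  rcases eq_or_ne i k with rfl | hik
  · exact ⟨δ, hδ, hδk⟩
  have univ_eq : (Finset.univ : Finset (Fin 2)) = {i, k} := by grind
  obtain ⟨γ, hγ, hγik⟩ := hoff i k hik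
  by_cases hγii : γ i i = 0
  · refine ⟨γ * δ, G.mul_mem hγ hδ, fun j ↦ ?_⟩
    rw [Units.val_mul, Matrix.mul_apply, univ_eq, Finset.sum_pair hik, hγii, zero_mul, zero_add]
    exact mul_ne_zero hγik (hδk j)
  · refine ⟨γ, hγ, fun j ↦ ?_⟩
    have : j = i ∨ j = k := by simpa [univ_eq] using Finset.mem_univ j
    rcases this with rfl | rfl <;> assumption

theorem mem_zariskiClosure_detOneSubmonoid_of_splitTorus_mem [IsAlgClosed L] {l : Lˣ}
    (hl : ¬ IsOfFinOrder l) (hlG : splitTorus l ∈ detOneSubmonoid G)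
    (hoff : ∀ i k, i ≠ k → ∃ γ ∈ G, γ i k ≠ 0) (hrow : ∃ γ ∈ G, ∃ i, ∀ j, γ i j ≠ 0)
    {h : Matrix (Fin 2) (Fin 2) L} (hdet : h.det = 1) :
    h ∈ zariskiClosure (detOneSubmonoid G : Set (Matrix (Fin 2) (Fin 2) L)) := by
  have torus_mem (t : Lˣ) : splitTorus t ∈ zariskiClosureSubmonoid (detOneSubmonoid G) :=
    splitTorus_mem_zariskiClosure hl (fun k ↦ pow_mem hlG k) t
  have exists_row (i : Fin 2) : ∃ x ∈ zariskiClosureSubmonoid (detOneSubmonoid G),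
      x.det = 1 ∧ (∀ k, x k k ≠ 0) ∧ ∀ j, x i j ≠ 0 := by
    obtain ⟨γ, hγ, hγi⟩ := exists_mem_row_ne_zero hoff hrow i
    obtain ⟨t, hdiag, hrow⟩ := exists_conj_splitTorus_apply_ne_zero γ
    refine ⟨_, conj_mem_zariskiClosure_detOneSubmonoid γ
      (fun g hg ↦ G.mul_mem (G.mul_mem hγ hg) (G.inv_mem hγ)) (torus_mem t), ?_, hdiag,
      hrow i hγi⟩
    rw [det_units_conj, det_splitTorus]
  obtain ⟨x, hx, hxdet, hxdiag, hx0⟩ := exists_row 0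
  obtain ⟨y, hy, hydet, -, hy1⟩ := exists_row 1
  obtain ⟨t, ht⟩ := exists_mul_splitTorus_mul_apply_ne_zero x y
  refine mem_of_det_eq_one torus_mem (mul_mem (mul_mem hx (torus_mem t)) hy) ?_ ?_ hdet
  · simp [hxdet, hydet, det_splitTorus]
  · refine fun i j ↦ ht i j (Or.inr (mul_ne_zero ?_ (hy1 j)))
    fin_cases i
    exacts [hx0 1, hxdiag 1]

end FullMatrix

section Conjugation

/-- The subgroup `G` of `GLₙ(L)` stabilizes a line of `Lⁿ`. -/
def HasCommonEigenvector {n L : Type*} [Fintype n] [DecidableEq n] [Field L]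
    (G : Subgroup (GL n L)) : Prop :=
  ∃ v : n → L, v ≠ 0 ∧ ∀ g ∈ G, ∃ c : L, g.val *ᵥ v = c • v

/-- The subgroup `G` of `GL₂(L)` permutes the lines spanned by two linearly independent vectors,
that is, it lies in the normalizer of the split torus having these vectors as eigenvectors. -/
def NormalizesTorus {L : Type*} [Field L] (G : Subgroup (GL (Fin 2) L)) : Prop :=
  ∃ v w : Fin 2 → L, LinearIndependent L ![v, w] ∧ ∀ g ∈ G,
    ((∃ c : L, g.val *ᵥ v = c • v) ∧ ∃ c : L, g.val *ᵥ w = c • w) ∨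
      ((∃ c : L, g.val *ᵥ v = c • w) ∧ ∃ c : L, g.val *ᵥ w = c • v)

theorem exists_mulVec_inv_mulVec_eq_smul {n L : Type*} [Fintype n] [DecidableEq n] [Field L]
    {P g : GL n L} {v w : n → L} (h : ∃ c : L, (MulAut.conj P g).val *ᵥ v = c • w) :
    ∃ c : L, g.val *ᵥ (P⁻¹.val *ᵥ v) = c • (P⁻¹.val *ᵥ w) := by
  obtain ⟨c, hc⟩ := h
  refine ⟨c, ?_⟩
  rw [← mulVec_smul, ← hc, MulAut.conj_apply, mulVec_mulVec, mulVec_mulVec, ← Units.val_mul,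
    ← Units.val_mul, mul_assoc, inv_mul_cancel_left]

theorem HasCommonEigenvector.of_map_conj {n L : Type*} [Fintype n] [DecidableEq n] [Field L]
    {G : Subgroup (GL n L)} {P : GL n L}
    (h : HasCommonEigenvector (G.map (MulAut.conj P).toMonoidHom)) : HasCommonEigenvector G := by
  obtain ⟨v, hv, heig⟩ := h
  refine ⟨P⁻¹.val *ᵥ v, ?_, fun g hg ↦
    exists_mulVec_inv_mulVec_eq_smul (heig _ (Subgroup.mem_map_of_mem _ hg))⟩
  rwa [Ne, (mulVec_injective_of_isUnit P⁻¹.isUnit).eq_iff' (mulVec_zero _)]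

theorem NormalizesTorus.of_map_conj {L : Type*} [Field L] {G : Subgroup (GL (Fin 2) L)}
    {P : GL (Fin 2) L} (h : NormalizesTorus (G.map (MulAut.conj P).toMonoidHom)) :
    NormalizesTorus G := by
  obtain ⟨v, w, hvw, hG⟩ := h
  refine ⟨P⁻¹.val *ᵥ v, P⁻¹.val *ᵥ w, ?_, fun g hg ↦ ?_⟩
  · have comp_eq : ![P⁻¹.val *ᵥ v, P⁻¹.val *ᵥ w] = P⁻¹.val.mulVecLin ∘ ![v, w] := by
      ext i : 1
      fin_cases i <;> rfl
    rw [comp_eq]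
    exact hvw.map' _ (LinearMap.ker_eq_bot.mpr (mulVec_injective_of_isUnit P⁻¹.isUnit))
  · exact (hG _ (Subgroup.mem_map_of_mem _ hg)).imp
      (And.imp exists_mulVec_inv_mulVec_eq_smul exists_mulVec_inv_mulVec_eq_smul)
      (And.imp exists_mulVec_inv_mulVec_eq_smul exists_mulVec_inv_mulVec_eq_smul)

variable {L : Type*} [Field L] {G : Subgroup (GL (Fin 2) L)}

theorem exists_mem_apply_ne_zero_of_not_hasCommonEigenvector (hG : ¬ HasCommonEigenvector G)
    (i k : Fin 2) (hik : i ≠ k) : ∃ γ ∈ G, γ i k ≠ 0 := by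
  by_contra! h
  refine hG ⟨Pi.single k 1, by simp, fun g hg ↦ ⟨g k k, ?_⟩⟩
  ext j
  rw [mulVec_single_one]
  obtain rfl | rfl : j = k ∨ j = i := by grind
  · simp
  · simp [h g hg, hik]

theorem exists_mem_row_ne_zero_of_not_normalizesTorus (hG : ¬ NormalizesTorus G) :
    ∃ γ ∈ G, ∃ i, ∀ j, γ i j ≠ 0 := by
  by_contra! h
  refine hG ⟨Pi.single 0 1, Pi.single 1 1, ?_, fun g hg ↦ ?_⟩
  · convert (Pi.basisFun L (Fin 2)).linearIndependent using 1
    ext i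
    fin_cases i <;> simp
  have det_ne_zero : g 0 0 * g 1 1 - g 0 1 * g 1 0 ≠ 0 := by
    rw [← det_fin_two]
    exact g.det_ne_zero
  have exists_smul_single {j i k : Fin 2} (hik : i ≠ k) (hk : g k j = 0) :
      ∃ c : L, g.val *ᵥ Pi.single j 1 = c • Pi.single i 1 := by
    refine ⟨g i j, funext fun m ↦ ?_⟩
    rw [mulVec_single_one]
    obtain rfl | rfl : m = i ∨ m = k := by grind
    · simp
    · simp [hk, hik]
  obtain ⟨j₀, h₀⟩ := h g hg 0
  obtain ⟨j₁, h₁⟩ := h g hg 1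
  fin_cases j₀ <;> fin_cases j₁
  · simp_all
  · exact Or.inr ⟨exists_smul_single one_ne_zero h₀, exists_smul_single zero_ne_one h₁⟩
  · exact Or.inl ⟨exists_smul_single zero_ne_one h₁, exists_smul_single one_ne_zero h₀⟩
  · simp_all

end Conjugation

section Diagonalization

variable {L : Type*} [Field L]

theorem exists_hasEigenvector_of_trace_eq {g : Matrix (Fin 2) (Fin 2) L} (hdet : g.det = 1)
    {l : Lˣ} (htr : g.trace = l + (l⁻¹ : Lˣ)) : ∃ v, Module.End.HasEigenvector g.toLin' l v := by
  refine Module.End.HasEigenvalue.exists_hasEigenvector ?_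
  rw [Module.End.hasEigenvalue_iff_isRoot_charpoly, charpoly_toLin', charpoly_fin_two, htr, hdet]
  simp only [Polynomial.IsRoot.def, Polynomial.eval_add, Polynomial.eval_sub, Polynomial.eval_mul,
    Polynomial.eval_pow, Polynomial.eval_X, Polynomial.eval_C]
  linear_combination -l.inv_mul

theorem exists_conj_eq_splitTorus {g : GL (Fin 2) L} (hdet : g.val.det = 1) {l : Lˣ}
    (hl : l ≠ l⁻¹) (htr : g.val.trace = l + (l⁻¹ : Lˣ)) :
    ∃ P : GL (Fin 2) L, (P * g * P⁻¹).val = splitTorus l := by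
  obtain ⟨v, hv⟩ := exists_hasEigenvector_of_trace_eq hdet htr
  obtain ⟨w, hw⟩ := exists_hasEigenvector_of_trace_eq (l := l⁻¹) hdet
    (by rw [htr, inv_inv, add_comm])
  have linearIndependent : LinearIndependent L ![v, w] := by
    refine Module.End.eigenvectors_linearIndependent' (toLin' g.val)
      ![(l : L), (l⁻¹ : Lˣ)] ?_ _ ?_
    · simpa [Function.Injective, Fin.forall_fin_two, eq_comm, Units.ext_iff] using hl
    · exact Fin.forall_fin_two.mpr ⟨hv, hw⟩
  obtain ⟨Q, hQ⟩ : IsUnit (of ![v, w])ᵀ :=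
    linearIndependent_cols_iff_isUnit.mp linearIndependent
  have mul_eq : g * Q = Q * splitTorus l := by
    have gv (i : Fin 2) := congrFun hv.apply_eq_smul i
    have gw (i : Fin 2) := congrFun hw.apply_eq_smul i
    rw [hQ]
    ext i j
    fin_cases j
    · simpa [Matrix.mul_apply, mulVec, dotProduct, splitTorus_apply, mul_comm] using gv i
    · simpa [Matrix.mul_apply, mulVec, dotProduct, splitTorus_apply, mul_comm] using gw i
  refine ⟨Q⁻¹, ?_⟩
  rw [inv_inv, mul_assoc, Units.val_mul, Units.val_mul, mul_eq, Units.inv_mul_cancel_left]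

variable {G : Subgroup (GL (Fin 2) L)}

theorem mem_zariskiClosure_detOneSubmonoid_of_trace_eq [IsAlgClosed L]
    (hirr : ¬ HasCommonEigenvector G) (hnd : ¬ NormalizesTorus G) {g : GL (Fin 2) L} (hg : g ∈ G)
    (hgdet : g.val.det = 1) {l : Lˣ} (hl : ¬ IsOfFinOrder l)
    (htr : g.val.trace = l + (l⁻¹ : Lˣ)) {h : Matrix (Fin 2) (Fin 2) L} (hdet : h.det = 1) :
    h ∈ zariskiClosure (detOneSubmonoid G : Set (Matrix (Fin 2) (Fin 2) L)) := by
  have l_ne_inv : l ≠ l⁻¹ := fun h ↦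
    hl (isOfFinOrder_iff_pow_eq_one.mpr ⟨2, two_pos, by rw [sq, eq_inv_iff_mul_eq_one.mp h]⟩)
  obtain ⟨P, hP⟩ := exists_conj_eq_splitTorus hgdet l_ne_inv htr
  have conj_mem := mem_zariskiClosure_detOneSubmonoid_of_splitTorus_mem
    (G := G.map (MulAut.conj P).toMonoidHom) (h := P.val * h * P⁻¹.val) hl
    (mem_detOneSubmonoid.mpr ⟨_, Subgroup.mem_map_of_mem _ hg, hP, det_splitTorus l⟩)
    (exists_mem_apply_ne_zero_of_not_hasCommonEigenvector
      (mt HasCommonEigenvector.of_map_conj hirr))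
    (exists_mem_row_ne_zero_of_not_normalizesTorus (mt NormalizesTorus.of_map_conj hnd))
    (by rw [det_units_conj, hdet])
  have h_eq : P⁻¹.val * (P.val * h * P⁻¹.val) * P⁻¹⁻¹.val = h := by
    simp [mul_assoc]
  rw [← h_eq]
  refine conj_mem_zariskiClosure_detOneSubmonoid P⁻¹ ?_ conj_mem
  rintro _ ⟨γ, hγ, rfl⟩
  simpa [mul_assoc] using hγ

end Diagonalization

section Burnside

variable {k V : Type*} [Field k] [AddCommGroup V] [Module k V]

theorem isSimpleModule_of_finrank_eq_two (hV : Module.finrank k V = 2)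
    {B : Subalgebra k (Module.End k V)} (hB : ∀ v ≠ 0, ∃ b ∈ B, b v ∉ Submodule.span k {v}) :
    IsSimpleModule B V := by
  have : FiniteDimensional k V := .of_finrank_pos (by lia)
  have : Nontrivial V := Module.nontrivial_of_finrank_pos (R := k) (by lia)
  rw [isSimpleModule_iff]
  refine { eq_bot_or_eq_top := fun W ↦ or_iff_not_imp_left.mpr fun hW ↦ ?_ }
  obtain ⟨v, hvW, hv⟩ := W.exists_mem_ne_zero_of_ne_bot hW
  obtain ⟨b, hb, hbv⟩ := hB v hv
  have linearIndependent : LinearIndependent k ![v, b v] :=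
    (LinearIndependent.pair_iff' hv).mpr fun c hc ↦
      hbv (Submodule.mem_span_singleton.mpr ⟨c, hc⟩)
  have range_subset : Set.range ![v, b v] ⊆ W.restrictScalars k := by
    rw [Matrix.range_cons_cons_empty]
    exact Set.pair_subset hvW (W.smul_mem ⟨b, hb⟩ hvW)
  have restrictScalars_eq_top : W.restrictScalars k = ⊤ := by
    rw [eq_top_iff, ← linearIndependent.span_eq_top_of_card_eq_finrank' (by simp [hV])]
    exact Submodule.span_le.mpr range_subset
  exact (Submodule.restrictScalars_eq_top_iff _ _ _).mp restrictScalars_eq_top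

variable [IsAlgClosed k] [FiniteDimensional k V]

-- By Schur's lemma the commutant consists of the scalars, so this is the Jacobson density theorem.
theorem exists_forall_apply_eq_smul_of_isSimpleModule (B : Type*) [Ring B] [Algebra k B]
    [Module B V] [IsScalarTower k B V] [IsSimpleModule B V] (f : V →ₗ[k] V) :
    ∃ b : B, ∀ v, f v = b • v := by
  have commutant_eq_scalars (d : Module.End B V) : ∃ c : k, ∀ v, d v = c • v := by
    obtain ⟨c, rfl⟩ := (IsSimpleModule.algebraMap_end_bijective_of_isAlgClosed k).2 d
    exact ⟨c, fun v ↦ rfl⟩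
  let f' : Module.End (Module.End B V) V :=
    { toFun := f
      map_add' := map_add f
      map_smul' := fun d v ↦ by
        obtain ⟨c, hc⟩ := commutant_eq_scalars d
        simp only [Module.End.smul_def, hc, map_smul, RingHom.id_apply] }
  obtain ⟨s, hs⟩ := Module.Finite.fg_top (R := k) (M := V)
  obtain ⟨b, hb⟩ := jacobson_density f' s
  refine ⟨b, fun v ↦ ?_⟩
  have := LinearMap.ext_on (f := f) (g := Algebra.lsmul k k V b) hs hb
  exact LinearMap.congr_fun this v

theorem subalgebra_eq_top_of_isSimpleModule (B : Subalgebra k (Module.End k V))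
    [IsSimpleModule B V] : B = ⊤ := by
  refine eq_top_iff.mpr fun f _ ↦ ?_
  obtain ⟨b, hb⟩ := exists_forall_apply_eq_smul_of_isSimpleModule B f
  obtain rfl : f = b := LinearMap.ext hb
  exact b.2

theorem span_eq_top_of_not_hasCommonEigenvector {G : Subgroup (GL (Fin 2) k)}
    (hG : ¬ HasCommonEigenvector G) :
    Submodule.span k (Units.val '' (G : Set (GL (Fin 2) k))) = ⊤ := by
  let M : Submonoid (Matrix (Fin 2) (Fin 2) k) := G.toSubmonoid.map (Units.coeHom _)
  let e : Matrix (Fin 2) (Fin 2) k →ₐ[k] Module.End k (Fin 2 → k) := toLinAlgEquiv'.toAlgHom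
  let B := (Algebra.adjoin k (M : Set (Matrix (Fin 2) (Fin 2) k))).map e
  have isSimpleModule : IsSimpleModule B (Fin 2 → k) := by
    refine isSimpleModule_of_finrank_eq_two (by simp) fun v hv ↦ ?_
    by_contra! h
    refine hG ⟨v, hv, fun g hg ↦ ?_⟩
    have := h _ ⟨g, Algebra.subset_adjoin ⟨g, hg, rfl⟩, rfl⟩
    obtain ⟨c, hc⟩ := Submodule.mem_span_singleton.mp this
    exact ⟨c, hc.symm⟩
  have adjoin_eq_top : Algebra.adjoin k (M : Set (Matrix (Fin 2) (Fin 2) k)) = ⊤ := by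
    refine eq_top_iff.mpr fun x _ ↦ ?_
    have he : e x ∈ B := subalgebra_eq_top_of_isSimpleModule B ▸ Algebra.mem_top
    obtain ⟨y, hy, hyx⟩ := he
    exact toLinAlgEquiv'.injective hyx ▸ hy
  have := congrArg Subalgebra.toSubmodule adjoin_eq_top
  rwa [Algebra.adjoin_eq_span, Submonoid.closure_eq, Algebra.top_toSubmodule] at this

end Burnside

section Span

theorem span_eq_top_of_span_map_eq_top {A k m n : Type*} [CommRing A] [Field k] [Algebra A k]
    [IsLocalHom (algebraMap A k)] [Finite m] [Finite n] {S : Set (Matrix m n A)}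
    (hS : Submodule.span k ((fun M ↦ M.map (algebraMap A k)) '' S) = ⊤) :
    Submodule.span A S = ⊤ := by
  classical
  have := Fintype.ofFinite m
  have := Fintype.ofFinite n
  obtain ⟨T, hTS, hTspan, hT⟩ := exists_linearIndependent k ((·.map (algebraMap A k)) '' S)
  let b : Module.Basis T k (Matrix m n k) := .mk hT (by rw [Subtype.range_coe, hTspan, hS])
  let b' := b.reindex (b.indexEquiv (Matrix.stdBasis k m n))
  have mem_image (q : m × n) : b' q ∈ (·.map (algebraMap A k)) '' S :=
    hTS (by simp [b', b])
  choose w hwS hw using mem_image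
  have map_det :
      algebraMap A k ((Matrix.stdBasis A m n).det w) = (Matrix.stdBasis k m n).det b' := by
    rw [Module.Basis.det_apply, Module.Basis.det_apply, RingHom.map_det]
    congr 1
    ext q r
    simp [← hw, Module.Basis.toMatrix_apply, Matrix.stdBasis]
  have det_isUnit : IsUnit ((Matrix.stdBasis A m n).det w) := by
    refine isUnit_of_map_unit (algebraMap A k) _ ?_
    rw [map_det]
    exact (Matrix.stdBasis k m n).isUnit_det b'
  rw [eq_top_iff, ← (((Matrix.stdBasis A m n).is_basis_iff_det).mpr det_isUnit).2]
  exact Submodule.span_mono (Set.range_subset_iff.mpr hwS)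

theorem not_hasCommonEigenvector_of_span_eq_top {A L n : Type*} [CommRing A] [Field L] [Algebra A L]
    [Fintype n] [DecidableEq n] [Nontrivial n] {Γ : Subgroup (GL n A)}
    (hΓ : Submodule.span A (Units.val '' (Γ : Set (GL n A))) = ⊤) :
    ¬ HasCommonEigenvector (Γ.map (GeneralLinearGroup.map (algebraMap A L))) := by
  rintro ⟨v, hv, heig⟩
  have mem_span (M : Matrix n n A) :
      M.map (algebraMap A L) *ᵥ v ∈ Submodule.span L {v} := by
    have hM : M ∈ Submodule.span A (Units.val '' (Γ : Set (GL n A))) := hΓ ▸ Submodule.mem_top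
    induction hM using Submodule.span_induction with
    | mem M hM =>
      obtain ⟨g, hg, rfl⟩ := hM
      obtain ⟨c, hc⟩ := heig _ (Subgroup.mem_map_of_mem _ hg)
      exact Submodule.mem_span_singleton.mpr ⟨c, hc.symm⟩
    | zero => simp
    | add M N _ _ hM hN =>
      rw [Matrix.map_add _ (map_add _), add_mulVec]
      exact add_mem hM hN
    | smul a M _ hM =>
      rw [Matrix.map_smul' _ _ _ (map_mul _), smul_mulVec]
      exact Submodule.smul_mem _ _ hM
  obtain ⟨i, hi⟩ := Function.ne_iff.mp hv
  obtain ⟨j, hji⟩ := exists_ne i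
  obtain ⟨c, hc⟩ := Submodule.mem_span_singleton.mp (mem_span (Matrix.single j i 1))
  rw [map_single _ _ _ (algebraMap A L), map_one, single_mulVec_eq, one_mul] at hc
  have c_eq_zero : c = 0 :=
    (by simpa [hji.symm] using congrFun hc i : c = 0 ∨ v i = 0).resolve_right hi
  exact hi (by simpa [c_eq_zero, eq_comm] using congrFun hc j)

end Span

section FiniteOrder

theorem eq_zero_of_isIntegral_of_mem_maximalIdeal (k : Type*) {A : Type*} [Field k] [CommRing A]
    [IsDomain A] [IsLocalRing A] [Algebra k A] {t : A} (ht : IsIntegral k t)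
    (htm : t ∈ IsLocalRing.maximalIdeal A) : t = 0 := by
  by_contra h
  exact htm (ht.isUnit h)

theorem isIntegral_of_pow_eq_one {R S : Type*} [CommRing R] [Ring S] [Algebra R S] {x : S} {n : ℕ}
    (hn : 0 < n) (hx : x ^ n = 1) : IsIntegral R x :=
  .of_pow hn (hx ▸ isIntegral_one)

theorem eq_one_of_pow_eq_one_of_sub_one_mem_maximalIdeal (k : Type*) {A : Type*} [Field k]
    [CommRing A] [IsDomain A] [IsLocalRing A] [Algebra k A] {d : A} {n : ℕ} (hn : 0 < n)
    (hd : d ^ n = 1) (hdm : d - 1 ∈ IsLocalRing.maximalIdeal A) : d = 1 :=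
  sub_eq_zero.mp (eq_zero_of_isIntegral_of_mem_maximalIdeal k
    ((isIntegral_of_pow_eq_one hn hd).sub isIntegral_one) hdm)

theorem not_isOfFinOrder_of_sub_two_mem_maximalIdeal (k : Type*) {A L : Type*} [Field k]
    [CommRing A] [IsDomain A] [IsLocalRing A] [Algebra k A] [Field L] [Algebra A L]
    [FaithfulSMul A L] {t : A} (ht : t ≠ 2) (htm : t - 2 ∈ IsLocalRing.maximalIdeal A) {l : Lˣ}
    (hl : algebraMap A L t = l + (l⁻¹ : Lˣ)) : ¬ IsOfFinOrder l := by
  intro hfin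
  obtain ⟨n, hn, hln⟩ := isOfFinOrder_iff_pow_eq_one.mp hfin
  let _ : Algebra k L := Algebra.compHom L (algebraMap k A)
  have : IsScalarTower k A L := .of_algebraMap_eq' rfl
  have isIntegral_val (u : Lˣ) (hu : u ^ n = 1) : IsIntegral k (u : L) :=
    isIntegral_of_pow_eq_one hn (by rw [← Units.val_pow_eq_pow_val, hu, Units.val_one])
  have isIntegral_t : IsIntegral k t := by
    rw [← isIntegral_algebraMap_iff (FaithfulSMul.algebraMap_injective A L), hl]
    exact (isIntegral_val l hln).add (isIntegral_val l⁻¹ (by rw [inv_pow, hln, inv_one]))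
  exact ht (sub_eq_zero.mp
    (eq_zero_of_isIntegral_of_mem_maximalIdeal k (isIntegral_t.sub (isIntegral_natCast 2)) htm))

end FiniteOrder

section Trace

variable {A : Type*} [CommRing A]

theorem trace_mul_mul_mul_adjugate {x : Matrix (Fin 2) (Fin 2) A} (htr : x.trace = 0)
    (hdet : x.det = 0) (g : Matrix (Fin 2) (Fin 2) A) :
    (x * g * x * g.adjugate).trace = -(x * g).trace ^ 2 := by
  rw [trace_fin_two] at htr
  rw [det_fin_two, eq_neg_of_add_eq_zero_right htr] at hdet
  simp only [trace_fin_two, Matrix.mul_apply, Fin.sum_univ_two, adjugate_fin_two, of_apply,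
    cons_val_zero, cons_val_one, cons_val', cons_val_fin_one, eq_neg_of_add_eq_zero_right htr]
  linear_combination (2 * (g 0 0 * g 1 1 - g 0 1 * g 1 0) - (g 0 0 + g 1 1) ^ 2) * hdet

theorem det_sub_one_fin_two (n : Matrix (Fin 2) (Fin 2) A) :
    (n - 1).det = n.det - n.trace + 1 := by
  simp only [det_fin_two, trace_fin_two, Matrix.sub_apply, one_apply_eq, one_apply_ne zero_ne_one,
    one_apply_ne one_ne_zero, sub_zero]
  ring

theorem trace_sub_one_mul_eq_zero [IsReduced A] {n g : GL (Fin 2) A} (hdet : n.val.det = 1)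
    (htr : n.val.trace = 2) (hconj : (n * (g * n * g⁻¹)).val.trace = 2) :
    ((n.val - 1) * g.val).trace = 0 := by
  set x : Matrix (Fin 2) (Fin 2) A := n.val - 1 with hx
  have trace_x : x.trace = 0 := by simp [hx, htr]
  have det_x : x.det = 0 := by
    rw [det_sub_one_fin_two, hdet, htr]
    norm_num
  have mul_conj_eq : (n * (g * n * g⁻¹)).val =
      n + g.val * x * g⁻¹.val + x * g * x * g⁻¹.val := by
    simp only [hx, Units.val_mul, mul_sub, sub_mul, mul_one, one_mul, mul_assoc, Units.mul_inv]
    abel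
  have adjugate_eq : g.val.adjugate = g.val.det • g⁻¹.val := by
    rw [← g.inv_mul_cancel_left g.val.adjugate, mul_adjugate, mul_smul_comm, mul_one]
  have trace_inv : (x * g * x * g⁻¹.val).trace = 0 := by
    rwa [mul_conj_eq, trace_add, trace_add, htr, trace_units_conj, trace_x, add_zero,
      add_eq_left] at hconj
  have trace_adjugate := trace_mul_mul_mul_adjugate trace_x det_x g
  rw [adjugate_eq, mul_smul_comm, trace_smul, trace_inv, smul_zero, eq_comm,
    neg_eq_zero] at trace_adjugate
  exact (pow_eq_zero_iff two_ne_zero).mp trace_adjugate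

theorem eq_zero_of_forall_trace_mul_eq_zero {m n : Type*} [Fintype m] [Fintype n]
    {S : Set (Matrix n m A)} (hS : Submodule.span A S = ⊤) {x : Matrix m n A}
    (hx : ∀ y ∈ S, (x * y).trace = 0) : x = 0 := by
  refine ext_iff_trace_mul_right.mpr fun y ↦ ?_
  rw [Matrix.zero_mul, trace_zero]
  have span_le : Submodule.span A S ≤
      LinearMap.ker (traceLinearMap m A A ∘ₗ mulLeftLinearMap m A x) :=
    Submodule.span_le.mpr hx
  exact span_le (hS ▸ Submodule.mem_top)

theorem exists_mem_trace_ne_two [IsReduced A] {Γ N : Subgroup (GL (Fin 2) A)}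
    (hΓ : Submodule.span A (Units.val '' (Γ : Set (GL (Fin 2) A))) = ⊤)
    (hN : ∀ n ∈ N, ∀ g ∈ Γ, g * n * g⁻¹ ∈ N) (hNdet : ∀ n ∈ N, n.val.det = 1) (hN_ne : N ≠ ⊥) :
    ∃ n ∈ N, n.val.trace ≠ 2 := by
  by_contra! htr
  obtain ⟨n, hn, n_ne_one⟩ := N.bot_or_exists_ne_one.resolve_left hN_ne
  have sub_one_eq_zero : n.val - 1 = 0 :=
    eq_zero_of_forall_trace_mul_eq_zero hΓ (Set.forall_mem_image.mpr fun g hg ↦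
      trace_sub_one_mul_eq_zero (hNdet n hn) (htr n hn) (htr _ (N.mul_mem hn (hN n hn g hg))))
  exact n_ne_one (Units.ext (sub_eq_zero.mp sub_one_eq_zero))

end Trace

section Reduction

variable {A : Type*} [CommRing A] [IsLocalRing A]

theorem exists_det_eq_one_trace_ne_two (k : Type*) [Field k] [Algebra k A] [IsDomain A]
    {Γ : Subgroup (GL (Fin 2) A)}
    (hΓ : Submodule.span A (Units.val '' (Γ : Set (GL (Fin 2) A))) = ⊤)
    (hdet : ∀ g ∈ Γ, ∃ n : ℕ, 0 < n ∧ g.val.det ^ n = 1)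
    (hker : ∃ g ∈ Γ, g ≠ 1 ∧ g.val.map (IsLocalRing.residue A) = 1) :
    ∃ g ∈ Γ, g.val.det = 1 ∧ g.val.trace ≠ 2 ∧
      g.val.trace - 2 ∈ IsLocalRing.maximalIdeal A := by
  let N := Γ ⊓ (GeneralLinearGroup.map (n := Fin 2) (IsLocalRing.residue A)).ker
  have map_residue {n : GL (Fin 2) A} (hn : n ∈ N) : n.val.map (IsLocalRing.residue A) = 1 :=
    congrArg Units.val hn.2
  have det_eq_one (n : GL (Fin 2) A) (hn : n ∈ N) : n.val.det = 1 := by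
    obtain ⟨m, hm, hpow⟩ := hdet n hn.1
    refine eq_one_of_pow_eq_one_of_sub_one_mem_maximalIdeal k hm hpow ?_
    rw [← IsLocalRing.residue_eq_zero_iff, map_sub, map_one, RingHom.map_det,
      RingHom.mapMatrix_apply, map_residue hn, det_one, sub_self]
  have N_ne_bot : N ≠ ⊥ := by
    obtain ⟨g, hg, g_ne_one, hres⟩ := hker
    exact fun h ↦ g_ne_one (Subgroup.mem_bot.mp (h ▸ ⟨hg, Units.ext hres⟩))
  obtain ⟨n, hn, htr⟩ := exists_mem_trace_ne_two hΓ
    (fun n hn g hg ↦ Subgroup.mem_inf.mpr ⟨Γ.mul_mem (Γ.mul_mem hg hn.1) (Γ.inv_mem hg),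
      (MonoidHom.normal_ker _).conj_mem n hn.2 g⟩) det_eq_one N_ne_bot
  refine ⟨n, hn.1, det_eq_one n hn, htr, ?_⟩
  have := congrArg Matrix.trace (map_residue hn)
  rw [← IsLocalRing.residue_eq_zero_iff, map_sub, map_ofNat, AddMonoidHom.map_trace, this]
  simp

theorem span_eq_top_of_not_hasCommonEigenvector_residue {Γ : Subgroup (GL (Fin 2) A)}
    (hΓ : ¬ HasCommonEigenvector (Γ.map (GeneralLinearGroup.map
      (algebraMap A (AlgebraicClosure (IsLocalRing.ResidueField A)))))) :
    Submodule.span A (Units.val '' (Γ : Set (GL (Fin 2) A))) = ⊤ := by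
  have : IsLocalHom (algebraMap A (AlgebraicClosure (IsLocalRing.ResidueField A))) := by
    rw [IsScalarTower.algebraMap_eq A (IsLocalRing.ResidueField A)]
    exact RingHom.isLocalHom_comp _ (IsLocalRing.residue A)
  have span_map := span_eq_top_of_not_hasCommonEigenvector hΓ
  refine span_eq_top_of_span_map_eq_top
    (k := AlgebraicClosure (IsLocalRing.ResidueField A)) ?_
  rw [Set.image_image]
  rwa [Subgroup.coe_map, Set.image_image] at span_map

end Reduction

section Density

theorem zariskiDense_of_forall_mem_zariskiClosure {K : Type*} [Field K]
    {S : Set (Matrix (Fin 2) (Fin 2) K)} {S' : Set (Matrix (Fin 2) (Fin 2) (AlgebraicClosure K))}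
    (hS : ∀ x ∈ S', ∃ y ∈ S, y.map (algebraMap K (AlgebraicClosure K)) = x)
    (hS' : ∀ h : Matrix (Fin 2) (Fin 2) (AlgebraicClosure K), h.det = 1 → h ∈ zariskiClosure S') :
    statement15ZariskiDenseInSL2 K S := by
  intro f hf h hdet
  rw [MvPolynomial.aeval_def, ← MvPolynomial.eval_map]
  refine hS' h hdet _ fun x hx ↦ ?_
  obtain ⟨y, hy, rfl⟩ := hS x hx
  have eval_map_eq := MvPolynomial.eval₂_comp (algebraMap K (AlgebraicClosure K))
    (fun q : Fin 2 × Fin 2 ↦ y q.1 q.2) f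
  rw [hf y hy, map_zero] at eval_map_eq
  rw [MvPolynomial.eval_map]
  exact eval_map_eq.symm

theorem exists_map_eq_of_mem_detOneSubmonoid_map {n A K L : Type*} [Fintype n] [DecidableEq n]
    [CommRing A] [CommRing K] [CommRing L] [Algebra A K] [Algebra A L] [Algebra K L]
    [IsScalarTower A K L] [FaithfulSMul K L] {Γ : Subgroup (GL n A)} {x : Matrix n n L}
    (hx : x ∈ detOneSubmonoid (Γ.map (GeneralLinearGroup.map (algebraMap A L)))) :
    ∃ y : Matrix n n K, ((∃ g ∈ Γ, g.val.map (algebraMap A K) = y) ∧ y.det = 1) ∧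
      y.map (algebraMap K L) = x := by
  obtain ⟨_, ⟨g, hg, rfl⟩, rfl, hdet⟩ := mem_detOneSubmonoid.mp hx
  have map_map :
      (g.val.map (algebraMap A K)).map (algebraMap K L) = g.val.map (algebraMap A L) := by
    rw [Matrix.map_map, IsScalarTower.algebraMap_eq A K L, RingHom.coe_comp]
  refine ⟨_, ⟨⟨g, hg, rfl⟩, FaithfulSMul.algebraMap_injective K L ?_⟩, map_map⟩
  rw [RingHom.map_det, RingHom.mapMatrix_apply, map_map, map_one]
  exact hdet

theorem statement15_general (k : Type*) [Field k] {A : Type*} [CommRing A] [IsDomain A]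
    [IsLocalRing A] [Algebra k A] (K : Type*) [Field K] [Algebra A K] [FaithfulSMul A K]
    {Γ : Subgroup (GL (Fin 2) A)}
    (hdet : ∀ g ∈ Γ, ∃ n : ℕ, 0 < n ∧ g.val.det ^ n = 1)
    (hirr : ¬ HasCommonEigenvector (Γ.map (GeneralLinearGroup.map
      (algebraMap A (AlgebraicClosure (IsLocalRing.ResidueField A))))))
    (hker : ∃ g ∈ Γ, g ≠ 1 ∧ g.val.map (IsLocalRing.residue A) = 1)
    (hnd : ¬ NormalizesTorus
      (Γ.map (GeneralLinearGroup.map (algebraMap A (AlgebraicClosure K))))) :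
    statement15ZariskiDenseInSL2 K
      {m | (∃ g ∈ Γ, g.val.map (algebraMap A K) = m) ∧ m.det = 1} := by
  have span_eq_top := span_eq_top_of_not_hasCommonEigenvector_residue hirr
  obtain ⟨g, hg, det_g, trace_ne_two, trace_mem⟩ :=
    exists_det_eq_one_trace_ne_two k span_eq_top hdet hker
  obtain ⟨l, hl⟩ := exists_unit_mul_add_mul_inv_eq one_ne_zero one_ne_zero
    (algebraMap A (AlgebraicClosure K) g.val.trace)
  rw [one_mul, one_mul, ← Units.val_inv_eq_inv_val] at hl
  have : FaithfulSMul A (AlgebraicClosure K) := .trans A K _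
  refine zariskiDense_of_forall_mem_zariskiClosure ?_ fun h ↦
    mem_zariskiClosure_detOneSubmonoid_of_trace_eq
      (not_hasCommonEigenvector_of_span_eq_top span_eq_top) hnd (Subgroup.mem_map_of_mem _ hg) ?_
      (not_isOfFinOrder_of_sub_two_mem_maximalIdeal k trace_ne_two trace_mem hl.symm) ?_
  · exact fun x ↦ exists_map_eq_of_mem_detOneSubmonoid_map
  · exact (RingHom.map_det _ g.val).symm.trans (by rw [det_g, map_one])
  · exact (AddMonoidHom.map_trace (algebraMap A (AlgebraicClosure K)) g.val).symm.trans hl.symm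

end Density

/-- Let `A` be a complete Noetherian local domain of characteristic 2 with fraction field `K`
and finite residue field. Let `Γ ⊆ GL₂(A)` be a subgroup with finite-order determinants whose
reduction is absolutely irreducible, such that the reduction map `Γ → GL₂(𝔽)` has nontrivial
kernel, and which is not contained (over `K̄`) in the normalizer of a torus. Then
`Γ ∩ SL₂(K)` is Zariski dense in `SL₂` over `K`. -/
theorem statement15 {A : Type*} [CommRing A] [IsDomain A] [IsLocalRing A] [IsNoetherianRing A]
    [IsAdicComplete (IsLocalRing.maximalIdeal A) A] [CharP A 2]
    [Finite (IsLocalRing.ResidueField A)]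
    (Γ : Subgroup (Matrix (Fin 2) (Fin 2) A)ˣ)
    -- determinants of elements of `Γ` have finite order
    (hdet : ∀ g ∈ Γ, ∃ k : ℕ, 0 < k ∧ ((g : Matrix (Fin 2) (Fin 2) A).det) ^ k = 1)
    -- the reduction of `Γ` is absolutely irreducible: no common eigenvector over the
    -- algebraic closure of the residue field
    (hirr : ∀ v : Fin 2 → AlgebraicClosure (IsLocalRing.ResidueField A), v ≠ 0 →
      ¬ ∀ g ∈ Γ, ∃ c : AlgebraicClosure (IsLocalRing.ResidueField A),
        (((g : Matrix (Fin 2) (Fin 2) A)).map fun a =>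
            algebraMap (IsLocalRing.ResidueField A)
              (AlgebraicClosure (IsLocalRing.ResidueField A))
              (IsLocalRing.residue A a)).mulVec v = c • v)
    -- the reduction map `Γ → GL₂(𝔽)` has nontrivial kernel
    (hker : ∃ g ∈ Γ, g ≠ 1 ∧
      ((g : Matrix (Fin 2) (Fin 2) A)).map (IsLocalRing.residue A) = 1)
    -- `Γ` is not contained, over `K̄`, in the normalizer of a torus (not dihedral)
    (hnd : ¬ ∃ v w : Fin 2 → AlgebraicClosure (FractionRing A),
      LinearIndependent (AlgebraicClosure (FractionRing A)) ![v, w] ∧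
      ∀ g ∈ Γ,
        ((∃ c : AlgebraicClosure (FractionRing A), (((g : Matrix (Fin 2) (Fin 2) A)).map
              (algebraMap A (AlgebraicClosure (FractionRing A)))).mulVec v = c • v) ∧
         (∃ c : AlgebraicClosure (FractionRing A), (((g : Matrix (Fin 2) (Fin 2) A)).map
              (algebraMap A (AlgebraicClosure (FractionRing A)))).mulVec w = c • w)) ∨
        ((∃ c : AlgebraicClosure (FractionRing A), (((g : Matrix (Fin 2) (Fin 2) A)).map
              (algebraMap A (AlgebraicClosure (FractionRing A)))).mulVec v = c • w) ∧
         (∃ c : AlgebraicClosure (FractionRing A), (((g : Matrix (Fin 2) (Fin 2) A)).map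
              (algebraMap A (AlgebraicClosure (FractionRing A)))).mulVec w = c • v))) :
    statement15ZariskiDenseInSL2 (FractionRing A)
      {m : Matrix (Fin 2) (Fin 2) (FractionRing A) |
        (∃ g ∈ Γ, ((g : Matrix (Fin 2) (Fin 2) A)).map (algebraMap A (FractionRing A)) = m)
          ∧ m.det = 1} := by
  let _ : Algebra (ZMod 2) A := ZMod.algebra A 2
  exact statement15_general (ZMod 2) (FractionRing A) hdet
    (fun ⟨v, hv, h⟩ ↦ hirr v hv fun g hg ↦ h _ (Subgroup.mem_map_of_mem _ hg)) hker
    (fun ⟨v, w, hvw, h⟩ ↦ hnd ⟨v, w, hvw, fun g hg ↦ h _ (Subgroup.mem_map_of_mem _ hg)⟩)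
end
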